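/- (Full Rank Theorem) Let n ≥ 2 be an integer, θ ∈ (0, π/2] and 1 ≤ k < n. Let φ : C_θ → (0,∞) be smooth with τ[φ^{−1/k}] ≥ 0 and ∇̄_μ φ^{−1/k} ≤ cot θ · φ^{−1/k} (equivalently ∇̄_μ log φ ≥ −k cot θ on ∂C_θ). Suppose s is a smooth capillary function on C_θ with τ[s] ≥ 0 satisfying σ_k(τ[s])(ζ) = φ(ζ) for all ζ ∈ C_θ. For u ∈ S^n_θ let λ_1(u) := min{⟨D²G(u)v, v⟩ : v ⊥ u, |v| = 1} be the smallest eigenvalue of τ[s] at u, where G is the 1-homogeneous extension of s. Then either λ_1(u) > 0 for every u ∈ S^n_θ, or λ_1(u) = 0 for every u ∈ S^n_θ. In particular, if s > 0 on C_θ, then τ[s] > 0. -/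

import Mathlib

open MeasureTheory Real Set
open scoped RealInnerProductSpace

noncomputable section

abbrev V (n : ℕ) := EuclideanSpace ℝ (Fin (n + 1))

/-- The vertical unit vector `E_{n+1}`. -/
def Etop (n : ℕ) : V n := EuclideanSpace.single (Fin.last n) 1

/-- The spherical cap `S^n_θ`. -/
def sphCap (n : ℕ) (θ : ℝ) : Set (V n) :=
  {u | ‖u‖ = 1 ∧ Real.cos θ ≤ u (Fin.last n)}

/-- The boundary circle `∂S^n_θ`. -/
def sphCapBdry (n : ℕ) (θ : ℝ) : Set (V n) :=
  {u | ‖u‖ = 1 ∧ u (Fin.last n) = Real.cos θ}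

/-- The capillary cap `C_θ`. -/
def capCap (n : ℕ) (θ : ℝ) : Set (V n) :=
  {ζ | 0 ≤ ζ (Fin.last n) ∧ ‖ζ + Real.cos θ • Etop n‖ = 1}

/-- The open cone over `S^n_θ`. -/
def coneCap (n : ℕ) (θ : ℝ) : Set (V n) :=
  {x | ∃ l : ℝ, 0 < l ∧ ∃ u ∈ sphCap n θ, x = l • u}

/-- `G` is a positively 1-homogeneous extension of `g : C_θ → ℝ` which is `C^m` on an
open neighborhood of the cone over `S^n_θ`. -/
def IsHomExt (n : ℕ) (θ : ℝ) (m : ℕ∞) (g G : V n → ℝ) : Prop :=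
  (∃ U : Set (V n), IsOpen U ∧ coneCap n θ ⊆ U ∧ ContDiffOn ℝ m G U) ∧
  (∀ l : ℝ, 0 < l → ∀ u ∈ sphCap n θ, G (l • u) = l * G u) ∧
  (∀ ζ ∈ capCap n θ, G (ζ + Real.cos θ • Etop n) = g ζ)

/-- The Hessian of `G` at `u` as a quadratic/bilinear form. -/
def hessQ (n : ℕ) (G : V n → ℝ) (u v w : V n) : ℝ :=
  fderiv ℝ (fderiv ℝ G) u v w

/-- The Hessian matrix `D²G(u)` in the standard coordinates. -/
def hessM (n : ℕ) (G : V n → ℝ) (u : V n) : Matrix (Fin (n + 1)) (Fin (n + 1)) ℝ :=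
  fun i j => fderiv ℝ (fderiv ℝ G) u (EuclideanSpace.single i 1) (EuclideanSpace.single j 1)

/-- `σ_j` of the eigenvalues of `D²G(u)` (via characteristic polynomial coefficients). -/
def sigmaElem (n : ℕ) (j : ℕ) (G : V n → ℝ) (u : V n) : ℝ :=
  (-1 : ℝ) ^ j * ((hessM n G u).charpoly.coeff (n + 1 - j))

/-- `τ[g] ≥ 0` : the Hessian of the extension is positive semidefinite on `S^n_θ`. -/
def TauNonneg (n : ℕ) (θ : ℝ) (G : V n → ℝ) : Prop :=
  ∀ u ∈ sphCap n θ, ∀ v : V n, 0 ≤ hessQ n G u v v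

/-- `τ[g] > 0`. -/
def TauPos (n : ℕ) (θ : ℝ) (G : V n → ℝ) : Prop :=
  TauNonneg n θ G ∧
  ∀ u ∈ sphCap n θ, ∀ v : V n, v ≠ 0 → ⟪v, u⟫ = 0 → 0 < hessQ n G u v v

/-- Capillary (Robin) boundary condition: `∂_{n+1}G = 0` on `∂S^n_θ`. -/
def IsCapillaryF (n : ℕ) (θ : ℝ) (G : V n → ℝ) : Prop :=
  ∀ u ∈ sphCapBdry n θ, fderiv ℝ G u (Etop n) = 0

/-- Reflection negating the horizontal coordinates. -/
def horizNeg (n : ℕ) (ζ : V n) : V n := (2 * ζ (Fin.last n)) • Etop n - ζ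

/-- Support function of a set. -/
def suppFn (n : ℕ) (K : Set (V n)) (u : V n) : ℝ := sSup ((fun y => ⟪u, y⟫) '' K)

/-- Relative interior (within the hyperplane `{x_{n+1}=0}`) of the base `K ∩ {x_{n+1}=0}`. -/
def relintBase (n : ℕ) (K : Set (V n)) : Set (V n) :=
  {x | x (Fin.last n) = 0 ∧ ∃ ε > 0, ∀ y : V n, y (Fin.last n) = 0 → ‖y - x‖ < ε → y ∈ K}

/-- A `θ`-capillary convex body. -/
def IsCapBody (n : ℕ) (θ : ℝ) (K : Set (V n)) : Prop :=
  IsCompact K ∧ Convex ℝ K ∧ (interior K).Nonempty ∧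
  (∀ x ∈ K, 0 ≤ x (Fin.last n)) ∧
  (∀ x ∈ K, 0 < x (Fin.last n) → ∀ u : V n, ‖u‖ = 1 → ⟪u, x⟫ = suppFn n K u →
    Real.cos θ ≤ u (Fin.last n)) ∧
  (∀ v : V n, ‖v‖ = 1 → v (Fin.last n) = 0 →
    suppFn n K (Real.sin θ • v + Real.cos θ • Etop n) = Real.sin θ * suppFn n K v) ∧
  (relintBase n K).Nonempty

/-- `ψ` is one of `x²`, `x^p (p<0)`, `-log x`. -/
def PsiOK (ψ : ℝ → ℝ) : Prop :=
  (ψ = fun x : ℝ => x ^ 2) ∨ (∃ p : ℝ, p < 0 ∧ ψ = fun x : ℝ => x ^ p) ∨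
    (ψ = fun x : ℝ => -Real.log x)

/-!
The smallest eigenvalue of `D²G` obeys a strong maximum principle. Where a smooth function touches
it from below, the equation `σ_k(D²G) = Ψ⁻ᵏ`, differentiated twice in the direction `e` of the least
eigenvalue, is compared with the concavity of `σ_k ^ (-1/k)` along quadratic paths. As `Ψ` is
convex, the linearized operator applied to the touching function is bounded by its value and its
gradient, whereas the Gaussian barriers of Hopf violate this bound. So if `D²G` has full rank on a
ball and is degenerate at a point `z` of its boundary, then the third derivative of `G` along an
inner normal at `z` is positive on a null direction.

At an interior point this contradicts the minimality of the value zero, so the full rank locus is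
closed in the open cone. At a boundary point the Neumann condition, differentiated twice along the
circle of latitude, forces the conormal `N - c z` to be a null direction and makes the derivative of
`D²G` along `N` vanish on its orthogonal complement. By Hopf's lemma `σ_k(D²G)` then increases along
`N`, against the sign of `∂_N Ψ`.

If `G > 0`, the largest multiple of the support function `‖x‖ - c ⟪N, x⟫` of the cap which stays
below `G` touches `G` at a point, where `D²G` dominates a positive multiple of the positive
definite Hessian of the support function.
-/

set_option maxSynthPendingDepth 3

section Calculus

open Filter Topology

lemma nonneg_deriv_of_eventually_le {f : ℝ → ℝ} {f' : ℝ} (hf : HasDerivAt f f' 0)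
    (h : ∀ᶠ t in 𝓝[>] 0, f 0 ≤ f t) : 0 ≤ f' := by
  refine ge_of_tendsto hf.tendsto_slope_zero_right ?_
  filter_upwards [h, self_mem_nhdsWithin] with t ht (ht0 : 0 < t)
  rw [zero_add, smul_eq_mul]
  exact mul_nonneg (inv_nonneg.2 ht0.le) (sub_nonneg.2 ht)

lemma second_deriv_nonneg_of_eventually_le {g g' : ℝ → ℝ} {g₂ : ℝ}
    (hg : ∀ᶠ t in 𝓝 0, HasDerivAt g (g' t) t) (hg' : HasDerivAt g' g₂ 0) (h0 : g' 0 = 0)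
    (hmin : ∀ᶠ t in 𝓝[>] 0, g 0 ≤ g t) : 0 ≤ g₂ := by
  by_contra! hneg
  have hderiv : deriv g =ᶠ[𝓝 0] g' := hg.mono fun t ht => ht.deriv
  have hmax : IsLocalMax g 0 := isLocalMax_of_deriv_deriv_neg
    (by rwa [hderiv.deriv_eq, hg'.deriv]) (by rw [hderiv.eq_of_nhds, h0])
    hg.self_of_nhds.continuousAt
  have hconst : ∀ᶠ t in 𝓝[>] 0, g t = g 0 := by
    filter_upwards [hmin, hmax.filter_mono nhdsWithin_le_nhds] with t h1 h2 using le_antisymm h2 h1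
  have hzero : g' =ᶠ[𝓝[>] 0] fun _ => 0 := by
    filter_upwards [eventually_eventually_nhdsWithin.2 hconst, hg.filter_mono nhdsWithin_le_nhds,
      self_mem_nhdsWithin] with t hconst_t ht (ht0 : 0 < t)
    rw [isOpen_Ioi.nhdsWithin_eq ht0] at hconst_t
    exact ht.unique ((hasDerivAt_const t (g 0)).congr_of_eventuallyEq hconst_t)
  exact hneg.ne <| (uniqueDiffWithinAt_Ioi 0).eq_deriv _ hg'.hasDerivWithinAt <|
    (hasDerivWithinAt_const 0 _ 0).congr_of_eventuallyEq hzero h0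

lemma deriv_eq_zero_and_second_deriv_nonneg {g g' : ℝ → ℝ} {g₂ : ℝ}
    (hg : ∀ᶠ t in 𝓝 0, HasDerivAt g (g' t) t) (hg' : HasDerivAt g' g₂ 0)
    (hmin : IsLocalMin g 0) : g' 0 = 0 ∧ 0 ≤ g₂ :=
  have h0 := hmin.hasDerivAt_eq_zero hg.self_of_nhds
  ⟨h0, second_deriv_nonneg_of_eventually_le hg hg' h0 (hmin.filter_mono nhdsWithin_le_nhds)⟩

variable {F G : Type*} [NormedAddCommGroup F] [NormedSpace ℝ F] [NormedAddCommGroup G]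
  [NormedSpace ℝ G]

/-- The second derivative, as a function with values in the continuous bilinear maps. -/
abbrev hessian (f : F → G) : F → F →L[ℝ] F →L[ℝ] G := fderiv ℝ (fderiv ℝ f)

lemma hasDerivAt_comp_second {f : F → G} {c c' : ℝ → F} {c₂ : F}
    (hf : ContDiffAt ℝ 2 f (c 0)) (hc : ∀ᶠ t in 𝓝 0, HasDerivAt c (c' t) t)
    (hc' : HasDerivAt c' c₂ 0) :
    (∀ᶠ t in 𝓝 0, HasDerivAt (fun t => f (c t)) (fderiv ℝ f (c t) (c' t)) t) ∧
      HasDerivAt (fun t => fderiv ℝ f (c t) (c' t))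
        (hessian f (c 0) (c' 0) (c' 0) + fderiv ℝ f (c 0) c₂) 0 := by
  constructor
  · have hnear : ∀ᶠ y in 𝓝 (c 0), ContDiffAt ℝ 2 f y := hf.eventually (by simp)
    filter_upwards [hc.self_of_nhds.continuousAt.eventually hnear, hc] with t ht hct
    exact (ht.differentiableAt (by norm_num)).hasFDerivAt.comp_hasDerivAt t hct
  · have hd : DifferentiableAt ℝ (fderiv ℝ f) (c 0) :=
      (hf.fderiv_right (m := 1) (by norm_num)).differentiableAt (by norm_num)
    exact (hd.hasFDerivAt.comp_hasDerivAt (0 : ℝ) hc.self_of_nhds).clm_apply hc'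

end Calculus

section MatrixLemmas

open Finset Matrix Polynomial

variable {ι : Type*} [Fintype ι] [DecidableEq ι]

lemma exists_orthogonal_diagonalization {A : Matrix ι ι ℝ} (hA : A.IsHermitian) :
    ∃ (U : Matrix ι ι ℝ) (d : ι → ℝ), Uᵀ * U = 1 ∧ A = Uᵀ * diagonal d * U := by
  have hU := Unitary.mem_iff.1 hA.eigenvectorUnitary.2
  have hspec := hA.spectral_theorem
  rw [Unitary.conjStarAlgAut_apply] at hspec
  refine ⟨(hA.eigenvectorUnitary : Matrix ι ι ℝ)ᵀ, hA.eigenvalues, ?_, ?_⟩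
  · simpa [star_eq_conjTranspose] using hU.2
  · simpa [star_eq_conjTranspose, Function.comp_def] using hspec

lemma posSemidef_transpose_mul_mul_iff {T B : Matrix ι ι ℝ} (hT : IsUnit T) :
    (Tᵀ * B * T).PosSemidef ↔ B.PosSemidef := by
  simpa [star_eq_conjTranspose] using hT.posSemidef_star_left_conjugate_iff (x := B)

lemma isUnit_of_transpose_mul_self {U : Matrix ι ι ℝ} (hU : Uᵀ * U = 1) : IsUnit U :=
  IsUnit.of_mul_eq_one_right _ hU

lemma exists_eq_transpose_mul_self_of_posDef {A : Matrix ι ι ℝ} (hA : A.PosDef) :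
    ∃ T : Matrix ι ι ℝ, IsUnit T ∧ A = Tᵀ * T := by
  open scoped MatrixOrder in
  obtain ⟨T, hT, rfl⟩ := CStarAlgebra.isStrictlyPositive_iff_eq_star_mul_self.mp
    hA.isStrictlyPositive
  exact ⟨T, hT, by simp [star_eq_conjTranspose]⟩

lemma exists_simultaneous_diagonalization {A B : Matrix ι ι ℝ} (hA : A.PosDef)
    (hB : B.IsHermitian) :
    ∃ (T : Matrix ι ι ℝ) (β : ι → ℝ), IsUnit T ∧ A = Tᵀ * T ∧ B = Tᵀ * diagonal β * T := by
  obtain ⟨S, hS, rfl⟩ := exists_eq_transpose_mul_self_of_posDef hA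
  have hSS : S⁻¹ * S = 1 := nonsing_inv_mul S ((isUnit_iff_isUnit_det S).1 hS)
  have hSS' : Sᵀ * S⁻¹ᵀ = 1 := by rw [← transpose_mul, hSS, transpose_one]
  obtain ⟨U, β, hU, hβ⟩ := exists_orthogonal_diagonalization
    (A := S⁻¹ᵀ * B * S⁻¹) (by simpa using isHermitian_conjTranspose_mul_mul S⁻¹ hB)
  refine ⟨U * S, β, (isUnit_of_transpose_mul_self hU).mul hS, ?_, ?_⟩
  · rw [transpose_mul, Matrix.mul_assoc, ← Matrix.mul_assoc Uᵀ, hU, Matrix.one_mul]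
  · calc B = (Sᵀ * S⁻¹ᵀ) * B * (S⁻¹ * S) := by rw [hSS, hSS', Matrix.one_mul, Matrix.mul_one]
      _ = Sᵀ * (S⁻¹ᵀ * B * S⁻¹) * S := by simp only [Matrix.mul_assoc]
      _ = (U * S)ᵀ * diagonal β * (U * S) := by
        rw [hβ, transpose_mul]; simp only [Matrix.mul_assoc]

lemma det_le_det_add_of_posSemidef {A S : Matrix ι ι ℝ} (hA : A.PosSemidef)
    (hS : S.PosSemidef) : A.det ≤ (A + S).det := by
  by_cases h : A.det = 0
  · exact h.trans_le (hA.add hS).det_nonneg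
  obtain ⟨T, β, hT, rfl, rfl⟩ :=
    exists_simultaneous_diagonalization (hA.posDef_iff_det_ne_zero.2 h) hS.1
  rw [posSemidef_transpose_mul_mul_iff hT, posSemidef_diagonal_iff] at hS
  calc (Tᵀ * T).det = T.det * T.det * 1 := by rw [det_mul, det_transpose, mul_one]
    _ ≤ T.det * T.det * ∏ i, (1 + β i) := by
      refine mul_le_mul_of_nonneg_left (one_le_prod fun i => ?_) (mul_self_nonneg _)
      simpa using hS i
    _ = (Tᵀ * diagonal (fun i => 1 + β i) * T).det := by
      rw [det_mul, det_mul, det_transpose, det_diagonal]; ring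
    _ = (Tᵀ * T + Tᵀ * diagonal β * T).det := by
      rw [← diagonal_add, diagonal_one, Matrix.mul_add, Matrix.add_mul, Matrix.mul_one]

lemma det_diagonal_add_vecMulVec (d u v : ι → ℝ) :
    (diagonal d + vecMulVec u v).det = ∏ i, d i + ∑ i, u i * v i * ∏ j ∈ univ.erase i, d j := by
  suffices h : (fun d : ι → ℝ => (diagonal d + vecMulVec u v).det) =
      fun d => ∏ i, d i + ∑ i, u i * v i * ∏ j ∈ univ.erase i, d j from congrFun h d
  refine Continuous.ext_on (dense_pi Set.univ fun _ _ => dense_compl_singleton (0 : ℝ))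
    (continuous_id.matrix_diagonal.add continuous_const).matrix_det (by fun_prop) ?_
  intro d hd
  have hd : ∀ i, d i ≠ 0 := fun i => hd i (Set.mem_univ i)
  have hfactor : diagonal d + vecMulVec u v =
      diagonal d * (1 + replicateCol Unit (fun i => u i / d i) * replicateRow Unit v) := by
    ext i j
    rw [Matrix.mul_add, Matrix.mul_one, Matrix.add_apply, Matrix.add_apply, ← vecMulVec_eq,
      diagonal_mul, vecMulVec_apply, vecMulVec_apply, ← mul_assoc, mul_div_cancel₀ _ (hd i)]
  beta_reduce
  rw [hfactor, det_mul, det_diagonal, det_one_add_replicateCol_mul_replicateRow, dotProduct,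
    mul_add, mul_one, mul_sum]
  congr 1
  refine sum_congr rfl fun i _ => ?_
  rw [← mul_prod_erase univ d (mem_univ i)]
  field_simp [hd i]

/-- The sum of the principal `k × k` minors of a matrix, that is, the `k`-th elementary symmetric
polynomial of its eigenvalues. -/
def minorSum {R : Type*} [CommRing R] (k : ℕ) (M : Matrix ι ι R) : R :=
  ∑ s ∈ univ.powersetCard k, (M.submatrix (Subtype.val : s → ι) Subtype.val).det

lemma map_minorSum {R S : Type*} [CommRing R] [CommRing S] (f : R →+* S) (k : ℕ)
    (M : Matrix ι ι R) : f (minorSum k M) = minorSum k (M.map f) := by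
  simp only [minorSum, map_sum, f.map_det, RingHom.mapMatrix_apply, submatrix_map]

lemma minorSum_eq_charpoly_coeff {R : Type*} [CommRing R] {k : ℕ} (hk : k ≤ Fintype.card ι)
    (M : Matrix ι ι R) :
    minorSum k M = (-1) ^ k * M.charpoly.coeff (Fintype.card ι - k) := by
  rw [charpoly_coeff_eq_sum_minors M k hk, ← mul_assoc, ← mul_pow, neg_one_mul, neg_neg, one_pow,
    one_mul, minorSum]

lemma minorSum_transpose_mul_mul {R : Type*} [CommRing R] {k : ℕ} (hk : k ≤ Fintype.card ι)
    {U : Matrix ι ι R} (hU : Uᵀ * U = 1) (M : Matrix ι ι R) :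
    minorSum k (Uᵀ * M * U) = minorSum k M := by
  rw [minorSum_eq_charpoly_coeff hk, minorSum_eq_charpoly_coeff hk, Matrix.mul_assoc,
    charpoly_mul_comm, Matrix.mul_assoc, mul_eq_one_comm.1 hU, Matrix.mul_one]

lemma minorSum_nonneg (k : ℕ) {A : Matrix ι ι ℝ} (hA : A.PosSemidef) : 0 ≤ minorSum k A :=
  sum_nonneg fun _ _ => (hA.submatrix _).det_nonneg

lemma minorSum_mono (k : ℕ) {A S : Matrix ι ι ℝ} (hA : A.PosSemidef) (hS : S.PosSemidef) :
    minorSum k A ≤ minorSum k (A + S) :=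
  sum_le_sum fun _ _ => det_le_det_add_of_posSemidef (hA.submatrix _) (hS.submatrix _)

lemma minorSum_smul {R : Type*} [CommRing R] (k : ℕ) (c : R) (M : Matrix ι ι R) :
    minorSum k (c • M) = c ^ k * minorSum k M := by
  rw [minorSum, minorSum, mul_sum]
  refine sum_congr rfl fun s hs => ?_
  rw [submatrix_smul, Pi.smul_apply, Pi.smul_apply, det_smul, Fintype.card_coe,
    (mem_powersetCard.1 hs).2]

lemma minorSum_diagonal (k : ℕ) (d : ι → ℝ) :
    minorSum k (diagonal d) = ∑ s ∈ univ.powersetCard k, ∏ i ∈ s, d i := by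
  refine sum_congr rfl fun s _ => ?_
  rw [submatrix_diagonal _ _ Subtype.val_injective, det_diagonal]
  exact prod_coe_sort s d

lemma minorSum_diagonal_add_vecMulVec (k : ℕ) (d u v : ι → ℝ) :
    minorSum k (diagonal d + vecMulVec u v) = minorSum k (diagonal d) +
      ∑ s ∈ univ.powersetCard k, ∑ i ∈ s, u i * v i * ∏ j ∈ s.erase i, d j := by
  rw [minorSum_diagonal, ← sum_add_distrib]
  refine sum_congr rfl fun s _ => ?_
  have hprod (i : s) : ∏ j ∈ univ.erase i, d j = ∏ j ∈ s.erase i, d j := by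
    have hmap : s.erase i = (univ.erase i).map (Function.Embedding.subtype (· ∈ s)) := by
      ext j
      aesop
    rw [hmap, prod_map, Function.Embedding.coe_subtype]
  rw [submatrix_add, Pi.add_apply, Pi.add_apply, submatrix_diagonal _ _ Subtype.val_injective]
  exact (det_diagonal_add_vecMulVec _ (fun i : s => u i) fun i : s => v i).trans <|
    congrArg₂ _ (prod_coe_sort s d) ((sum_congr rfl fun i _ => congrArg _ (hprod i)).trans <|
      sum_coe_sort s fun i => u i * v i * ∏ j ∈ s.erase i, d j)

lemma sum_sq_mul_prod_erase_pos {k : ℕ} (hk : 1 ≤ k) {d w : ι → ℝ} (hd : ∀ i, 0 ≤ d i)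
    (hpos : 0 < ∑ s ∈ univ.powersetCard k, ∏ i ∈ s, d i) (hw : w ≠ 0) :
    0 < ∑ s ∈ univ.powersetCard k, ∑ i ∈ s, w i * w i * ∏ j ∈ s.erase i, d j := by
  obtain ⟨s, hs, hs0⟩ :=
    exists_lt_of_sum_lt ((sum_const_zero (s := univ.powersetCard k)).trans_lt hpos)
  have hds : ∀ i ∈ s, 0 < d i := fun i hi =>
    (hd i).lt_of_ne fun h => hs0.ne' (prod_eq_zero hi h.symm)
  have hcard := (mem_powersetCard.1 hs).2
  obtain ⟨i, hi⟩ := Function.ne_iff.1 hw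
  have hterm (r : Finset ι) (j : ι) : 0 ≤ w j * w j * ∏ l ∈ r.erase j, d l :=
    mul_nonneg (mul_self_nonneg _) (prod_nonneg fun l _ => hd l)
  obtain ⟨r, hr, hir, hrd⟩ : ∃ r ∈ univ.powersetCard k, i ∈ r ∧ ∀ j ∈ r.erase i, 0 < d j := by
    by_cases his : i ∈ s
    · exact ⟨s, hs, his, fun j hj => hds j (mem_of_mem_erase hj)⟩
    obtain ⟨j, hj⟩ : s.Nonempty := card_pos.1 (by omega)
    have hij : i ∉ s.erase j := fun h => his (mem_of_mem_erase h)
    refine ⟨insert i (s.erase j), mem_powersetCard.2 ⟨subset_univ _, ?_⟩, mem_insert_self _ _,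
      fun l hl => ?_⟩
    · rw [card_insert_of_notMem hij, card_erase_of_mem hj]; omega
    · rw [erase_insert hij] at hl
      exact hds l (mem_of_mem_erase hl)
  exact sum_pos' (fun r _ => sum_nonneg fun j _ => hterm r j)
    ⟨r, hr, sum_pos' (fun j _ => hterm r j)
      ⟨i, hir, mul_pos (mul_self_pos.2 hi) (prod_pos hrd)⟩⟩

lemma exists_pos_minorSum_add_smul_vecMulVec {k : ℕ} (hk : 1 ≤ k) (hk' : k ≤ Fintype.card ι)
    {A : Matrix ι ι ℝ} (hA : A.PosSemidef) (hpos : 0 < minorSum k A) {w : ι → ℝ} (hw : w ≠ 0) :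
    ∃ c, 0 < c ∧ ∀ t : ℝ, minorSum k (A + t • vecMulVec w w) = minorSum k A + t * c := by
  obtain ⟨U, d, hU, rfl⟩ := exists_orthogonal_diagonalization hA.1
  have hU' := mul_eq_one_comm.1 hU
  rw [posSemidef_transpose_mul_mul_iff (isUnit_of_transpose_mul_self hU),
    posSemidef_diagonal_iff] at hA
  rw [minorSum_transpose_mul_mul hk' hU, minorSum_diagonal] at hpos
  have hUw : U *ᵥ w ≠ 0 := fun h => hw <| by
    rw [← one_mulVec w, ← hU, ← mulVec_mulVec, h, mulVec_zero]
  refine ⟨_, sum_sq_mul_prod_erase_pos hk hA hpos hUw, fun t => ?_⟩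
  have hconj : Uᵀ * diagonal d * U + t • vecMulVec w w =
      Uᵀ * (diagonal d + vecMulVec (t • U *ᵥ w) (U *ᵥ w)) * U := by
    rw [Matrix.mul_add, Matrix.add_mul, smul_vecMulVec, Matrix.mul_smul, Matrix.smul_mul,
      mul_vecMulVec, vecMulVec_mul, mulVec_mulVec, hU, one_mulVec, ← mulVec_transpose,
      mulVec_mulVec, hU, one_mulVec]
  rw [hconj, minorSum_transpose_mul_mul hk' hU, minorSum_transpose_mul_mul hk' hU,
    minorSum_diagonal_add_vecMulVec, mul_sum]
  simp only [Pi.smul_apply, smul_eq_mul, mul_sum, mul_assoc]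

/-- The quadratic path `t ↦ A + t B + t² D`, as a matrix of polynomials. -/
def quadraticPencil (A B D : Matrix ι ι ℝ) : Matrix ι ι ℝ[X] :=
  A.map C + (X : ℝ[X]) • B.map C + (X : ℝ[X]) ^ 2 • D.map C

omit [Fintype ι] [DecidableEq ι] in
lemma quadraticPencil_map_eval (A B D : Matrix ι ι ℝ) (t : ℝ) :
    (quadraticPencil A B D).map (evalRingHom t) = A + t • B + t ^ 2 • D := by
  ext i j
  simp [quadraticPencil, mul_comm (B i j), mul_comm (D i j)]

lemma eval_minorSum_quadraticPencil (k : ℕ) (A B D : Matrix ι ι ℝ) (t : ℝ) :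
    (minorSum k (quadraticPencil A B D)).eval t = minorSum k (A + t • B + t ^ 2 • D) := by
  rw [← quadraticPencil_map_eval, ← map_minorSum, coe_evalRingHom]

lemma eval_det_quadraticPencil (A B D : Matrix ι ι ℝ) (t : ℝ) :
    (quadraticPencil A B D).det.eval t = (A + t • B + t ^ 2 • D).det := by
  rw [← quadraticPencil_map_eval, ← RingHom.mapMatrix_apply, ← RingHom.map_det, coe_evalRingHom]

lemma coeff_one_eq_zero_and_coeff_two_nonneg {p : ℝ[X]} (hp : ∀ t, 0 ≤ p.eval t)
    (h0 : p.coeff 0 = 0) : p.coeff 1 = 0 ∧ 0 ≤ p.coeff 2 := by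
  have hmin : IsLocalMin (fun t => p.eval t) 0 := Filter.Eventually.of_forall fun t => by
    simpa only [← coeff_zero_eq_eval_zero, h0] using hp t
  obtain ⟨h1, h2⟩ := deriv_eq_zero_and_second_deriv_nonneg
    (Filter.Eventually.of_forall p.hasDerivAt) (p.derivative.hasDerivAt 0) hmin
  rw [← coeff_zero_eq_eval_zero, coeff_derivative] at h1 h2
  rw [coeff_derivative] at h2
  norm_num at h1 h2
  exact ⟨h1, h2⟩

lemma coeff_le_of_eval_le {p q : ℝ[X]} (hpq : ∀ t, p.eval t ≤ q.eval t)
    (h0 : p.coeff 0 = q.coeff 0) : p.coeff 1 = q.coeff 1 ∧ p.coeff 2 ≤ q.coeff 2 := by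
  obtain ⟨h1, h2⟩ := coeff_one_eq_zero_and_coeff_two_nonneg (p := q - p)
    (fun t => by rw [eval_sub]; exact sub_nonneg.2 (hpq t)) (by rw [coeff_sub, h0, sub_self])
  rw [coeff_sub] at h1 h2
  exact ⟨(sub_eq_zero.1 h1).symm, sub_nonneg.1 h2⟩

omit [Fintype ι] [DecidableEq ι] in
lemma coeff_prod_one_add_add_sq (s : Finset ι) (β : ι → ℝ) :
    (∏ i ∈ s, (1 + C (β i) * X + C (β i ^ 2) * X ^ 2)).coeff 0 = 1 ∧
    (∏ i ∈ s, (1 + C (β i) * X + C (β i ^ 2) * X ^ 2)).coeff 1 = ∑ i ∈ s, β i ∧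
    2 * (∏ i ∈ s, (1 + C (β i) * X + C (β i ^ 2) * X ^ 2)).coeff 2 =
      (∑ i ∈ s, β i) ^ 2 + ∑ i ∈ s, β i ^ 2 := by
  classical
  induction s using Finset.induction_on with
  | empty => simp [coeff_one]
  | insert a s ha ih =>
    obtain ⟨h0, h1, h2⟩ := ih
    rw [prod_insert ha, sum_insert ha, sum_insert ha]
    have key (q : ℝ[X]) : ((1 + C (β a) * X + C (β a ^ 2) * X ^ 2) * q) =
      q + C (β a) * (X * q) + C (β a ^ 2) * (X * (X * q)) := by ring
    simp only [key, coeff_add, coeff_C_mul, coeff_X_mul_zero, coeff_X_mul, h0, h1, mul_add, h2]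
    exact ⟨by ring, by ring, by ring⟩

lemma mul_inv_mul_eq_of_simultaneous {T : Matrix ι ι ℝ} (hT : IsUnit T) (β : ι → ℝ) :
    Tᵀ * diagonal β * T * (Tᵀ * T)⁻¹ * (Tᵀ * diagonal β * T) =
      Tᵀ * diagonal (fun i => β i ^ 2) * T := by
  have hT' := (isUnit_iff_isUnit_det T).1 hT
  have hTt : IsUnit Tᵀ.det := by rwa [det_transpose]
  calc Tᵀ * diagonal β * T * (Tᵀ * T)⁻¹ * (Tᵀ * diagonal β * T)
      = Tᵀ * diagonal β * (T * T⁻¹) * (Tᵀ⁻¹ * Tᵀ) * diagonal β * T := by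
        rw [Matrix.mul_inv_rev]; simp only [Matrix.mul_assoc]
    _ = Tᵀ * (diagonal β * diagonal β) * T := by
        rw [mul_nonsing_inv T hT', nonsing_inv_mul _ hTt]
        simp only [Matrix.mul_assoc, Matrix.one_mul]
    _ = _ := by simp only [diagonal_mul_diagonal, sq]

lemma add_smul_add_sq_smul_eq_of_simultaneous {T : Matrix ι ι ℝ} (hT : IsUnit T) (β : ι → ℝ)
    (t : ℝ) :
    Tᵀ * T + t • (Tᵀ * diagonal β * T) +
        t ^ 2 • (Tᵀ * diagonal β * T * (Tᵀ * T)⁻¹ * (Tᵀ * diagonal β * T)) =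
      Tᵀ * diagonal (fun i => 1 + β i * t + β i ^ 2 * t ^ 2) * T := by
  have hdiag : diagonal (fun i => 1 + β i * t + β i ^ 2 * t ^ 2) =
      1 + t • diagonal β + t ^ 2 • diagonal (fun i => β i ^ 2) := by
    ext i j
    obtain rfl | hij := eq_or_ne i j
    · simp [mul_comm (β i), mul_comm (β i ^ 2)]
    · simp [hij]
  rw [mul_inv_mul_eq_of_simultaneous hT, hdiag]
  simp only [Matrix.mul_add, Matrix.add_mul, Matrix.mul_one, Matrix.mul_smul, Matrix.smul_mul]

omit [DecidableEq ι] in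
lemma sq_coeff_one_prod_le (β : ι → ℝ) :
    (1 + 1 / (Fintype.card ι : ℝ)) *
        (∏ i, (1 + C (β i) * X + C (β i ^ 2) * X ^ 2)).coeff 1 ^ 2 ≤
      2 * (∏ i, (1 + C (β i) * X + C (β i ^ 2) * X ^ 2)).coeff 2 := by
  obtain ⟨-, h1, h2⟩ := coeff_prod_one_add_add_sq univ β
  rw [h1, h2]
  have hcs : (∑ i, β i) ^ 2 / Fintype.card ι ≤ ∑ i, β i ^ 2 :=
    div_le_of_le_mul₀ (Nat.cast_nonneg _) (sum_nonneg fun i _ => sq_nonneg _) <| by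
      rw [mul_comm]; exact sq_sum_le_card_mul_sum_sq
  calc (1 + 1 / (Fintype.card ι : ℝ)) * (∑ i, β i) ^ 2
      = (∑ i, β i) ^ 2 + (∑ i, β i) ^ 2 / Fintype.card ι := by ring
    _ ≤ _ := by gcongr

lemma det_quadraticPencil_second_order_of_posDef {A B D : Matrix ι ι ℝ} (hA : A.PosDef)
    (hB : B.IsHermitian) (hD : (D - B * A⁻¹ * B).PosSemidef) :
    (1 + 1 / (Fintype.card ι : ℝ)) * (quadraticPencil A B D).det.coeff 1 ^ 2 ≤
      (quadraticPencil A B D).det.coeff 0 * (2 * (quadraticPencil A B D).det.coeff 2) := by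
  obtain ⟨T, β, hT, rfl, rfl⟩ := exists_simultaneous_diagonalization hA hB
  set q : ℝ[X] := ∏ i, (1 + C (β i) * X + C (β i ^ 2) * X ^ 2) with hq
  have hNdet (t : ℝ) : (C (T.det ^ 2) * q).eval t =
      (Tᵀ * diagonal (fun i => 1 + β i * t + β i ^ 2 * t ^ 2) * T).det := by
    simp only [hq, eval_mul, eval_C, eval_prod, eval_add, eval_one, eval_X, eval_pow, det_mul,
      det_transpose, det_diagonal]
    ring
  have hN (t : ℝ) : (Tᵀ * diagonal (fun i => 1 + β i * t + β i ^ 2 * t ^ 2) * T).PosSemidef := by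
    refine (posSemidef_transpose_mul_mul_iff hT).2 (posSemidef_diagonal_iff.2 fun i => ?_)
    nlinarith [sq_nonneg (1 + β i * t), sq_nonneg (β i * t)]
  obtain ⟨h1, h2⟩ := coeff_le_of_eval_le (p := C (T.det ^ 2) * q)
    (q := (quadraticPencil (Tᵀ * T) (Tᵀ * diagonal β * T) D).det)
    (fun t => by
      rw [hNdet, eval_det_quadraticPencil]
      refine (det_le_det_add_of_posSemidef (hN t) (hD.smul (sq_nonneg t))).trans_eq ?_
      rw [← add_smul_add_sq_smul_eq_of_simultaneous hT, smul_sub, add_assoc, add_sub_cancel])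
    (by
      rw [coeff_zero_eq_eval_zero, coeff_zero_eq_eval_zero, hNdet, eval_det_quadraticPencil]
      simp)
  have hq1 := mul_le_mul_of_nonneg_left (sq_coeff_one_prod_le β) (sq_nonneg (T.det ^ 2))
  rw [← hq] at hq1
  have h0 : (quadraticPencil (Tᵀ * T) (Tᵀ * diagonal β * T) D).det.coeff 0 = T.det ^ 2 := by
    rw [coeff_zero_eq_eval_zero, eval_det_quadraticPencil, zero_smul, zero_pow two_ne_zero,
      zero_smul, add_zero, add_zero, det_mul, det_transpose, sq]
  rw [← h1, h0, coeff_C_mul]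
  rw [coeff_C_mul] at h2
  nlinarith [mul_le_mul_of_nonneg_left h2 (sq_nonneg T.det)]

omit [Fintype ι] [DecidableEq ι] in
lemma posSemidef_add_smul_add_sq_smul [Finite ι] {A B D : Matrix ι ι ℝ}
    (h : (fromBlocks A B B D).PosSemidef) (t : ℝ) : (A + t • B + t ^ 2 • D).PosSemidef := by
  classical
  cases nonempty_fintype ι
  have hconj := h.conjTranspose_mul_mul_same (fromRows (1 : Matrix ι ι ℝ) ((t / 2) • 1))
  have hD : D.PosSemidef := h.submatrix Sum.inr
  convert hconj.add (hD.smul (show 0 ≤ 3 / 4 * t ^ 2 by positivity)) using 1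
  rw [conjTranspose_eq_transpose_of_trivial, transpose_fromRows, fromCols_mul_fromBlocks,
    fromCols_mul_fromRows]
  simp only [transpose_one, transpose_smul, Matrix.one_mul, Matrix.mul_one, Matrix.smul_mul,
    Matrix.mul_smul]
  module

lemma det_quadraticPencil_second_order {A B D : Matrix ι ι ℝ}
    (h : (fromBlocks A B B D).PosSemidef) :
    0 ≤ (quadraticPencil A B D).det.coeff 2 ∧
    (1 + 1 / (Fintype.card ι : ℝ)) * (quadraticPencil A B D).det.coeff 1 ^ 2 ≤
      (quadraticPencil A B D).det.coeff 0 * (2 * (quadraticPencil A B D).det.coeff 2) := by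
  have hA : A.PosSemidef := h.submatrix Sum.inl
  have hcoeff : (quadraticPencil A B D).det.coeff 0 = A.det := by
    simp [coeff_zero_eq_eval_zero, eval_det_quadraticPencil]
  by_cases h0 : A.det = 0
  · obtain ⟨h1, h2⟩ := coeff_one_eq_zero_and_coeff_two_nonneg (p := (quadraticPencil A B D).det)
      (fun t => by
        rw [eval_det_quadraticPencil]; exact (posSemidef_add_smul_add_sq_smul h t).det_nonneg)
      (hcoeff.trans h0)
    refine ⟨h2, ?_⟩
    rw [h1, hcoeff, h0, zero_mul, sq, zero_mul, mul_zero]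
  · have hApos : A.PosDef := hA.posDef_iff_det_ne_zero.2 h0
    have hB : Bᴴ = B := (isHermitian_fromBlocks_iff.1 h.1).2.1
    have := hApos.isUnit.invertible
    have hschur : (D - B * A⁻¹ * B).PosSemidef := by
      simpa only [hB] using (PosDef.fromBlocks₁₁ B D hApos).1 (by rwa [hB])
    have h2 := det_quadraticPencil_second_order_of_posDef hApos hB hschur
    refine ⟨?_, h2⟩
    rw [hcoeff] at h2
    have : 0 ≤ A.det * (2 * (quadraticPencil A B D).det.coeff 2) := le_trans (by positivity) h2
    linarith [nonneg_of_mul_nonneg_right this hApos.det_pos]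

/-- Along a path `A + t B + t² D` the function `(minorSum k) ^ (-1/k)` is concave to second order
at `t = 0`. -/
lemma minorSum_quadraticPencil_second_order (k : ℕ) {A B D : Matrix ι ι ℝ}
    (h : (fromBlocks A B B D).PosSemidef) :
    (1 + 1 / (k : ℝ)) * (minorSum k (quadraticPencil A B D)).coeff 1 ^ 2 ≤
      (minorSum k (quadraticPencil A B D)).coeff 0 *
        (2 * (minorSum k (quadraticPencil A B D)).coeff 2) := by
  have hk : 0 < 1 + 1 / (k : ℝ) := by positivity
  let minor (s : Finset ι) : ℝ[X] :=
    (quadraticPencil (A.submatrix (Subtype.val : s → ι) Subtype.val)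
      (B.submatrix Subtype.val Subtype.val) (D.submatrix Subtype.val Subtype.val)).det
  have hminor (s : Finset ι) : 0 ≤ (minor s).coeff 0 ∧ 0 ≤ (minor s).coeff 2 ∧
      (1 + 1 / (#s : ℝ)) * (minor s).coeff 1 ^ 2 ≤ (minor s).coeff 0 * (2 * (minor s).coeff 2) := by
    have hs : (fromBlocks (A.submatrix (Subtype.val : s → ι) Subtype.val)
        (B.submatrix Subtype.val Subtype.val) (B.submatrix Subtype.val Subtype.val)
        (D.submatrix (Subtype.val : s → ι) Subtype.val)).PosSemidef := by
      convert h.submatrix (Sum.map (Subtype.val : s → ι) (Subtype.val : s → ι)) using 1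
      ext (i | i) (j | j) <;> rfl
    obtain ⟨h2, h12⟩ := det_quadraticPencil_second_order hs
    rw [Fintype.card_coe] at h12
    refine ⟨?_, h2, h12⟩
    rw [coeff_zero_eq_eval_zero, eval_det_quadraticPencil, zero_smul, zero_pow two_ne_zero,
      zero_smul, add_zero, add_zero]
    exact PosSemidef.det_nonneg (hs.submatrix Sum.inl)
  have hcs := sum_sq_le_sum_mul_sum_of_sq_le_mul (univ.powersetCard k)
    (r := fun s => (minor s).coeff 1) (f := fun s => (minor s).coeff 0)
    (g := fun s => 2 * (minor s).coeff 2 / (1 + 1 / (k : ℝ)))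
    (fun s _ => (hminor s).1)
    (fun s _ => div_nonneg (mul_nonneg zero_le_two (hminor s).2.1) hk.le)
    (fun s hs => by
      rw [← mul_div_assoc, le_div_iff₀' hk, ← (mem_powersetCard.1 hs).2]
      exact (hminor s).2.2)
  rw [← sum_div, ← mul_div_assoc, le_div_iff₀' hk, ← mul_sum] at hcs
  have hsum (j : ℕ) : (minorSum k (quadraticPencil A B D)).coeff j =
      ∑ s ∈ univ.powersetCard k, (minor s).coeff j := by
    rw [minorSum, finsetSum_coeff]; rfl
  simpa only [hsum] using hcs

end MatrixLemmas

section BilinearForms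

open Filter Topology
open scoped Matrix

/-- Continuous bilinear forms on a real normed space. -/
abbrev ContBilinForm (E : Type*) [NormedAddCommGroup E] [NormedSpace ℝ E] : Type _ :=
  E →L[ℝ] E →L[ℝ] ℝ

/-- Symmetric positive semidefinite continuous bilinear forms. -/
structure IsPsd {E : Type*} [NormedAddCommGroup E] [NormedSpace ℝ E] (A : ContBilinForm E) :
    Prop where
  symm : ∀ v w, A v w = A w v
  nonneg : ∀ v, 0 ≤ A v v

lemma IsPsd.apply_eq_zero {E : Type*} [NormedAddCommGroup E] [NormedSpace ℝ E]
    {A : ContBilinForm E} (hA : IsPsd A) {v : E} (hv : A v v = 0) (w : E) : A v w = 0 := by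
  have h := discrim_le_zero (a := A w w) (b := 2 * A v w) (c := 0) fun t => by
    have := hA.nonneg (v + t • w)
    simp only [map_add, map_smul, add_apply, smul_apply, smul_eq_mul, hv, hA.symm w v] at this
    linarith
  rw [discrim] at h
  nlinarith [sq_nonneg (A v w)]

variable {E : Type*} [NormedAddCommGroup E] [InnerProductSpace ℝ E]

/-- The bilinear form `w ⊗ w : (v, v') ↦ ⟪w, v⟫ ⟪w, v'⟫`. -/
def tensorSquare (w : E) : ContBilinForm E := (innerSL ℝ w).smulRight (innerSL ℝ w)

@[simp] lemma tensorSquare_apply (w v v' : E) : tensorSquare w v v' = ⟪w, v⟫ * ⟪w, v'⟫ := by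
  simp [tensorSquare]

lemma norm_tensorSquare (w : E) : ‖tensorSquare w‖ = ‖w‖ ^ 2 := by
  rw [tensorSquare, ContinuousLinearMap.norm_smulRight_apply, innerSL_apply_norm, sq]

variable {ι : Type*} [Fintype ι] [DecidableEq ι] (b : OrthonormalBasis ι ℝ E) {k : ℕ}

/-- The Gram matrix `(B (b i) (b j))` of a bilinear form in an orthonormal basis. -/
def gramMatrix (B : ContBilinForm E) : Matrix ι ι ℝ :=
  LinearMap.BilinForm.toMatrix b.toBasis B.toBilinForm

/-- The elementary symmetric function `σ_k` of the eigenvalues of a symmetric bilinear form,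
defined for every bilinear form as the sum of the principal `k`-minors of its Gram matrix. -/
def sigma (k : ℕ) (B : ContBilinForm E) : ℝ := minorSum k (gramMatrix b B)

@[simp] lemma gramMatrix_apply (B : ContBilinForm E) (i j : ι) :
    gramMatrix b B i j = B (b i) (b j) := by
  simp [gramMatrix]

lemma gramMatrix_add (A B : ContBilinForm E) :
    gramMatrix b (A + B) = gramMatrix b A + gramMatrix b B := by
  ext i j; simp

lemma gramMatrix_smul (c : ℝ) (A : ContBilinForm E) :
    gramMatrix b (c • A) = c • gramMatrix b A := by
  ext i j; simp

lemma gramMatrix_tensorSquare (w : E) :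
    gramMatrix b (tensorSquare w) = Matrix.vecMulVec (fun i => ⟪w, b i⟫) (fun i => ⟪w, b i⟫) := by
  ext i j
  simp [Matrix.vecMulVec]

lemma gramMatrix_bilinearComp (B : ContBilinForm E) (S T : E →L[ℝ] E) :
    gramMatrix b (B.bilinearComp S T) =
      (LinearMap.toMatrix b.toBasis b.toBasis S.toLinearMap)ᵀ * gramMatrix b B *
        LinearMap.toMatrix b.toBasis b.toBasis T.toLinearMap :=
  LinearMap.toMatrix₂_compl₁₂ b.toBasis b.toBasis b.toBasis b.toBasis B.toBilinForm
    S.toLinearMap T.toLinearMap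

lemma posSemidef_gramMatrix {B : ContBilinForm E} (hB : IsPsd B) :
    (gramMatrix b B).PosSemidef :=
  (LinearMap.isPosSemidef_iff_posSemidef_toMatrix b.toBasis).1
    ⟨⟨fun v w => hB.symm v w⟩, ⟨fun v => hB.nonneg v⟩⟩

lemma sigma_nonneg (k : ℕ) {B : ContBilinForm E} (hB : IsPsd B) : 0 ≤ sigma b k B :=
  minorSum_nonneg k (posSemidef_gramMatrix b hB)

lemma sigma_smul (c : ℝ) (B : ContBilinForm E) : sigma b k (c • B) = c ^ k * sigma b k B := by
  rw [sigma, gramMatrix_smul, minorSum_smul, sigma]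

lemma sigma_bilinearComp_isometry (hk : k ≤ Fintype.card ι) (B : ContBilinForm E)
    {R : E →L[ℝ] E} (hR : ∀ v w, ⟪R v, R w⟫ = ⟪v, w⟫) :
    sigma b k (B.bilinearComp R R) = sigma b k B := by
  have horth : (LinearMap.toMatrix b.toBasis b.toBasis R.toLinearMap)ᵀ *
      LinearMap.toMatrix b.toBasis b.toBasis R.toLinearMap = 1 := by
    ext i j
    simp only [Matrix.mul_apply, Matrix.transpose_apply, LinearMap.toMatrix_apply,
      OrthonormalBasis.coe_toBasis, OrthonormalBasis.coe_toBasis_repr_apply,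
      OrthonormalBasis.repr_apply_apply, ContinuousLinearMap.coe_coe]
    calc ∑ x, ⟪b x, R (b i)⟫ * ⟪b x, R (b j)⟫
        = ∑ x, ⟪R (b i), b x⟫ * ⟪b x, R (b j)⟫ :=
          Finset.sum_congr rfl fun x _ => by rw [real_inner_comm]
      _ = ⟪R (b i), R (b j)⟫ := b.sum_inner_mul_inner _ _
      _ = (1 : Matrix ι ι ℝ) i j := by rw [hR, b.inner_eq_ite, Matrix.one_apply]
  rw [sigma, sigma, gramMatrix_bilinearComp, minorSum_transpose_mul_mul hk horth]

lemma contDiff_sigma {n : WithTop ℕ∞} : ContDiff ℝ n (sigma b k) := by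
  have hentry : ∀ i j, ContDiff ℝ n fun B : ContBilinForm E => gramMatrix b B i j := fun i j => by
    simp only [gramMatrix_apply]
    fun_prop
  unfold sigma minorSum
  refine ContDiff.sum fun s _ => ?_
  simp only [Matrix.det_apply]
  refine ContDiff.sum fun _ _ => ?_
  simp only [Units.smul_def, zsmul_eq_mul]
  exact contDiff_const.mul (contDiff_prod fun i _ => hentry _ _)

lemma hasDerivAt_sigma_line (A H : ContBilinForm E) :
    HasDerivAt (fun t : ℝ => sigma b k (A + t • H)) (fderiv ℝ (sigma b k) A H) 0 := by
  have hσ : HasFDerivAt (sigma b k) (fderiv ℝ (sigma b k) A) (A + (0 : ℝ) • H) := by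
    rw [zero_smul, add_zero]
    exact ((contDiff_sigma b (n := 1)).differentiable (by simp)).differentiableAt.hasFDerivAt
  have hline : HasDerivAt (fun t : ℝ => A + t • H) H 0 := by
    simpa using ((hasDerivAt_id (0 : ℝ)).smul_const H).const_add A
  exact hσ.comp_hasDerivAt (0 : ℝ) hline

lemma fderiv_sigma_nonneg {A H : ContBilinForm E} (hA : IsPsd A) (hH : IsPsd H) :
    0 ≤ fderiv ℝ (sigma b k) A H := by
  refine nonneg_deriv_of_eventually_le (hasDerivAt_sigma_line b A H) ?_
  filter_upwards [self_mem_nhdsWithin] with t (ht : 0 < t)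
  simp only [zero_smul, add_zero, sigma, gramMatrix_add, gramMatrix_smul]
  exact minorSum_mono k (posSemidef_gramMatrix b hA) ((posSemidef_gramMatrix b hH).smul ht.le)

lemma fderiv_sigma_tensorSquare_pos (hk : 1 ≤ k) (hk' : k ≤ Fintype.card ι)
    {A : ContBilinForm E} (hA : IsPsd A) (hpos : 0 < sigma b k A) {w : E} (hw : w ≠ 0) :
    0 < fderiv ℝ (sigma b k) A (tensorSquare w) := by
  have hcoord : (fun i => ⟪w, b i⟫) ≠ 0 := fun h => hw <| b.repr.injective <| by
    ext i
    simpa [b.repr_apply_apply, real_inner_comm w] using congrFun h i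
  obtain ⟨c, hc, hline⟩ := exists_pos_minorSum_add_smul_vecMulVec hk hk'
    (posSemidef_gramMatrix b hA) hpos hcoord
  have hlinear : HasDerivAt (fun t : ℝ => sigma b k A + t * c) (1 * c) 0 :=
    ((hasDerivAt_id (0 : ℝ)).mul_const c).const_add _
  have hσ := hasDerivAt_sigma_line (k := k) b A (tensorSquare w)
  simp only [sigma, gramMatrix_add, gramMatrix_smul, gramMatrix_tensorSquare, hline] at hσ
  rwa [show fderiv ℝ (sigma b k) A (tensorSquare w) = 1 * c from hσ.unique hlinear, one_mul]

lemma fderiv_sigma_bilinearComp_isometry (hk : k ≤ Fintype.card ι) {A : ContBilinForm E}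
    {R : E →L[ℝ] E} (hR : ∀ v w, ⟪R v, R w⟫ = ⟪v, w⟫) (hA : A.bilinearComp R R = A)
    (H : ContBilinForm E) :
    fderiv ℝ (sigma b k) A (H.bilinearComp R R) = fderiv ℝ (sigma b k) A H := by
  have hline : (fun t : ℝ => sigma b k (A + t • H.bilinearComp R R)) =
      fun t : ℝ => sigma b k (A + t • H) := by
    funext t
    rw [← sigma_bilinearComp_isometry b hk (A + t • H) hR]
    congr 1
    nth_rewrite 1 [← hA]
    rfl
  exact (hline ▸ hasDerivAt_sigma_line b A (H.bilinearComp R R)).unique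
    (hasDerivAt_sigma_line b A H)

lemma hasDerivAt_quadratic_path {F : Type*} [NormedAddCommGroup F] [NormedSpace ℝ F]
    (A X Y : F) (t : ℝ) :
    HasDerivAt (fun t : ℝ => A + t • X + t ^ 2 • Y) (X + (2 * t) • Y) t := by
  have h := (((hasDerivAt_id t).smul_const X).const_add A).add
    (((hasDerivAt_id t).pow 2).smul_const Y)
  simpa [Pi.add_def] using h

lemma coeff_minorSum_quadraticPencil_gramMatrix (A X Y : ContBilinForm E) :
    (minorSum k (quadraticPencil (gramMatrix b A) (gramMatrix b X) (gramMatrix b Y))).coeff 1 =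
        fderiv ℝ (sigma b k) A X ∧
      2 * (minorSum k (quadraticPencil (gramMatrix b A) (gramMatrix b X)
          (gramMatrix b Y))).coeff 2 =
        hessian (sigma b k) A X X + 2 * fderiv ℝ (sigma b k) A Y := by
  set p := minorSum k (quadraticPencil (gramMatrix b A) (gramMatrix b X) (gramMatrix b Y))
  have heval : (fun t : ℝ => sigma b k (A + t • X + t ^ 2 • Y)) = fun t => p.eval t := by
    funext t
    rw [eval_minorSum_quadraticPencil, sigma]
    simp only [gramMatrix_add, gramMatrix_smul]
  have hvel : HasDerivAt (fun t : ℝ => X + (2 * t) • Y) ((2 : ℝ) • Y) 0 := by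
    simpa using (((hasDerivAt_id (0 : ℝ)).const_mul 2).smul_const Y).const_add X
  obtain ⟨hfirst, hsecond⟩ := hasDerivAt_comp_second (f := sigma b k)
    (c := fun t : ℝ => A + t • X + t ^ 2 • Y) (contDiff_sigma b).contDiffAt
    (Eventually.of_forall (hasDerivAt_quadratic_path A X Y)) hvel
  rw [heval] at hfirst
  have hderiv := hfirst.mono fun t ht => (p.hasDerivAt t).unique ht
  have hcoeff1 := hderiv.self_of_nhds
  have hcoeff2 := (p.derivative.hasDerivAt 0).unique (hsecond.congr_of_eventuallyEq hderiv)
  simp only [← Polynomial.coeff_zero_eq_eval_zero, Polynomial.coeff_derivative] at hcoeff1 hcoeff2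
  norm_num at hcoeff1 hcoeff2
  exact ⟨hcoeff1, by linarith⟩

/-- Concavity of `σ_k ^ (-1/k)` at `A` along the path `A + t X + t² W^* A W` with `X = A W`. -/
lemma sigma_second_order {A X : ContBilinForm E} {W : E →L[ℝ] E} (hA : IsPsd A)
    (hX : ∀ v w, X v w = A v (W w)) (hXs : ∀ v w, X v w = X w v) :
    (1 + 1 / (k : ℝ)) * (fderiv ℝ (sigma b k) A X) ^ 2 ≤
      sigma b k A * (hessian (sigma b k) A X X +
        2 * fderiv ℝ (sigma b k) A (A.bilinearComp W W)) := by
  set T := LinearMap.toMatrix b.toBasis b.toBasis W.toLinearMap with hT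
  have hXm : gramMatrix b X = gramMatrix b A * T := by
    rw [show X = A.bilinearComp (ContinuousLinearMap.id ℝ E) W by ext v w; exact hX v w,
      gramMatrix_bilinearComp, ContinuousLinearMap.coe_id, LinearMap.toMatrix_id,
      Matrix.transpose_one, Matrix.one_mul]
  have hXt : (gramMatrix b X)ᵀ = gramMatrix b X := by ext i j; simp [hXs (b j)]
  have hAt : (gramMatrix b A)ᵀ = gramMatrix b A := by ext i j; simp [hA.symm (b j)]
  have hblock : (Matrix.fromBlocks (gramMatrix b A) (gramMatrix b X) (gramMatrix b X)
      (gramMatrix b (A.bilinearComp W W))).PosSemidef := by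
    have h := (posSemidef_gramMatrix b hA).conjTranspose_mul_mul_same
      (Matrix.fromCols (1 : Matrix ι ι ℝ) T)
    rw [Matrix.conjTranspose_eq_transpose_of_trivial, Matrix.transpose_fromCols,
      Matrix.fromRows_mul, Matrix.fromRows_mul_fromCols] at h
    rw [gramMatrix_bilinearComp, ← hT, hXm]
    convert h using 2
    · simp
    · simp
    · rw [← hXm, ← hXt, hXm, Matrix.transpose_mul, hAt, Matrix.mul_one]
  obtain ⟨h1, h2⟩ := coeff_minorSum_quadraticPencil_gramMatrix (k := k) b A X (A.bilinearComp W W)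
  have h := minorSum_quadraticPencil_second_order k hblock
  rwa [h1, h2, Polynomial.coeff_zero_eq_eval_zero, eval_minorSum_quadraticPencil, zero_smul,
    zero_pow two_ne_zero, zero_smul, add_zero, add_zero] at h

end BilinearForms

section CoreInequality

open Submodule

lemma sq_apply_sub_sq_apply_le {F : Type*} [NormedAddCommGroup F] [NormedSpace ℝ F]
    {D : F →L[ℝ] ℝ} {X X' : F} {M δ : ℝ} (hD : ‖D‖ ≤ M) (hX : ‖X‖ ≤ M) (hX' : ‖X'‖ ≤ M)
    (hδ : ‖X - X'‖ ≤ δ) : D X ^ 2 - D X' ^ 2 ≤ 2 * M ^ 3 * δ := by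
  have hM : 0 ≤ M := (norm_nonneg D).trans hD
  have hsum : ‖X + X'‖ ≤ M + M := (norm_add_le _ _).trans (add_le_add hX hX')
  calc D X ^ 2 - D X' ^ 2 = D (X + X') * D (X - X') := by rw [map_add, map_sub]; ring
    _ ≤ ‖D (X + X')‖ * ‖D (X - X')‖ := by rw [← norm_mul]; exact le_abs_self _
    _ ≤ (M * (M + M)) * (M * δ) :=
        mul_le_mul (D.le_of_opNorm_le_of_le hD hsum) (D.le_of_opNorm_le_of_le hD hδ)
          (norm_nonneg _) (by positivity)
    _ = 2 * M ^ 3 * δ := by ring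

lemma apply_self_sub_apply_self_le {F : Type*} [NormedAddCommGroup F] [NormedSpace ℝ F]
    {B : F →L[ℝ] F →L[ℝ] ℝ} {X X' : F} {M δ : ℝ} (hB : ‖B‖ ≤ M) (hX : ‖X‖ ≤ M) (hX' : ‖X'‖ ≤ M)
    (hδ : ‖X - X'‖ ≤ δ) : B X' X' - B X X ≤ 2 * M ^ 2 * δ := by
  have hbound : ∀ {Z Z' : F} {r r' : ℝ}, ‖Z‖ ≤ r → ‖Z'‖ ≤ r' → ‖B Z Z'‖ ≤ M * r * r' :=
    fun hZ hZ' => (B _).le_of_opNorm_le_of_le (B.le_of_opNorm_le_of_le hB hZ) hZ'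
  calc B X' X' - B X X = -(B (X - X') X + B X' (X - X')) := by simp
    _ ≤ ‖B (X - X') X + B X' (X - X')‖ := neg_le_abs _
    _ ≤ M * δ * M + M * M * δ :=
        (norm_add_le _ _).trans (add_le_add (hbound hδ hX) (hbound hX' hδ))
    _ = 2 * M ^ 2 * δ := by ring

variable {E : Type*} [NormedAddCommGroup E] [InnerProductSpace ℝ E]

lemma bilinearComp_reflection_eq_self {K : Submodule ℝ E} [K.HasOrthogonalProjection]
    {A : ContBilinForm E} (hA : ∀ v w, A v w = A w v) (hK : ∀ v ∈ K, ∀ w ∈ Kᗮ, A v w = 0) :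
    A.bilinearComp (K.reflection : E →L[ℝ] E) (K.reflection : E →L[ℝ] E) = A := by
  ext v w
  change A (K.reflection v) (K.reflection w) = A v w
  have hmem : ∀ u, u - K.starProjection u ∈ Kᗮ := K.sub_starProjection_mem_orthogonal
  have h₁ := hK _ (K.starProjection_apply_mem v) _ (hmem w)
  have h₂ := hK _ (K.starProjection_apply_mem w) _ (hmem v)
  rw [hA] at h₂
  simp only [map_sub, sub_apply] at h₁ h₂
  simp only [reflection_apply, map_sub, two_smul, map_add, sub_apply, add_apply]
  linarith

lemma exists_apply_eq_apply_of_isCoercive [CompleteSpace E] {A X : ContBilinForm E} {x : E}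
    (hx : x ≠ 0) (hA : IsPsd A) (hcoercive : IsCoercive (A + tensorSquare x))
    (hAx : ∀ v, A x v = 0) (hX : ∀ v w, X v w = X w v) (hXx : ∀ v, X x v = 0) :
    ∃ W : E →L[ℝ] E, (∀ v w, X v w = A v (W w)) ∧ ∀ w, ⟪x, W w⟫ = 0 := by
  set T := hcoercive.continuousLinearEquivOfBilin
  set S := InnerProductSpace.continuousLinearMapOfBilin X
  have hW : ∀ v w, A v (T.symm (S w)) + ⟪x, T.symm (S w)⟫ * ⟪x, v⟫ = X v w := fun v w => by
    have h := hcoercive.continuousLinearEquivOfBilin_apply (T.symm (S w)) v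
    rw [T.apply_symm_apply, InnerProductSpace.continuousLinearMapOfBilin_apply] at h
    simpa only [add_apply, tensorSquare_apply, hA.symm v, hX v] using h.symm
  have hperp : ∀ w, ⟪x, T.symm (S w)⟫ = 0 := fun w => by
    have h := hW x w
    rw [hAx, hXx, zero_add] at h
    exact (mul_eq_zero.1 h).resolve_right (inner_self_ne_zero.2 hx)
  refine ⟨(T.symm : E →L[ℝ] E).comp S, fun v w => ?_, hperp⟩
  rw [← hW v w, hperp, zero_mul, add_zero]
  rfl

/-- `l` is a positive lower bound for the form `A` on `xᗮ`, attained as an eigenvalue with unit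
eigenvector `e`, where `x` spans the radial null direction of `A`. -/
structure IsLeastEigenpair (A : ContBilinForm E) (x e : E) (l : ℝ) : Prop where
  psd : IsPsd A
  norm_eq_one : ‖e‖ = 1
  ne_zero : x ≠ 0
  inner_eq_zero : ⟪e, x⟫ = 0
  pos : 0 < l
  radial : ∀ v, A x v = 0
  eigen : ∀ v, A e v = l * ⟪e, v⟫
  coercive : ∀ v, l * ‖v‖ ^ 2 ≤ A v v + ⟪x, v⟫ ^ 2

lemma IsLeastEigenpair.eq_zero_of_apply_self_eq_zero {A : ContBilinForm E} {x e d : E} {l : ℝ}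
    (hA : IsLeastEigenpair A x e l) (hd : A d d = 0) (hxd : ⟪x, d⟫ = 0) : d = 0 := by
  have h := hA.coercive d
  rw [hd, hxd, zero_pow two_ne_zero, add_zero] at h
  exact norm_eq_zero.1 <| pow_eq_zero_iff two_ne_zero |>.1 <|
    le_antisymm (nonpos_of_mul_nonpos_right h hA.pos) (sq_nonneg _)

lemma mem_orthogonal_span_pair {e x v : E} :
    v ∈ (span ℝ {e, x})ᗮ ↔ ⟪e, v⟫ = 0 ∧ ⟪x, v⟫ = 0 := by
  rw [span_insert, ← inf_orthogonal, mem_inf, mem_orthogonal_singleton_iff_inner_right,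
    mem_orthogonal_singleton_iff_inner_right]

lemma starProjection_span_pair {e x : E} [(span ℝ {e, x}).HasOrthogonalProjection]
    (he : ‖e‖ = 1) (hx : x ≠ 0) (hex : ⟪e, x⟫ = 0) (v : E) :
    (span ℝ {e, x}).starProjection v = ⟪e, v⟫ • e + (⟪x, v⟫ / ‖x‖ ^ 2) • x := by
  refine eq_starProjection_of_mem_orthogonal (mem_span_pair.2 ⟨_, _, rfl⟩) ?_
  have : ‖x‖ ^ 2 ≠ 0 := pow_ne_zero 2 (norm_ne_zero_iff.2 hx)
  have hxe : ⟪x, e⟫ = 0 := by rw [real_inner_comm, hex]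
  rw [mem_orthogonal_span_pair]
  simp only [inner_sub_right, inner_add_right, inner_smul_right, real_inner_self_eq_norm_sq, he,
    hex, hxe]
  constructor
  · ring
  · field_simp
    ring

/-- The two-jets, at a point `x`, of a smooth 1-homogeneous function `G` with `A = D²G`,
`X = D³G(·, ·, e)`, `Y = D⁴G(·, ·, e, e)`, and of a function with value `l`, differential `g` and
Hessian `h` which touches the least eigenvalue of `D²G` from below in the direction `e`. -/
structure IsTouchingJet (A X Y h : ContBilinForm E) (g : E →L[ℝ] ℝ) (x e : E) (l : ℝ) : Prop
    extends IsLeastEigenpair A x e l where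
  third_symm : ∀ v w, X v w = X w v
  fourth_symm : ∀ v w, Y v w = Y w v
  hess_symm : ∀ v w, h v w = h w v
  third_radial : ∀ v, X x v = -(l * ⟪e, v⟫)
  third_eigen : ∀ v, X e v = g v
  second_variation : ∀ w v, 0 ≤ Y w w + 4 * X w v + 2 * A v v + 2 * (⟪w, e⟫ + ⟪x, v⟫) ^ 2 -
    h w w - 4 * g w * ⟪e, v⟫ - 2 * l * ‖v‖ ^ 2

namespace IsTouchingJet

variable {A X Y h : ContBilinForm E} {g : E →L[ℝ] ℝ} {x e : E} {l : ℝ}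

lemma four_mul_apply_le (J : IsTouchingJet A X Y h g x e l) {d : E} (hed : ⟪e, d⟫ = 0)
    (hxd : ⟪x, d⟫ = 0) (w : E) :
    4 * X w d ≤ Y w w - h w w + 4 * l / ‖x‖ ^ 2 * ⟪e, w⟫ ^ 2 + 2 * A d d := by
  have hx : ‖x‖ ^ 2 ≠ 0 := pow_ne_zero 2 (norm_ne_zero_iff.2 J.ne_zero)
  set v := -d - (⟪w, e⟫ / ‖x‖ ^ 2) • x with hv
  have hxv : ⟪x, v⟫ = -⟪w, e⟫ := by
    rw [hv, inner_sub_right, inner_neg_right, hxd, inner_smul_right, real_inner_self_eq_norm_sq,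
      div_mul_cancel₀ _ hx, neg_zero, zero_sub]
  have hev : ⟪e, v⟫ = 0 := by
    rw [hv, inner_sub_right, inner_neg_right, hed, inner_smul_right, J.inner_eq_zero]
    ring
  have hXv : X w v = -X w d + l / ‖x‖ ^ 2 * ⟪e, w⟫ ^ 2 := by
    rw [hv, map_sub, map_neg, map_smul, J.third_symm w x, J.third_radial, smul_eq_mul,
      real_inner_comm]
    ring
  have hAv : A v v = A d d := by
    simp only [hv, map_sub, map_neg, map_smul, sub_apply, neg_apply, smul_apply, J.radial,
      J.psd.symm _ x, smul_zero, neg_zero, sub_zero, neg_neg]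
  have hvar := J.second_variation w v
  rw [hxv, hev, hXv, hAv] at hvar
  have hnorm : 0 ≤ l * ‖v‖ ^ 2 := mul_nonneg J.pos.le (sq_nonneg _)
  have hcoef : 4 * l / ‖x‖ ^ 2 * ⟪e, w⟫ ^ 2 = 4 * (l / ‖x‖ ^ 2 * ⟪e, w⟫ ^ 2) := by ring
  linarith

variable [FiniteDimensional ℝ E]

lemma norm_sub_bilinearComp_le (J : IsTouchingJet A X Y h g x e l) :
    ‖X - X.bilinearComp (span ℝ {e, x})ᗮ.starProjection (span ℝ {e, x})ᗮ.starProjection‖ ≤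
      2 * (‖g‖ + l / ‖x‖) := by
  set P := (span ℝ {e, x})ᗮ.starProjection
  set Q := (span ℝ {e, x}).starProjection
  have hx : 0 < ‖x‖ := norm_pos_iff.2 J.ne_zero
  have hl := J.pos.le
  have hP : ∀ v, P v = v - Q v := fun _ => starProjection_orthogonal_val _
  have hXQ : ∀ v w, |X (Q v) w| ≤ (‖g‖ + l / ‖x‖) * ‖v‖ * ‖w‖ := fun v w => by
    have he : ∀ u, |⟪e, u⟫| ≤ ‖u‖ := fun u => by
      simpa only [J.norm_eq_one, one_mul] using abs_real_inner_le_norm e u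
    calc |X (Q v) w| = |⟪e, v⟫ * g w + -(⟪x, v⟫ / ‖x‖ ^ 2 * (l * ⟪e, w⟫))| := by
          rw [starProjection_span_pair J.norm_eq_one J.ne_zero J.inner_eq_zero, map_add, map_smul,
            map_smul, add_apply, smul_apply, smul_apply, J.third_eigen, J.third_radial, smul_eq_mul,
            smul_eq_mul, mul_neg]
      _ ≤ |⟪e, v⟫| * |g w| + |⟪x, v⟫| / ‖x‖ ^ 2 * (l * |⟪e, w⟫|) := by
          refine (abs_add_le _ _).trans_eq ?_
          rw [abs_mul, abs_neg, abs_mul, abs_mul, abs_div, abs_of_nonneg hl, abs_pow, abs_norm]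
      _ ≤ ‖v‖ * (‖g‖ * ‖w‖) + ‖x‖ * ‖v‖ / ‖x‖ ^ 2 * (l * ‖w‖) := by
          gcongr
          exacts [he v, g.le_opNorm w, abs_real_inner_le_norm x v, he w]
      _ = (‖g‖ + l / ‖x‖) * ‖v‖ * ‖w‖ := by field_simp
  refine ContinuousLinearMap.opNorm_le_bound₂ _ (by positivity) fun v w => ?_
  have hPv : ‖P v‖ ≤ ‖v‖ := norm_starProjection_apply_le _ v
  calc ‖X v w - X (P v) (P w)‖ = |X (Q v) w + X (Q w) (P v)| := by
        rw [J.third_symm (Q w), hP, hP]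
        simp only [map_sub, sub_apply, Real.norm_eq_abs]
        congr 1
        ring
    _ ≤ (‖g‖ + l / ‖x‖) * ‖v‖ * ‖w‖ + (‖g‖ + l / ‖x‖) * ‖w‖ * ‖P v‖ :=
        (abs_add_le _ _).trans (add_le_add (hXQ _ _) (hXQ _ _))
    _ ≤ (‖g‖ + l / ‖x‖) * ‖v‖ * ‖w‖ + (‖g‖ + l / ‖x‖) * ‖w‖ * ‖v‖ := by gcongr
    _ = 2 * (‖g‖ + l / ‖x‖) * ‖v‖ * ‖w‖ := by ring

lemma exists_bilinearComp_eq (J : IsTouchingJet A X Y h g x e l) :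
    ∃ W : E →L[ℝ] E, (∀ v w, X.bilinearComp (span ℝ {e, x})ᗮ.starProjection
        (span ℝ {e, x})ᗮ.starProjection v w = A v (W w)) ∧
      ∀ w, ⟪e, W w⟫ = 0 ∧ ⟪x, W w⟫ = 0 := by
  have hnull : ∀ d ∈ ({e, x} : Set E), (span ℝ {e, x})ᗮ.starProjection d = 0 := fun d hd =>
    (starProjection_apply_eq_zero_iff _).2 (le_orthogonal_orthogonal _ (subset_span hd))
  have hcoercive : IsCoercive (A + tensorSquare x) := ⟨l, J.pos, fun v => by
    have h := J.coercive v
    simp only [add_apply, tensorSquare_apply]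
    linarith⟩
  have : CompleteSpace E := FiniteDimensional.complete ℝ E
  obtain ⟨W, hW, hxW⟩ := exists_apply_eq_apply_of_isCoercive J.ne_zero J.psd hcoercive J.radial
    (X := X.bilinearComp (span ℝ {e, x})ᗮ.starProjection (span ℝ {e, x})ᗮ.starProjection)
    (fun v w => J.third_symm _ _) (fun v => by
      rw [ContinuousLinearMap.bilinearComp_apply, hnull x (by simp), map_zero, zero_apply])
  refine ⟨W, hW, fun w => ⟨?_, hxW w⟩⟩
  have h := hW e w
  rw [ContinuousLinearMap.bilinearComp_apply, hnull e (by simp), map_zero, zero_apply,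
    J.eigen] at h
  exact (mul_eq_zero.1 h.symm).resolve_left J.pos.ne'

lemma bilinearComp_reflection_eq_self (J : IsTouchingJet A X Y h g x e l) :
    A.bilinearComp ((span ℝ {e, x})ᗮ.reflection : E →L[ℝ] E)
      ((span ℝ {e, x})ᗮ.reflection : E →L[ℝ] E) = A := by
  refine _root_.bilinearComp_reflection_eq_self J.psd.symm fun v hv w hw => ?_
  rw [orthogonal_orthogonal] at hw
  obtain ⟨a, c, rfl⟩ := mem_span_pair.1 hw
  rw [J.psd.symm, map_add, map_smul, map_smul, add_apply, smul_apply, smul_apply, J.eigen,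
    J.radial, (mem_orthogonal_span_pair.1 hv).1, mul_zero, smul_zero, smul_zero, add_zero]

/-- The second variation, corrected by the quadratic form of `W`, is positive semidefinite only
after averaging over the reflection in `{e, x}ᗮ`, which is harmless for `σ_k`. -/
lemma isPsd_add_reflection (J : IsTouchingJet A X Y h g x e l) {W : E →L[ℝ] E}
    (hW : ∀ v w, X.bilinearComp (span ℝ {e, x})ᗮ.starProjection
      (span ℝ {e, x})ᗮ.starProjection v w = A v (W w))
    (hperp : ∀ w, ⟪e, W w⟫ = 0 ∧ ⟪x, W w⟫ = 0) {Z : ContBilinForm E}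
    (hZ : Z = Y - h + (4 * l / ‖x‖ ^ 2) • tensorSquare e - (2 : ℝ) • A.bilinearComp W W) :
    IsPsd (Z + Z.bilinearComp ((span ℝ {e, x})ᗮ.reflection : E →L[ℝ] E)
      ((span ℝ {e, x})ᗮ.reflection : E →L[ℝ] E)) := by
  set K := (span ℝ {e, x})ᗮ
  set P := K.starProjection
  have hZsymm : ∀ v w, Z v w = Z w v := fun v w => by
    simp only [hZ, sub_apply, add_apply, smul_apply, ContinuousLinearMap.bilinearComp_apply,
      tensorSquare_apply, J.fourth_symm v, J.hess_symm v, J.psd.symm (W v), mul_comm ⟪e, v⟫]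
  have hWK : ∀ w, P (W w) = W w := fun w =>
    starProjection_eq_self_iff.2 (mem_orthogonal_span_pair.2 (hperp w))
  have hPR : ∀ w, P (K.reflection w) = P w := fun w => by
    rw [reflection_apply, map_sub, two_smul, map_add, starProjection_eq_self_iff.2
      (starProjection_apply_mem K w), add_sub_cancel_right]
  have hWR : ∀ w, W (K.reflection w) = W w := fun w => by
    refine sub_eq_zero.1 (J.eq_zero_of_apply_self_eq_zero ?_ ?_)
    · rw [map_sub, ← hW, ← hW, ContinuousLinearMap.bilinearComp_apply,
        ContinuousLinearMap.bilinearComp_apply, hPR, sub_self]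
    · rw [inner_sub_right, (hperp _).2, (hperp _).2, sub_self]
  have hlower : ∀ w, 4 * X w (W w) - 4 * A (W w) (W w) ≤ Z w w := fun w => by
    have h := J.four_mul_apply_le (hperp w).1 (hperp w).2 w
    simp only [hZ, sub_apply, add_apply, smul_apply, ContinuousLinearMap.bilinearComp_apply,
      tensorSquare_apply, smul_eq_mul, ← sq]
    linarith
  have hsum : ∀ w, X w (W w) + X (K.reflection w) (W w) = 2 * A (W w) (W w) := fun w => by
    rw [← hW, ContinuousLinearMap.bilinearComp_apply, hWK, J.third_symm (W w), reflection_apply,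
      map_sub, two_smul, map_add, sub_apply, add_apply]
    ring
  refine ⟨fun v w => congr_arg₂ (· + ·) (hZsymm _ _) (hZsymm _ _), fun w => ?_⟩
  have hreflected := hlower (K.reflection w)
  rw [hWR] at hreflected
  calc 0 ≤ Z w w + Z (K.reflection w) (K.reflection w) := by linarith [hlower w, hsum w]
    _ = _ := rfl

variable {ι : Type*} [Fintype ι] [DecidableEq ι] (b : OrthonormalBasis ι ℝ E) {k : ℕ}

/-- `X'` is the part of the third derivative orthogonal to `e` and `x`; it is controlled by
the concavity of `σ_k ^ (-1/k)` along quadratic paths together with the second variation. -/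
lemma exists_core_inequality (hk : k ≤ Fintype.card ι) (J : IsTouchingJet A X Y h g x e l) :
    ∃ X' : ContBilinForm E, ‖X'‖ ≤ ‖X‖ ∧ ‖X - X'‖ ≤ 2 * (‖g‖ + l / ‖x‖) ∧
      sigma b k A * fderiv ℝ (sigma b k) A h +
          (1 + 1 / (k : ℝ)) * (fderiv ℝ (sigma b k) A X') ^ 2 ≤
        sigma b k A * (fderiv ℝ (sigma b k) A Y + hessian (sigma b k) A X' X') +
          4 * l / ‖x‖ ^ 2 * (sigma b k A * fderiv ℝ (sigma b k) A (tensorSquare e)) := by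
  obtain ⟨W, hW, hperp⟩ := J.exists_bilinearComp_eq
  have hpsd := J.isPsd_add_reflection hW hperp rfl
  have hinv := fderiv_sigma_bilinearComp_isometry b hk (A := A)
    (R := ((span ℝ {e, x})ᗮ.reflection : E →L[ℝ] E)) (LinearIsometryEquiv.inner_map_map _)
    J.bilinearComp_reflection_eq_self
  have hZ := mul_nonneg (sigma_nonneg b k J.psd) (fderiv_sigma_nonneg b (k := k) J.psd hpsd)
  rw [map_add, hinv] at hZ
  simp only [map_sub, map_add, map_smul, smul_eq_mul] at hZ
  have hsecond := sigma_second_order b (k := k) J.psd hW fun v w => J.third_symm _ _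
  refine ⟨_, ContinuousLinearMap.opNorm_le_bound₂ _ (norm_nonneg X) fun v w => ?_,
    J.norm_sub_bilinearComp_le, by linarith⟩
  calc ‖X ((span ℝ {e, x})ᗮ.starProjection v) ((span ℝ {e, x})ᗮ.starProjection w)‖
      ≤ ‖X‖ * ‖(span ℝ {e, x})ᗮ.starProjection v‖ * ‖(span ℝ {e, x})ᗮ.starProjection w‖ :=
        X.le_opNorm₂ _ _
    _ ≤ ‖X‖ * ‖v‖ * ‖w‖ := by gcongr <;> exact norm_starProjection_apply_le _ _

/-- The hypothesis `hpde` is the equation `σ_k(D²G) = Ψ⁻ᵏ`, differentiated twice along `e`. -/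
lemma sigma_mul_fderiv_sigma_le (hk : 1 ≤ k) (hk' : k ≤ Fintype.card ι)
    (J : IsTouchingJet A X Y h g x e l)
    (hpde : sigma b k A * (hessian (sigma b k) A X X + fderiv ℝ (sigma b k) A Y) ≤
      (1 + 1 / (k : ℝ)) * (fderiv ℝ (sigma b k) A X) ^ 2)
    {M m : ℝ} (hm : 0 < m) (hmx : m ≤ ‖x‖) (hM₁ : ‖fderiv ℝ (sigma b k) A‖ ≤ M)
    (hM₂ : ‖hessian (sigma b k) A‖ ≤ M) (hMX : ‖X‖ ≤ M) (hMσ : sigma b k A ≤ M) :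
    sigma b k A * fderiv ℝ (sigma b k) A h ≤
      12 * M ^ 3 * (‖g‖ + l / m) + 4 * l / m ^ 2 * M ^ 2 := by
  obtain ⟨X', hX', hdiff, hcore⟩ := J.exists_core_inequality b hk'
  have hM : 0 ≤ M := (norm_nonneg _).trans hMX
  have hσ := sigma_nonneg b k J.psd
  have hl := J.pos.le
  set δ := 2 * (‖g‖ + l / m)
  have hδ : ‖X - X'‖ ≤ δ := hdiff.trans (by simp only [δ]; gcongr)
  have : 0 ≤ δ := (norm_nonneg _).trans hδ
  have hfirst : (1 + 1 / (k : ℝ)) *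
      (fderiv ℝ (sigma b k) A X ^ 2 - fderiv ℝ (sigma b k) A X' ^ 2) ≤ 2 * (2 * M ^ 3 * δ) := by
    have hk1 : 1 / (k : ℝ) ≤ 1 := div_le_one_of_le₀ (by exact_mod_cast hk) (Nat.cast_nonneg k)
    calc _ ≤ (1 + 1 / (k : ℝ)) * (2 * M ^ 3 * δ) := by
          gcongr
          exact sq_apply_sub_sq_apply_le hM₁ hMX (hX'.trans hMX) hδ
      _ ≤ 2 * (2 * M ^ 3 * δ) := by gcongr; linarith
  have hsecond : sigma b k A * (hessian (sigma b k) A X' X' - hessian (sigma b k) A X X) ≤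
      M * (2 * M ^ 2 * δ) := by
    calc _ ≤ sigma b k A * (2 * M ^ 2 * δ) := by
          gcongr
          exact apply_self_sub_apply_self_le hM₂ hMX (hX'.trans hMX) hδ
      _ ≤ M * (2 * M ^ 2 * δ) := by gcongr
  have htensor : 4 * l / ‖x‖ ^ 2 * (sigma b k A * fderiv ℝ (sigma b k) A (tensorSquare e)) ≤
      4 * l / m ^ 2 * M ^ 2 := by
    have hD : fderiv ℝ (sigma b k) A (tensorSquare e) ≤ M * 1 :=
      (le_abs_self _).trans (ContinuousLinearMap.le_of_opNorm_le_of_le _ hM₁ (by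
        rw [norm_tensorSquare, J.norm_eq_one, one_pow]))
    calc _ ≤ 4 * l / ‖x‖ ^ 2 * (sigma b k A * (M * 1)) := by gcongr
      _ ≤ 4 * l / ‖x‖ ^ 2 * (M * (M * 1)) := by gcongr
      _ ≤ 4 * l / m ^ 2 * (M * (M * 1)) := by gcongr
      _ = 4 * l / m ^ 2 * M ^ 2 := by ring
  have hδ_eq : 12 * M ^ 3 * (‖g‖ + l / m) = 6 * M ^ 3 * δ := by ring
  linarith [hδ_eq]

end IsTouchingJet

end CoreInequality

section HigherDerivatives

open Filter Topology
open scoped ContDiff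

variable {E : Type*} [NormedAddCommGroup E] [NormedSpace ℝ E] {F : Type*} [NormedAddCommGroup F]
  [NormedSpace ℝ F] {G : E → ℝ} {x : E}

lemma contDiffAt_infty_fderiv {f : E → F} (h : ContDiffAt ℝ ∞ f x) :
    ContDiffAt ℝ ∞ (fderiv ℝ f) x :=
  h.fderiv_right (m := ∞) (by norm_cast)

lemma eventually_contDiffAt_of_infty {f : E → F} (h : ContDiffAt ℝ ∞ f x) (n : ℕ) :
    ∀ᶠ y in 𝓝 x, ContDiffAt ℝ n f y :=
  (h.of_le (m := n) (by exact_mod_cast le_top)).eventually (by simp)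

lemma differentiableAt_hessian {f : E → F} (h : ContDiffAt ℝ ∞ f x) :
    DifferentiableAt ℝ (hessian f) x :=
  (contDiffAt_infty_fderiv (contDiffAt_infty_fderiv h)).differentiableAt (by simp)

lemma hessian_symm {f : E → F} (h : ContDiffAt ℝ 2 f x) (v w : E) :
    hessian f x v w = hessian f x w v :=
  (h.isSymmSndFDerivAt (by simp)) v w

lemma hessian_symm_of_infty {f : E → F} (h : ContDiffAt ℝ ∞ f x) (v w : E) :
    hessian f x v w = hessian f x w v :=
  hessian_symm (eventually_contDiffAt_of_infty h 2).self_of_nhds v w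

lemma fderiv_apply_apply {f : E → E →L[ℝ] F} (h : DifferentiableAt ℝ f x) (u v : E) :
    fderiv ℝ (fun y => f y v) x u = fderiv ℝ f x u v := by
  rw [(h.hasFDerivAt.clm_apply (hasFDerivAt_const v x)).fderiv]
  simp

lemma fderiv_symm_of_eventually {f : E → E →L[ℝ] E →L[ℝ] F} (h : DifferentiableAt ℝ f x)
    (hs : ∀ᶠ y in 𝓝 x, ∀ v w, f y v w = f y w v) (u v w : E) :
    fderiv ℝ f x u v w = fderiv ℝ f x u w v := by
  have hd : ∀ v w, fderiv ℝ (fun y => f y v w) x u = fderiv ℝ f x u v w := fun v w => by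
    have hv : DifferentiableAt ℝ (fun y => f y v) x := h.clm_apply (differentiableAt_const v)
    rw [fderiv_apply_apply hv, fderiv_apply_apply h]
  have hswap : (fun y => f y v w) =ᶠ[𝓝 x] fun y => f y w v := hs.mono fun y hy => hy v w
  rw [← hd, ← hd, hswap.fderiv_eq]

lemma fderiv_hessian_symm {f : E → F} (h : ContDiffAt ℝ 3 f x) (u v w : E) :
    fderiv ℝ (hessian f) x u v w = fderiv ℝ (hessian f) x u w v :=
  fderiv_symm_of_eventually
    (((h.fderiv_right (m := 2) (by norm_num)).fderiv_right (m := 1)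
      (by norm_num)).differentiableAt (by norm_num))
    ((h.eventually (by simp)).mono fun _ hy => hessian_symm (hy.of_le (by norm_num))) u v w

lemma fderiv_hessian_symm_of_infty {f : E → F} (h : ContDiffAt ℝ ∞ f x) (u v w : E) :
    fderiv ℝ (hessian f) x u v w = fderiv ℝ (hessian f) x u w v :=
  fderiv_hessian_symm (eventually_contDiffAt_of_infty h 3).self_of_nhds u v w

lemma fderiv_hessian_symm_left {f : E → F} (h : ContDiffAt ℝ ∞ f x) (u v w : E) :
    fderiv ℝ (hessian f) x u v w = fderiv ℝ (hessian f) x v u w :=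
  DFunLike.congr_fun (hessian_symm_of_infty (contDiffAt_infty_fderiv h) u v) w

lemma hessian_hessian_symm_right {f : E → F} (h : ContDiffAt ℝ ∞ f x) (a c v w : E) :
    hessian (hessian f) x a c v w = hessian (hessian f) x a c w v := by
  have h3 := (contDiffAt_infty_fderiv (contDiffAt_infty_fderiv
    (contDiffAt_infty_fderiv h))).differentiableAt (by simp)
  have hsymm := fderiv_symm_of_eventually (h3.clm_apply (differentiableAt_const c))
    ((eventually_contDiffAt_of_infty h 3).mono fun y hy => fderiv_hessian_symm hy c) a v w
  rwa [fderiv_apply_apply h3] at hsymm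

lemma hessian_hessian_comm {f : E → F} (h : ContDiffAt ℝ ∞ f x) (w e : E) :
    hessian (hessian f) x w w e e = hessian (hessian f) x e e w w := by
  have h2 := contDiffAt_infty_fderiv (contDiffAt_infty_fderiv h)
  have h12 : ∀ a c, hessian (hessian f) x a c = hessian (hessian f) x c a :=
    hessian_symm_of_infty h2
  have h23 : ∀ a c d, hessian (hessian f) x a c d = hessian (hessian f) x a d c :=
    fderiv_hessian_symm_of_infty (contDiffAt_infty_fderiv h)
  rw [h23, h12, hessian_hessian_symm_right h, h23]

lemma hasDerivAt_line (x w : E) (t : ℝ) : HasDerivAt (fun t : ℝ => x + t • w) w t := by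
  simpa using ((hasDerivAt_id t).smul_const w).const_add x

lemma hasDerivAt_comp_line_second {f : E → F} (h : ContDiffAt ℝ 2 f x) (w : E) :
    (∀ᶠ t : ℝ in 𝓝 0, HasDerivAt (fun t : ℝ => f (x + t • w)) (fderiv ℝ f (x + t • w) w) t) ∧
      HasDerivAt (fun t : ℝ => fderiv ℝ f (x + t • w) w) (hessian f x w w) 0 := by
  obtain ⟨h₁, h₂⟩ := hasDerivAt_comp_second (c := fun t : ℝ => x + t • w) (by simpa using h)
    (Eventually.of_forall fun t => hasDerivAt_line x w t) (hasDerivAt_const (0 : ℝ) w)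
  refine ⟨h₁, h₂.congr_deriv ?_⟩
  rw [zero_smul, add_zero, map_zero, add_zero]

end HigherDerivatives

section Solutions

open Filter Topology
open scoped ContDiff

variable {S p : ℝ → ℝ} {k : ℕ}

lemma deriv_mul_add_eq_zero_of_mul_pow_eq_one {S' p' t : ℝ} (hk : 1 ≤ k) (hS : HasDerivAt S S' t)
    (hp : HasDerivAt p p' t) (hpos : p t ≠ 0) (heq : ∀ᶠ s in 𝓝 t, S s * p s ^ k = 1) :
    S' * p t + k * (S t * p') = 0 := by
  have h := (hS.mul (hp.pow k)).unique ((hasDerivAt_const t (1 : ℝ)).congr_of_eventuallyEq heq)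
  have hpow : p t ^ k = p t ^ (k - 1) * p t := by rw [← pow_succ, Nat.sub_add_cancel hk]
  rw [Pi.pow_apply, hpow] at h
  refine (mul_eq_zero.1 ?_).resolve_left (pow_ne_zero (k - 1) hpos)
  linarith

/-- If `S = p⁻ᵏ` with `p` convex at `0`, then `S ^ (-1 / k)` is convex at `0`. -/
lemma mul_second_deriv_le_of_mul_pow_eq_one {S' p' : ℝ → ℝ} {S₂ p₂ : ℝ} (hk : 1 ≤ k)
    (hS : ∀ᶠ t in 𝓝 0, HasDerivAt S (S' t) t) (hS' : HasDerivAt S' S₂ 0)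
    (hp : ∀ᶠ t in 𝓝 0, HasDerivAt p (p' t) t) (hp' : HasDerivAt p' p₂ 0) (hpos : 0 < p 0)
    (heq : ∀ᶠ t in 𝓝 0, S t * p t ^ k = 1) (hp₂ : 0 ≤ p₂) :
    S 0 * S₂ ≤ (1 + 1 / (k : ℝ)) * S' 0 ^ 2 := by
  have hS0 := hS.self_of_nhds
  have hp0 := hp.self_of_nhds
  have hfirst : ∀ᶠ t in 𝓝 0, S' t * p t + k * (S t * p' t) = 0 := by
    filter_upwards [hS, hp, hp0.continuousAt.eventually_ne hpos.ne', heq.eventually_nhds]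
      with t hSt hpt hne heqt using deriv_mul_add_eq_zero_of_mul_pow_eq_one hk hSt hpt hne heqt
  have hsecond := ((hS'.mul hp0).add ((hS0.mul hp').const_mul (k : ℝ))).unique
    ((hasDerivAt_const (0 : ℝ) (0 : ℝ)).congr_of_eventuallyEq hfirst)
  have hk0 : (0 : ℝ) < k := by exact_mod_cast hk
  have hfirst0 : k * (S 0 * p' 0) = -(S' 0 * p 0) := by linarith [hfirst.self_of_nhds]
  have hmixed : k * S 0 * (S' 0 * p' 0) = -(S' 0 ^ 2 * p 0) := by
    linear_combination S' 0 * hfirst0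
  refine le_of_mul_le_mul_left ?_ (mul_pos hpos hk0)
  calc p 0 * k * (S 0 * S₂) = p 0 * (k + 1) * S' 0 ^ 2 - (k * S 0) ^ 2 * p₂ := by
        linear_combination k * S 0 * hsecond - (1 + k) * hmixed
    _ ≤ p 0 * (k + 1) * S' 0 ^ 2 := sub_le_self _ (by positivity)
    _ = p 0 * k * ((1 + 1 / (k : ℝ)) * S' 0 ^ 2) := by field_simp

variable {E : Type*} [NormedAddCommGroup E] [InnerProductSpace ℝ E]
  {ι : Type*} [Fintype ι] [DecidableEq ι]

/-- `G` is a convex solution of `σ_k(D²G) = Ψ⁻ᵏ` on the open set `Ω`, with `Ψ` positive and convex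
and with `D²G` radially degenerate, as for 1-homogeneous `G`. -/
structure IsConvexSolution (b : OrthonormalBasis ι ℝ E) (k : ℕ) (G Ψ : E → ℝ) (Ω : Set E) :
    Prop where
  isOpen : IsOpen Ω
  smooth : ∀ x ∈ Ω, ContDiffAt ℝ ∞ G x
  smooth_rhs : ∀ x ∈ Ω, ContDiffAt ℝ ∞ Ψ x
  euler : ∀ x ∈ Ω, ∀ v, hessian G x x v = 0
  nonneg : ∀ x ∈ Ω, ∀ v, 0 ≤ hessian G x v v
  pos : ∀ x ∈ Ω, 0 < Ψ x
  convex_rhs : ∀ x ∈ Ω, ∀ v, 0 ≤ hessian Ψ x v v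
  eqn : ∀ x ∈ Ω, sigma b k (hessian G x) * Ψ x ^ k = 1

namespace IsConvexSolution

variable {b : OrthonormalBasis ι ℝ E} {G Ψ : E → ℝ} {Ω : Set E} {x : E}

lemma isPsd (h : IsConvexSolution b k G Ψ Ω) (hx : x ∈ Ω) : IsPsd (hessian G x) :=
  ⟨hessian_symm_of_infty (h.smooth x hx), h.nonneg x hx⟩

lemma fderiv_hessian_apply_self (h : IsConvexSolution b k G Ψ Ω) (hx : x ∈ Ω) (w v : E) :
    fderiv ℝ (hessian G) x w x v = -hessian G x w v := by
  have hd := differentiableAt_hessian (h.smooth x hx)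
  have heuler : (fun y => hessian G y (id y) v) =ᶠ[𝓝 x] fun _ => (0 : ℝ) :=
    (h.isOpen.eventually_mem hx).mono fun y hy => h.euler y hy v
  have hderiv := DFunLike.congr_fun
    (((hd.hasFDerivAt.clm_apply (hasFDerivAt_id x)).clm_apply (hasFDerivAt_const v x)).unique
      ((hasFDerivAt_const (0 : ℝ) x).congr_of_eventuallyEq heuler)) w
  refine eq_neg_of_add_eq_zero_right ?_
  simpa using hderiv

lemma sigma_mul_second_order_le (h : IsConvexSolution b k G Ψ Ω) (hk : 1 ≤ k) (hx : x ∈ Ω)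
    (e : E) :
    sigma b k (hessian G x) *
        (hessian (sigma b k) (hessian G x) (fderiv ℝ (hessian G) x e) (fderiv ℝ (hessian G) x e) +
          fderiv ℝ (sigma b k) (hessian G x) (hessian (hessian G) x e e)) ≤
      (1 + 1 / (k : ℝ)) *
        (fderiv ℝ (sigma b k) (hessian G x) (fderiv ℝ (hessian G) x e)) ^ 2 := by
  have hline : ContinuousAt (fun t : ℝ => x + t • e) 0 := by fun_prop
  have hmem : ∀ᶠ t : ℝ in 𝓝 0, x + t • e ∈ Ω :=
    hline.eventually_mem (h.isOpen.mem_nhds (by simpa using hx))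
  obtain ⟨hA, hA'⟩ := hasDerivAt_comp_line_second
    (eventually_contDiffAt_of_infty
      (contDiffAt_infty_fderiv (contDiffAt_infty_fderiv (h.smooth x hx))) 2).self_of_nhds e
  obtain ⟨hS, hS'⟩ := hasDerivAt_comp_second (contDiff_sigma b (k := k)).contDiffAt hA hA'
  obtain ⟨hp, hp'⟩ := hasDerivAt_comp_line_second
    (eventually_contDiffAt_of_infty (h.smooth_rhs x hx) 2).self_of_nhds e
  simpa using mul_second_deriv_le_of_mul_pow_eq_one hk hS hS' hp hp' (by simpa using h.pos x hx)
    (hmem.mono fun t ht => h.eqn _ ht) (h.convex_rhs x hx e)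

end IsConvexSolution

end Solutions

section Touching

open Filter Topology
open scoped ContDiff

lemma first_second_variation_of_isLocalMin {E : Type*} [NormedAddCommGroup E] [NormedSpace ℝ E]
    {B B' : ℝ → ContBilinForm E} {B₂ : ContBilinForm E} {e v : E}
    (hB : ∀ᶠ t in 𝓝 0, HasDerivAt B (B' t) t) (hB' : HasDerivAt B' B₂ 0)
    (hs : B 0 v e = B 0 e v) (hs' : B' 0 v e = B' 0 e v)
    (hmin : IsLocalMin (fun t : ℝ => B t (e + t • v) (e + t • v)) 0) :
    B' 0 e e + 2 * B 0 e v = 0 ∧ 0 ≤ B₂ e e + 4 * B' 0 e v + 2 * B 0 v v := by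
  have hv := hasDerivAt_line e v
  have hconst := hasDerivAt_const (0 : ℝ) v
  have hB0 := hB.self_of_nhds
  obtain ⟨hfirst, hsecond⟩ := deriv_eq_zero_and_second_deriv_nonneg
    (hB.mono fun t ht => (ht.clm_apply (hv t)).clm_apply (hv t))
    ((((hB'.clm_apply (hv 0)).add (hB0.clm_apply hconst)).clm_apply (hv 0)).add
      ((hB0.clm_apply (hv 0)).clm_apply hconst)) hmin
  simp only [zero_smul, add_zero, add_apply, map_zero, Pi.add_apply, hs, hs'] at hfirst hsecond
  constructor <;> linarith

variable {E : Type*} [NormedAddCommGroup E] [InnerProductSpace ℝ E]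

/-- The inner product as a continuous bilinear form. -/
def innerForm (E : Type*) [NormedAddCommGroup E] [InnerProductSpace ℝ E] : ContBilinForm E :=
  (innerₗ E).mkContinuous₂ 1 fun x y => by simpa using norm_inner_le_norm (𝕜 := ℝ) x y

@[simp] lemma innerForm_apply (v w : E) : innerForm E v w = ⟪v, w⟫ := rfl

lemma norm_innerForm_le : ‖innerForm E‖ ≤ 1 :=
  LinearMap.mkContinuous₂_norm_le (innerₗ E) zero_le_one _

/-- The Hessian of `G` with its radial null direction filled in: for 1-homogeneous `G` it is
positive definite at `x` exactly when `D²G(x)` is positive definite on `xᗮ`. -/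
def augmentedHessian (G : E → ℝ) (x : E) : ContBilinForm E := hessian G x + tensorSquare x

lemma augmentedHessian_apply_self (G : E → ℝ) (x v : E) :
    augmentedHessian G x v v = hessian G x v v + ⟪x, v⟫ ^ 2 := by
  simp only [augmentedHessian, add_apply, tensorSquare_apply, sq]

/-- Twice the symmetric tensor product, the polarization of `tensorSquare`. -/
def symmTensor (x w : E) : ContBilinForm E :=
  (innerSL ℝ x).smulRight (innerSL ℝ w) + (innerSL ℝ w).smulRight (innerSL ℝ x)

@[simp] lemma symmTensor_apply (x w v v' : E) :
    symmTensor x w v v' = ⟪x, v⟫ * ⟪w, v'⟫ + ⟪w, v⟫ * ⟪x, v'⟫ := by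
  simp [symmTensor]

lemma tensorSquare_add_smul (x w : E) (t : ℝ) :
    tensorSquare (x + t • w) = tensorSquare x + (t • symmTensor x w + t ^ 2 • tensorSquare w) := by
  ext v v'
  simp only [tensorSquare_apply, symmTensor_apply, add_apply, smul_apply, inner_add_left,
    real_inner_smul_left, smul_eq_mul]
  ring

lemma hasDerivAt_tensorSquare_line (x w : E) (t : ℝ) :
    HasDerivAt (fun t : ℝ => tensorSquare (x + t • w))
      (symmTensor x w + (2 * t) • tensorSquare w) t := by
  simp only [tensorSquare_add_smul]
  simpa using (((hasDerivAt_id t).smul_const (symmTensor x w)).add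
    ((hasDerivAt_pow 2 t).smul_const (tensorSquare w))).const_add (tensorSquare x)

lemma hasDerivAt_augmentedHessian_line {G : E → ℝ} {x : E} (hG : ContDiffAt ℝ ∞ G x) (w : E) :
    (∀ᶠ t : ℝ in 𝓝 0, HasDerivAt (fun t : ℝ => augmentedHessian G (x + t • w))
      (fderiv ℝ (hessian G) (x + t • w) w + (symmTensor x w + (2 * t) • tensorSquare w)) t) ∧
    HasDerivAt (fun t : ℝ => fderiv ℝ (hessian G) (x + t • w) w +
        (symmTensor x w + (2 * t) • tensorSquare w))
      (hessian (hessian G) x w w + (2 : ℝ) • tensorSquare w) 0 := by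
  obtain ⟨h₁, h₂⟩ := hasDerivAt_comp_line_second (eventually_contDiffAt_of_infty
    (contDiffAt_infty_fderiv (contDiffAt_infty_fderiv hG)) 2).self_of_nhds w
  refine ⟨h₁.mono fun t ht => ht.add (hasDerivAt_tensorSquare_line x w t), h₂.add ?_⟩
  simpa using (((hasDerivAt_id (0 : ℝ)).const_mul 2).smul_const (tensorSquare w)).const_add
    (symmTensor x w)

lemma touching_conditions {G η : E → ℝ} {x e : E} (hG : ContDiffAt ℝ ∞ G x)
    (hη : ContDiffAt ℝ 2 η x) (heq : augmentedHessian G x e e = η x) (he : ‖e‖ = 1)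
    (hmin : ∀ᶠ y in 𝓝 x, ∀ v, η y * ‖v‖ ^ 2 ≤ augmentedHessian G y v v) (w v : E) :
    fderiv ℝ (hessian G) x w e e + 2 * (⟪x, e⟫ * ⟪w, e⟫) - fderiv ℝ η x w +
        2 * (hessian G x e v + ⟪x, e⟫ * ⟪x, v⟫ - η x * ⟪e, v⟫) = 0 ∧
      0 ≤ hessian (hessian G) x w w e e + 2 * ⟪w, e⟫ ^ 2 - hessian η x w w +
        4 * (fderiv ℝ (hessian G) x w e v + (⟪x, e⟫ * ⟪w, v⟫ + ⟪w, e⟫ * ⟪x, v⟫) -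
          fderiv ℝ η x w * ⟪e, v⟫) +
        2 * (hessian G x v v + ⟪x, v⟫ ^ 2 - η x * ‖v‖ ^ 2) := by
  obtain ⟨hA, hA'⟩ := hasDerivAt_augmentedHessian_line hG w
  obtain ⟨hη₁, hη₂⟩ := hasDerivAt_comp_line_second hη w
  have hline : Tendsto (fun t : ℝ => x + t • w) (𝓝 0) (𝓝 x) :=
    Continuous.tendsto' (by fun_prop) _ _ (by simp)
  have hlocal : IsLocalMin (fun t : ℝ => (augmentedHessian G (x + t • w) -
      η (x + t • w) • innerForm E) (e + t • v) (e + t • v)) 0 := by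
    filter_upwards [hline.eventually hmin] with t ht
    simpa only [zero_smul, add_zero, sub_apply, smul_apply, innerForm_apply, smul_eq_mul, heq, he,
      real_inner_self_eq_norm_sq, one_pow, mul_one, sub_self, sub_nonneg] using ht (e + t • v)
  obtain ⟨hfirst, hsecond⟩ := first_second_variation_of_isLocalMin
    ((hA.and hη₁).mono fun t ht => ht.1.sub (ht.2.smul_const (innerForm E)))
    (hA'.sub (hη₂.smul_const (innerForm E)))
    (by simp [augmentedHessian, hessian_symm_of_infty hG v, real_inner_comm, mul_comm])
    (by simp [fderiv_hessian_symm_of_infty hG w v, real_inner_comm, mul_comm, add_comm]) hlocal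
  simp only [augmentedHessian, zero_smul, add_zero, mul_zero, Pi.sub_apply, sub_apply, add_apply,
    smul_apply, symmTensor_apply, tensorSquare_apply, innerForm_apply, real_inner_self_eq_norm_sq,
    he, smul_eq_mul, one_pow, mul_one] at hfirst hsecond
  constructor <;> linarith

variable {ι : Type*} [Fintype ι] [DecidableEq ι] {b : OrthonormalBasis ι ℝ E} {k : ℕ}
  {G Ψ η : E → ℝ} {Ω : Set E} {x e : E}

namespace IsConvexSolution

lemma isLeastEigenpair_of_touching (h : IsConvexSolution b k G Ψ Ω) (hx : x ∈ Ω)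
    (hη : ContDiffAt ℝ 2 η x) (hη₀ : 0 < η x) (hηx : η x < ‖x‖ ^ 2) (he : ‖e‖ = 1)
    (heq : augmentedHessian G x e e = η x)
    (hmin : ∀ᶠ y in 𝓝 x, ∀ v, η y * ‖v‖ ^ 2 ≤ augmentedHessian G y v v) :
    IsLeastEigenpair (hessian G x) x e (η x) := by
  have hA := h.isPsd hx
  have hAx := h.euler x hx
  have heigen : ∀ v, hessian G x e v + ⟪x, e⟫ * ⟪x, v⟫ = η x * ⟪e, v⟫ := fun v => by
    have h₀ := (touching_conditions (h.smooth x hx) hη heq he hmin 0 v).1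
    simp only [map_zero, zero_apply, inner_zero_left] at h₀
    linarith
  have hxe : ⟪x, e⟫ = 0 := by
    have hself := heigen x
    rw [hA.symm, hAx, real_inner_self_eq_norm_sq, real_inner_comm x e] at hself
    have hfactor : ⟪x, e⟫ * (‖x‖ ^ 2 - η x) = 0 := by linarith
    exact (mul_eq_zero.1 hfactor).resolve_right (sub_pos.2 hηx).ne'
  exact
    { psd := hA
      norm_eq_one := he
      ne_zero := by
        rintro rfl
        exact (hη₀.trans hηx).ne' (by simp)
      inner_eq_zero := by rw [real_inner_comm, hxe]
      pos := hη₀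
      radial := hAx
      eigen := fun v => by simpa only [hxe, zero_mul, add_zero] using heigen v
      coercive := fun v => by
        simpa only [augmentedHessian_apply_self] using hmin.self_of_nhds v }

lemma isTouchingJet (h : IsConvexSolution b k G Ψ Ω) (hx : x ∈ Ω)
    (hη : ContDiffAt ℝ 2 η x) (hη₀ : 0 < η x) (hηx : η x < ‖x‖ ^ 2) (he : ‖e‖ = 1)
    (heq : augmentedHessian G x e e = η x)
    (hmin : ∀ᶠ y in 𝓝 x, ∀ v, η y * ‖v‖ ^ 2 ≤ augmentedHessian G y v v) :
    IsTouchingJet (hessian G x) (fderiv ℝ (hessian G) x e) (hessian (hessian G) x e e)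
      (hessian η x) (fderiv ℝ η x) x e (η x) := by
  have hG := h.smooth x hx
  have J := h.isLeastEigenpair_of_touching hx hη hη₀ hηx he heq hmin
  have hxe : ⟪x, e⟫ = 0 := by rw [real_inner_comm, J.inner_eq_zero]
  refine
    { J with
      third_symm := fderiv_hessian_symm_of_infty hG e
      fourth_symm := hessian_hessian_symm_right hG e e
      hess_symm := hessian_symm hη
      third_radial := fun v => by rw [h.fderiv_hessian_apply_self hx, J.eigen]
      third_eigen := fun v => ?_
      second_variation := fun w v => ?_ }
  · have hfirst := (touching_conditions hG hη heq he hmin v 0).1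
    simp only [map_zero, inner_zero_right, hxe] at hfirst
    rw [fderiv_hessian_symm_of_infty hG, fderiv_hessian_symm_left hG]
    linarith
  · have hsecond := (touching_conditions hG hη heq he hmin w v).2
    rw [hxe, hessian_hessian_comm hG, fderiv_hessian_symm_left hG] at hsecond
    linarith

end IsConvexSolution

end Touching

section HopfLemma

open Filter Topology Metric
open scoped ContDiff

variable {E : Type*} [NormedAddCommGroup E]

/-- The Gaussian of rate `α` centred at `p`, from which the Hopf barriers are built. -/
def gaussian (α : ℝ) (p x : E) : ℝ := rexp (-(α * ‖x - p‖ ^ 2))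

section Gaussian

variable (α : ℝ) (p x : E)

lemma gaussian_pos : 0 < gaussian α p x := exp_pos _

lemma gaussian_eq_of_dist_eq {R : ℝ} (h : dist x p = R) : gaussian α p x = rexp (-(α * R ^ 2)) := by
  rw [gaussian, ← dist_eq_norm, h]

lemma gaussian_le_one (hα : 0 ≤ α) : gaussian α p x ≤ 1 :=
  exp_le_one_iff.2 (neg_nonpos.2 (by positivity))

variable [InnerProductSpace ℝ E]

lemma hasFDerivAt_gaussian :
    HasFDerivAt (gaussian α p) ((gaussian α p x * -(2 * α)) • innerSL ℝ (x - p)) x := by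
  refine (((((hasFDerivAt_id x).sub_const p).norm_sq).const_mul α).neg.exp).congr_fderiv ?_
  ext v
  simp only [id_eq, Pi.neg_apply, map_sub, ContinuousLinearMap.comp_id, smul_neg, neg_apply,
    smul_apply, sub_apply, coe_innerSL_apply, nsmul_eq_mul, Nat.cast_ofNat, smul_eq_mul, gaussian,
    mul_neg, neg_smul, neg_inj]
  ring

lemma fderiv_gaussian :
    fderiv ℝ (gaussian α p) = fun x => (gaussian α p x * -(2 * α)) • innerSL ℝ (x - p) :=
  funext fun x => (hasFDerivAt_gaussian α p x).fderiv

lemma contDiff_gaussian {n : WithTop ℕ∞} : ContDiff ℝ n (gaussian α p) :=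
  contDiff_exp.comp ((contDiff_const.mul ((contDiff_id.sub contDiff_const).norm_sq ℝ)).neg)

lemma hessian_gaussian : hessian (gaussian α p) x =
    gaussian α p x • ((4 * α ^ 2) • tensorSquare (x - p) - (2 * α) • innerForm E) := by
  ext v w
  have hdiff : DifferentiableAt ℝ (fderiv ℝ (gaussian α p)) x :=
    ((contDiff_gaussian α p (n := 2)).fderiv_right (m := 1) (by norm_num)).differentiable
      (by norm_num) x
  have hinner := ((hasFDerivAt_id x).sub_const p).inner ℝ (hasFDerivAt_const w x)
  rw [← fderiv_apply_apply hdiff, fderiv_gaussian]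
  refine (DFunLike.congr_fun (((hasFDerivAt_gaussian α p x).mul_const (-(2 * α))).mul
    hinner).fderiv v).trans ?_
  simp only [mul_neg, id_eq, neg_smul, inner_sub_left, map_sub, smul_neg, neg_neg, add_apply,
    neg_apply, smul_apply, ContinuousLinearMap.comp_apply, ContinuousLinearMap.prod_apply,
    ContinuousLinearMap.id_apply, zero_apply, fderivInnerCLM_apply, inner_zero_right, zero_add,
    smul_eq_mul, sub_apply, coe_innerSL_apply, tensorSquare_apply, innerForm_apply]
  ring

lemma fderiv_const_mul_gaussian_add_const (ε C : ℝ) :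
    fderiv ℝ (fun y => ε * gaussian α p y + C) = ε • fderiv ℝ (gaussian α p) := by
  ext1 y
  rw [fderiv_add_const, fderiv_const_mul (hasFDerivAt_gaussian α p y).differentiableAt]
  rfl

lemma hessian_const_mul_gaussian_add_const (ε C : ℝ) :
    hessian (fun y => ε * gaussian α p y + C) x = ε • hessian (gaussian α p) x := by
  rw [hessian, fderiv_const_mul_gaussian_add_const, fderiv_const_smul]
  exact ((contDiff_gaussian α p (n := 2)).fderiv_right (m := 1) (by norm_num)).differentiable
    (by norm_num) x

variable {α p x} in
lemma norm_fderiv_const_mul_gaussian_add_const_le {ε R : ℝ} (hε : 0 ≤ ε) (hα : 0 ≤ α)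
    (hx : x ∈ closedBall p R) (C : ℝ) :
    ‖fderiv ℝ (fun y => ε * gaussian α p y + C) x‖ ≤ ε * gaussian α p x * (2 * α) * R := by
  rw [fderiv_const_mul_gaussian_add_const, Pi.smul_apply, fderiv_gaussian, norm_smul, norm_smul,
    innerSL_apply_norm, norm_mul, norm_neg, ← dist_eq_norm, Real.norm_of_nonneg hε,
    Real.norm_of_nonneg (gaussian_pos α p x).le, Real.norm_of_nonneg (by positivity),
    ← mul_assoc, ← mul_assoc]
  have := (gaussian_pos α p x).le
  gcongr
  exact hx

end Gaussian

variable [InnerProductSpace ℝ E] {ι : Type*} [Fintype ι] [DecidableEq ι]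
  {b : OrthonormalBasis ι ℝ E} {k : ℕ} {G Ψ : E → ℝ} {Ω : Set E} {p x e : E} {R M m c α : ℝ}

omit [InnerProductSpace ℝ E] in
lemma mul_sq_le_apply_self_of_unit [NormedSpace ℝ E] {B : ContBilinForm E} {c : ℝ}
    (h : ∀ v, ‖v‖ = 1 → c ≤ B v v) (v : E) : c * ‖v‖ ^ 2 ≤ B v v := by
  rcases eq_or_ne v 0 with rfl | hv
  · simp
  have hv₀ : 0 < ‖v‖ := norm_pos_iff.2 hv
  have hunit := h (‖v‖⁻¹ • v) (by rw [norm_smul, norm_inv, norm_norm, inv_mul_cancel₀ hv₀.ne'])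
  rw [map_smul, map_smul, smul_apply, smul_eq_mul, smul_eq_mul, ← mul_assoc, ← sq, inv_pow,
    inv_mul_eq_div, le_div_iff₀ (pow_pos hv₀ 2)] at hunit
  exact hunit

lemma isPsd_innerForm : IsPsd (innerForm E) :=
  ⟨fun v w => by simp only [innerForm_apply, real_inner_comm], fun v => by
    simpa only [innerForm_apply] using real_inner_self_nonneg⟩

/-- The closed annulus on which the Hopf barrier lives. -/
def annulus (p : E) (R : ℝ) : Set E := closedBall p R \ ball p (R / 2)

omit [InnerProductSpace ℝ E] in
lemma isCompact_annulus [ProperSpace E] : IsCompact (annulus p R) :=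
  (isCompact_closedBall p R).diff isOpen_ball

/-- Bounds, uniform over the annulus, on the coefficients which enter
`IsTouchingJet.sigma_mul_fderiv_sigma_le`; `c` measures the ellipticity of `σ_k(D²G)` in the
directions along which the barrier is strictly convex. -/
structure IsHopfBound (b : OrthonormalBasis ι ℝ E) (k : ℕ) (G : E → ℝ) (p : E) (R M m c : ℝ) :
    Prop where
  pos_m : 0 < m
  pos_c : 0 < c
  le_norm : ∀ x ∈ annulus p R, m ≤ ‖x‖
  sigma_le : ∀ x ∈ annulus p R, sigma b k (hessian G x) ≤ M
  norm_fderiv_sigma_le : ∀ x ∈ annulus p R, ‖fderiv ℝ (sigma b k) (hessian G x)‖ ≤ M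
  norm_hessian_sigma_le : ∀ x ∈ annulus p R, ‖hessian (sigma b k) (hessian G x)‖ ≤ M
  norm_third_le : ∀ x ∈ annulus p R, ‖fderiv ℝ (hessian G) x‖ ≤ M
  elliptic : ∀ x ∈ annulus p R,
    c ≤ sigma b k (hessian G x) * fderiv ℝ (sigma b k) (hessian G x) (tensorSquare (x - p))

lemma continuous_tensorSquare : Continuous (tensorSquare : E → ContBilinForm E) := by
  have h : Continuous fun w : E =>
      ContinuousLinearMap.smulRightL ℝ E (E →L[ℝ] ℝ) (innerSL ℝ w) (innerSL ℝ w) := by fun_prop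
  exact h

lemma exists_isHopfBound [ProperSpace E] (hk : 1 ≤ k) (hk' : k ≤ Fintype.card ι) (hR : 0 < R)
    (hG : ∀ x ∈ annulus p R, ContDiffAt ℝ ∞ G x) (h0 : (0 : E) ∉ annulus p R)
    (hpsd : ∀ x ∈ annulus p R, IsPsd (hessian G x))
    (hpos : ∀ x ∈ annulus p R, 0 < sigma b k (hessian G x)) :
    ∃ M m c, IsHopfBound b k G p R M m c := by
  have hK : IsCompact (annulus p R) := isCompact_annulus
  have hA : ContinuousOn (hessian G) (annulus p R) := fun x hx =>
    (differentiableAt_hessian (hG x hx)).continuousAt.continuousWithinAt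
  have hX : ContinuousOn (fderiv ℝ (hessian G)) (annulus p R) := fun x hx =>
    (contDiffAt_infty_fderiv (contDiffAt_infty_fderiv
      (contDiffAt_infty_fderiv (hG x hx)))).continuousAt.continuousWithinAt
  have hσ : ContDiff ℝ 2 (sigma b k) := contDiff_sigma b
  have hσ₀ := hσ.continuous.comp_continuousOn hA
  have hσ₁ := (hσ.continuous_fderiv (by norm_num)).comp_continuousOn hA
  have hσ₂ := ((hσ.fderiv_right (m := 1) (by norm_num)).continuous_fderiv
    (by norm_num)).comp_continuousOn hA
  obtain ⟨M, hM⟩ := hK.exists_bound_of_continuousOn (hσ₀.prodMk (hσ₁.prodMk (hσ₂.prodMk hX)))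
  simp only [norm_prod_le_iff] at hM
  obtain ⟨m, hm, hmx⟩ := hK.exists_forall_le' continuous_norm.continuousOn
    fun x hx => norm_pos_iff.2 fun hx0 => h0 (hx0 ▸ hx)
  obtain ⟨c, hc, hcx⟩ := hK.exists_forall_le' (hσ₀.mul (hσ₁.clm_apply
    (continuous_tensorSquare.comp (continuous_sub_right p)).continuousOn)) fun x hx =>
      mul_pos (hpos x hx) <| fderiv_sigma_tensorSquare_pos b hk hk' (hpsd x hx) (hpos x hx) <|
        sub_ne_zero.2 fun hxp => hx.2 (hxp ▸ mem_ball_self (half_pos hR))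
  exact ⟨M, m, c, hm, hc, hmx, fun x hx => (le_abs_self _).trans (hM x hx).1,
    fun x hx => (hM x hx).2.1, fun x hx => (hM x hx).2.2.1, fun x hx => (hM x hx).2.2.2, hcx⟩

lemma rate_le_of_barrier_inequality {P l s t σ : ℝ} (hP : 0 < P) (hM : 0 ≤ M) (hm : 0 < m)
    (hα : 1 ≤ α) (hlP : l ≤ P) (hs : c ≤ σ * s) (ht : σ * t ≤ M ^ 2)
    (h : σ * (P * (4 * α ^ 2 * s - 2 * α * t)) ≤
      12 * M ^ 3 * (P * (2 * α) * R + l / m) + 4 * l / m ^ 2 * M ^ 2) :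
    4 * c * α ≤ 2 * M ^ 2 + 24 * M ^ 3 * R + 12 * M ^ 3 / m + 4 * M ^ 2 / m ^ 2 := by
  have hα₀ : 0 < α := zero_lt_one.trans_le hα
  have hmain : P * (α * (4 * c * α - 2 * M ^ 2)) ≤
      P * (α * (24 * M ^ 3 * R + (12 * M ^ 3 / m + 4 * M ^ 2 / m ^ 2))) := by
    calc P * (α * (4 * c * α - 2 * M ^ 2)) = P * (4 * α ^ 2 * c - 2 * α * M ^ 2) := by ring
      _ ≤ P * (4 * α ^ 2 * (σ * s) - 2 * α * (σ * t)) := by gcongr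
      _ = σ * (P * (4 * α ^ 2 * s - 2 * α * t)) := by ring
      _ ≤ 12 * M ^ 3 * (P * (2 * α) * R + l / m) + 4 * l / m ^ 2 * M ^ 2 := h
      _ ≤ 12 * M ^ 3 * (P * (2 * α) * R + P / m) + 4 * P / m ^ 2 * M ^ 2 := by gcongr
      _ = P * (α * (24 * M ^ 3 * R) + 1 * (12 * M ^ 3 / m + 4 * M ^ 2 / m ^ 2)) := by ring
      _ ≤ P * (α * (24 * M ^ 3 * R) + α * (12 * M ^ 3 / m + 4 * M ^ 2 / m ^ 2)) := by gcongr
      _ = P * (α * (24 * M ^ 3 * R + (12 * M ^ 3 / m + 4 * M ^ 2 / m ^ 2))) := by ring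
  linarith [le_of_mul_le_mul_left (le_of_mul_le_mul_left hmain hP) hα₀]

/-- A Gaussian which touches the least eigenvalue of the augmented Hessian from below cannot have a
large rate, since its Hessian is then too large in the radial direction. -/
lemma IsConvexSolution.rate_le_of_touching (h : IsConvexSolution b k G Ψ Ω) (hk : 1 ≤ k)
    (hk' : k ≤ Fintype.card ι) (hbd : IsHopfBound b k G p R M m c) (hx : x ∈ Ω)
    (hxA : x ∈ annulus p R) {ε C : ℝ} (hε : 0 < ε) (hα : 1 ≤ α) (hC : C ≤ 0)
    (hη₀ : 0 < ε * gaussian α p x + C) (hηm : ε * gaussian α p x + C < m ^ 2) (he : ‖e‖ = 1)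
    (heq : augmentedHessian G x e e = ε * gaussian α p x + C)
    (hmin : ∀ᶠ y in 𝓝 x, ∀ v,
      (ε * gaussian α p y + C) * ‖v‖ ^ 2 ≤ augmentedHessian G y v v) :
    4 * c * α ≤ 2 * M ^ 2 + 24 * M ^ 3 * R + 12 * M ^ 3 / m + 4 * M ^ 2 / m ^ 2 := by
  have : FiniteDimensional ℝ E := b.toBasis.finiteDimensional_of_finite
  have hm := hbd.pos_m
  have hM : 0 ≤ M := (norm_nonneg _).trans (hbd.norm_third_le x hxA)
  have hP : 0 < ε * gaussian α p x := mul_pos hε (gaussian_pos α p x)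
  have := sigma_nonneg b k (h.isPsd hx)
  have hηsmooth : ContDiffAt ℝ 2 (fun y => ε * gaussian α p y + C) x :=
    (contDiff_const.mul (contDiff_gaussian α p)).add contDiff_const |>.contDiffAt
  have hmx : m ^ 2 ≤ ‖x‖ ^ 2 := by gcongr; exact hbd.le_norm x hxA
  have hthird : ‖fderiv ℝ (hessian G) x e‖ ≤ M := by
    simpa only [he, mul_one] using (fderiv ℝ (hessian G) x).le_of_opNorm_le
      (hbd.norm_third_le x hxA) e
  have hkey := (h.isTouchingJet hx hηsmooth hη₀ (hηm.trans_le hmx) he heq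
    hmin).sigma_mul_fderiv_sigma_le b hk hk' (h.sigma_mul_second_order_le hk hx e) hm
    (hbd.le_norm x hxA) (hbd.norm_fderiv_sigma_le x hxA) (hbd.norm_hessian_sigma_le x hxA) hthird
    (hbd.sigma_le x hxA)
  have htrace : sigma b k (hessian G x) * fderiv ℝ (sigma b k) (hessian G x) (innerForm E) ≤
      M ^ 2 := by
    calc _ ≤ M * (M * 1) := mul_le_mul (hbd.sigma_le x hxA) ((le_abs_self _).trans
          (ContinuousLinearMap.le_of_opNorm_le_of_le _ (hbd.norm_fderiv_sigma_le x hxA)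
            norm_innerForm_le)) (fderiv_sigma_nonneg b (h.isPsd hx) isPsd_innerForm) hM
      _ = M ^ 2 := by ring
  rw [hessian_const_mul_gaussian_add_const, hessian_gaussian, smul_smul] at hkey
  simp only [map_smul, map_sub, smul_eq_mul] at hkey
  refine rate_le_of_barrier_inequality hP hM hm hα (add_le_of_nonpos_right hC)
    (hbd.elliptic x hxA) htrace (hkey.trans ?_)
  gcongr
  exact norm_fderiv_const_mul_gaussian_add_const_le hε.le (zero_le_one.trans hα) hxA.1 C

/-- The Hopf barrier, which vanishes on the sphere of radius `R` centred at `p`. -/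
def hopfBarrier (ε α R : ℝ) (p x : E) : ℝ := ε * (gaussian α p x - rexp (-(α * R ^ 2)))

omit [InnerProductSpace ℝ E] in
lemma eventually_mem_annulus (hx : R / 2 < dist x p) (hx' : dist x p < R) :
    ∀ᶠ y in 𝓝 x, y ∈ annulus p R := by
  filter_upwards [isClosed_closedBall.isOpen_compl.mem_nhds (mt mem_closedBall.1 hx.not_ge),
    isOpen_ball.mem_nhds (mem_ball.2 hx')] with y hy hy'
  exact ⟨ball_subset_closedBall hy', fun hy₀ => hy (ball_subset_closedBall hy₀)⟩

omit [InnerProductSpace ℝ E] in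
lemma dist_bounds_of_lt_hopfBarrier {B ε : ℝ} (hε : 0 < ε) (hα : 0 ≤ α) (hx : x ∈ annulus p R)
    (hB : 0 ≤ B) (hinner : dist x p = R / 2 → ε ≤ B) (hlt : B < hopfBarrier ε α R p x) :
    R / 2 < dist x p ∧ dist x p < R := by
  refine ⟨lt_of_le_of_ne (not_lt.1 hx.2) fun heq => ?_, lt_of_le_of_ne hx.1 fun heq => ?_⟩
  · have hle : hopfBarrier ε α R p x ≤ ε := mul_le_of_le_one_right hε.le <|
      (sub_le_self _ (exp_pos _).le).trans (gaussian_le_one α p x hα)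
    exact (hle.trans (hinner heq.symm)).not_gt hlt
  · rw [hopfBarrier, gaussian_eq_of_dist_eq α p x heq, sub_self, mul_zero] at hlt
    exact hB.not_gt hlt

lemma IsConvexSolution.hopfBarrier_le_of_isMinOn (h : IsConvexSolution b k G Ψ Ω) (hk : 1 ≤ k)
    (hk' : k ≤ Fintype.card ι) (hbd : IsHopfBound b k G p R M m c) (hball : ball p R ⊆ Ω)
    (hdef : ∀ y ∈ ball p R, ∀ v, v ≠ 0 → 0 < augmentedHessian G y v v) {ε : ℝ} (hε : 0 < ε)
    (hεm : ε < m ^ 2) (hα : 1 ≤ α)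
    (hα' : 2 * M ^ 2 + 24 * M ^ 3 * R + 12 * M ^ 3 / m + 4 * M ^ 2 / m ^ 2 < 4 * c * α)
    (hxA : x ∈ annulus p R) (he : ‖e‖ = 1) (hnn : 0 ≤ augmentedHessian G x e e)
    (hinner : dist x p = R / 2 → ε ≤ augmentedHessian G x e e)
    (hmin : IsMinOn (fun q : E × E => augmentedHessian G q.1 q.2 q.2 - hopfBarrier ε α R p q.1)
      (annulus p R ×ˢ sphere 0 1) (x, e)) :
    hopfBarrier ε α R p x ≤ augmentedHessian G x e e := by
  by_contra! hlt
  have hα₀ := zero_le_one.trans hα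
  obtain ⟨hlow, hup⟩ := dist_bounds_of_lt_hopfBarrier hε hα₀ hxA hnn hinner hlt
  set C := augmentedHessian G x e e - ε * gaussian α p x with hC
  have heq : augmentedHessian G x e e = ε * gaussian α p x + C := by rw [hC]; ring
  have hC₀ : C ≤ 0 := by
    have := mul_pos hε (exp_pos (-(α * R ^ 2)))
    rw [hopfBarrier] at hlt
    linarith
  have hη₀ := hdef x hup e (norm_ne_zero_iff.1 (he ▸ one_ne_zero))
  have hηm : ε * gaussian α p x + C < m ^ 2 := by
    linarith [mul_le_of_le_one_right hε.le (gaussian_le_one α p x hα₀)]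
  refine (h.rate_le_of_touching hk hk' hbd (hball hup) hxA hε hα hC₀ (heq ▸ hη₀) hηm he heq
    ?_).not_gt hα'
  filter_upwards [eventually_mem_annulus hlow hup] with y hy
  refine mul_sq_le_apply_self_of_unit fun v hv => ?_
  have hyv := isMinOn_iff.1 hmin (y, v) ⟨hy, mem_sphere_zero_iff_norm.2 hv⟩
  simp only [hopfBarrier] at hyv
  linarith

lemma continuousAt_augmentedHessian_apply_self (hG : ContDiffAt ℝ ∞ G x) (v : E) :
    ContinuousAt (fun q : E × E => augmentedHessian G q.1 q.2 q.2) (x, v) := by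
  have hA : ContinuousAt (fun q : E × E => augmentedHessian G q.1) (x, v) :=
    ContinuousAt.fst'' <|
      (differentiableAt_hessian hG).continuousAt.add continuous_tensorSquare.continuousAt
  exact (hA.clm_apply continuousAt_snd).clm_apply continuousAt_snd

lemma IsConvexSolution.exists_hopfBarrier_le [ProperSpace E] (h : IsConvexSolution b k G Ψ Ω)
    (hk : 1 ≤ k) (hk' : k ≤ Fintype.card ι) (hR : 0 < R) (hball : ball p R ⊆ Ω)
    (hsm : ∀ x ∈ closedBall p R, ContDiffAt ℝ ∞ G x) (h0 : (0 : E) ∉ closedBall p R)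
    (hpsd : ∀ x ∈ closedBall p R, IsPsd (hessian G x))
    (hpos : ∀ x ∈ closedBall p R, 0 < sigma b k (hessian G x))
    (hdef : ∀ x ∈ ball p R, ∀ v, v ≠ 0 → 0 < augmentedHessian G x v v) :
    ∃ ε > 0, ∃ α > 0, ∀ x ∈ annulus p R, ∀ v, ‖v‖ = 1 →
      hopfBarrier ε α R p x ≤ augmentedHessian G x v v := by
  have hann : annulus p R ⊆ closedBall p R := sdiff_subset
  obtain ⟨M, m, c, hbd⟩ := exists_isHopfBound (b := b) hk hk' hR (fun x hx => hsm x (hann hx))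
    (fun h0' => h0 (hann h0')) (fun x hx => hpsd x (hann hx)) fun x hx => hpos x (hann hx)
  have hcont : ContinuousOn (fun q : E × E => augmentedHessian G q.1 q.2 q.2)
      (closedBall p R ×ˢ univ) := fun q hq =>
    (continuousAt_augmentedHessian_apply_self (hsm q.1 hq.1) q.2).continuousWithinAt
  have hsphere : sphere p (R / 2) ⊆ ball p R := fun x hx =>
    mem_ball.2 ((mem_sphere.1 hx).trans_lt (half_lt_self hR))
  obtain ⟨β, hβ, hβx⟩ := ((isCompact_sphere p (R / 2)).prod
    (isCompact_sphere (0 : E) 1)).exists_forall_le' (hcont.mono (prod_mono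
      (hsphere.trans ball_subset_closedBall) (subset_univ _))) fun q hq =>
        hdef q.1 (hsphere hq.1) q.2 (ne_of_mem_sphere hq.2 one_ne_zero)
  obtain ⟨α, hα, hα'⟩ : ∃ α : ℝ, 1 ≤ α ∧
      2 * M ^ 2 + 24 * M ^ 3 * R + 12 * M ^ 3 / m + 4 * M ^ 2 / m ^ 2 < 4 * c * α :=
    ((Filter.eventually_ge_atTop 1).and ((tendsto_id.const_mul_atTop
      (mul_pos four_pos hbd.pos_c)).eventually_gt_atTop _)).exists
  obtain ⟨ε, hε, hεβm⟩ := exists_between (lt_min hβ (pow_pos hbd.pos_m 2))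
  obtain ⟨hεβ, hεm⟩ := lt_min_iff.1 hεβm
  refine ⟨ε, hε, α, zero_lt_one.trans_le hα, fun x hx v hv => ?_⟩
  have hv' : v ∈ sphere (0 : E) 1 := mem_sphere_zero_iff_norm.2 hv
  have hbarrier : Continuous (hopfBarrier ε α R p) :=
    continuous_const.mul ((contDiff_gaussian α p (n := 0)).continuous.sub continuous_const)
  obtain ⟨⟨y, w⟩, ⟨hy, hw⟩, hmin⟩ := (isCompact_annulus.prod
    (isCompact_sphere (0 : E) 1)).exists_isMinOn ⟨(x, v), hx, hv'⟩
    ((hcont.mono (prod_mono hann (subset_univ _))).sub (hbarrier.comp continuous_fst).continuousOn)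
  refine sub_nonneg.1 (le_trans (sub_nonneg.2 ?_) (hmin (a := (x, v)) ⟨hx, hv'⟩))
  refine h.hopfBarrier_le_of_isMinOn hk hk' hbd hball hdef hε hεm hα hα' hy
    (mem_sphere_zero_iff_norm.1 hw) ?_ (fun hyR => hεβ.le.trans (hβx (y, w) ⟨hyR, hw⟩)) hmin
  rw [augmentedHessian_apply_self]
  exact add_nonneg ((hpsd y (hann hy)).nonneg w) (sq_nonneg _)

lemma hasDerivAt_hopfBarrier_line {z : E} (ε : ℝ) (hz : dist z p = R) :
    HasDerivAt (fun t : ℝ => hopfBarrier ε α R p (z + t • (p - z)))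
      (ε * (rexp (-(α * R ^ 2)) * (2 * α * R ^ 2))) 0 := by
  have hline := (hasFDerivAt_gaussian α p (z + (0 : ℝ) • (p - z))).comp_hasDerivAt 0
    (hasDerivAt_line z (p - z) 0)
  refine ((hline.sub_const _).const_mul ε).congr_deriv ?_
  have hin : ⟪z - p, p - z⟫ = -R ^ 2 := by
    rw [← neg_sub z p, inner_neg_right, real_inner_self_eq_norm_sq, ← dist_eq_norm, hz]
  rw [zero_smul, add_zero, gaussian_eq_of_dist_eq α p z hz, smul_apply, innerSL_apply_apply, hin,
    smul_eq_mul]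
  ring

lemma line_mem_annulus {z : E} {t : ℝ} (hz : dist z p = R) (ht : 0 ≤ t) (ht' : t ≤ 1 / 2) :
    z + t • (p - z) ∈ annulus p R := by
  have hR : 0 ≤ R := hz ▸ dist_nonneg
  have hdist : dist (z + t • (p - z)) p = (1 - t) * R := by
    rw [dist_eq_norm, show z + t • (p - z) - p = (1 - t) • (z - p) by module, norm_smul,
      ← dist_eq_norm z p, hz, Real.norm_of_nonneg (by linarith)]
  rw [annulus, Set.mem_sdiff, mem_closedBall, mem_ball, not_lt, hdist]
  constructor <;> nlinarith

theorem IsConvexSolution.hopf (h : IsConvexSolution b k G Ψ Ω) (hk : 1 ≤ k)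
    (hk' : k ≤ Fintype.card ι) {z : E} (hR : 0 < R) (hball : ball p R ⊆ Ω)
    (hsm : ∀ x ∈ closedBall p R, ContDiffAt ℝ ∞ G x) (h0 : (0 : E) ∉ closedBall p R)
    (hpsd : ∀ x ∈ closedBall p R, IsPsd (hessian G x))
    (hpos : ∀ x ∈ closedBall p R, 0 < sigma b k (hessian G x))
    (hdef : ∀ x ∈ ball p R, ∀ v, v ≠ 0 → ⟪x, v⟫ = 0 → 0 < hessian G x v v)
    (hz : dist z p = R) (he : ‖e‖ = 1) (hze : ⟪z, e⟫ = 0) (hAe : hessian G z e e = 0) :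
    0 < fderiv ℝ (hessian G) z (p - z) e e := by
  have : FiniteDimensional ℝ E := b.toBasis.finiteDimensional_of_finite
  have : ProperSpace E := FiniteDimensional.proper_real E
  have hdef' : ∀ x ∈ ball p R, ∀ v, v ≠ 0 → 0 < augmentedHessian G x v v := fun x hx v hv => by
    have hnn := (hpsd x (ball_subset_closedBall hx)).nonneg v
    rw [augmentedHessian_apply_self]
    rcases eq_or_ne ⟪x, v⟫ 0 with hxv | hxv
    · exact add_pos_of_pos_of_nonneg (hdef x hx v hv hxv) (sq_nonneg _)
    · exact add_pos_of_nonneg_of_pos hnn (by positivity)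
  obtain ⟨ε, hε, α, hα, hbarrier⟩ := h.exists_hopfBarrier_le hk hk' hR hball hsm h0 hpsd hpos hdef'
  have hline := ((hasDerivAt_augmentedHessian_line (hsm z (mem_closedBall.2 hz.le))
    (p - z)).1.self_of_nhds.clm_apply (hasDerivAt_const 0 e)).clm_apply (hasDerivAt_const 0 e)
  have hder := nonneg_deriv_of_eventually_le
    (hline.sub (hasDerivAt_hopfBarrier_line (α := α) ε hz)) (by
      filter_upwards [Ioo_mem_nhdsGT (one_half_pos (α := ℝ))] with t ht
      simp only [Pi.sub_apply, zero_smul, add_zero, augmentedHessian_apply_self, hAe, hze]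
      simpa [hopfBarrier, gaussian_eq_of_dist_eq α p z hz, augmentedHessian_apply_self] using
        hbarrier _ (line_mem_annulus hz ht.1.le ht.2.le) e he)
  have hpos' : 0 < ε * (rexp (-(α * R ^ 2)) * (2 * α * R ^ 2)) := by positivity
  exact hpos'.trans_le (by simpa [symmTensor, hze] using hder)

end HopfLemma

section Cones

open Filter Topology
open scoped ContDiff

variable {E : Type*} [NormedAddCommGroup E] [InnerProductSpace ℝ E]
  {F : Type*} [NormedAddCommGroup F] [NormedSpace ℝ F] {N x : E} {c : ℝ}

/-- The open circular cone around the unit axis `N`, where `c` is the cosine of the half-angle. -/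
def openCone (N : E) (c : ℝ) : Set E := {x | c * ‖x‖ < ⟪N, x⟫}

/-- The closed circular cone around the unit axis `N`, without its apex. -/
def closedCone (N : E) (c : ℝ) : Set E := {x | x ≠ 0 ∧ c * ‖x‖ ≤ ⟪N, x⟫}

/-- `N` is a unit vector and `c` is the cosine of an angle in `(0, π/2]`. -/
structure IsAperture (N : E) (c : ℝ) : Prop where
  norm_axis : ‖N‖ = 1
  cos_nonneg : 0 ≤ c
  cos_lt_one : c < 1

lemma isOpen_openCone : IsOpen (openCone N c) :=
  isOpen_lt (by fun_prop) (by fun_prop)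

lemma openCone_subset : openCone N c ⊆ closedCone N c := fun x hx =>
  ⟨by rintro rfl; simp [openCone] at hx, le_of_lt hx⟩

lemma convex_openCone (hc : 0 ≤ c) : Convex ℝ (openCone N c) := by
  have h := ((convexOn_univ_norm.smul hc).sub
    ((innerSL ℝ N).toLinearMap.concaveOn convex_univ)).convex_lt 0
  simpa [openCone] using h

lemma smul_mem_closedCone (hx : x ∈ closedCone N c) {l : ℝ} (hl : 0 < l) :
    l • x ∈ closedCone N c := by
  refine ⟨smul_ne_zero hl.ne' hx.1, ?_⟩
  rw [norm_smul, Real.norm_of_nonneg hl.le, inner_smul_right, mul_left_comm]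
  exact mul_le_mul_of_nonneg_left hx.2 hl.le

lemma IsAperture.add_smul_mem_openCone (h : IsAperture N c) (hx : x ∈ closedCone N c) {t : ℝ}
    (ht : 0 < t) : x + t • N ∈ openCone N c := by
  calc c * ‖x + t • N‖ ≤ c * (‖x‖ + t * 1) := by
        refine mul_le_mul_of_nonneg_left ((norm_add_le _ _).trans_eq ?_) h.cos_nonneg
        rw [norm_smul, Real.norm_of_nonneg ht.le, h.norm_axis]
    _ = c * ‖x‖ + c * t := by ring
    _ < ⟪N, x⟫ + 1 * t := add_lt_add_of_le_of_lt hx.2 (mul_lt_mul_of_pos_right h.cos_lt_one ht)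
    _ = ⟪N, x + t • N⟫ := by
        rw [inner_add_right, inner_smul_right, real_inner_self_eq_norm_sq, h.norm_axis]
        ring

lemma tendsto_add_smul (x w : E) : Tendsto (fun t : ℝ => x + t • w) (𝓝[>] 0) (𝓝 x) :=
  (Continuous.tendsto' (by fun_prop) 0 x (by simp)).mono_left nhdsWithin_le_nhds

lemma IsAperture.eventually_add_smul_mem_openCone (h : IsAperture N c) (hx : x ∈ closedCone N c) :
    ∀ᶠ t : ℝ in 𝓝[>] 0, x + t • N ∈ openCone N c :=
  eventually_nhdsWithin_of_forall fun _ ht => h.add_smul_mem_openCone hx ht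

lemma IsAperture.eq_of_eqOn_openCone {X : Type*} [TopologicalSpace X] [T2Space X] {f g : E → X}
    (h : IsAperture N c) (hfg : EqOn f g (openCone N c)) (hx : x ∈ closedCone N c)
    (hf : ContinuousAt f x) (hg : ContinuousAt g x) : f x = g x := by
  refine tendsto_nhds_unique ((hf.tendsto.comp (tendsto_add_smul x N)).congr' ?_)
    (hg.tendsto.comp (tendsto_add_smul x N))
  filter_upwards [h.eventually_add_smul_mem_openCone hx] with t ht using hfg ht

lemma fderiv_smul_of_homogeneous {f : E → F} {Ω : Set E} (hΩ : IsOpen Ω) {a l : ℝ}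
    (h : ∀ y ∈ Ω, f (l • y) = a • f y) (hx : x ∈ Ω) (hf : DifferentiableAt ℝ f x) :
    l • fderiv ℝ f (l • x) = a • fderiv ℝ f x := by
  rw [← fderiv_comp_smul, ← fderiv_fun_const_smul hf]
  exact Filter.EventuallyEq.fderiv_eq (eventually_of_mem (hΩ.mem_nhds hx) h)

lemma fderiv_apply_self_of_homogeneous {f : E → F} {r : ℝ → ℝ} {r' : ℝ}
    (hf : DifferentiableAt ℝ f x) (hr : HasDerivAt r r' 1)
    (h : ∀ l, 0 < l → f (l • x) = r l • f x) : fderiv ℝ f x x = r' • f x := by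
  have hray : HasDerivAt (fun l : ℝ => l • x) x 1 := by
    simpa using (hasDerivAt_id (1 : ℝ)).smul_const x
  have hleft : HasDerivAt (fun l : ℝ => f (l • x)) (fderiv ℝ f x x) 1 :=
    hf.hasFDerivAt.comp_hasDerivAt_of_eq 1 hray (one_smul ℝ x).symm
  exact hleft.unique ((hr.smul_const (f x)).congr_of_eventuallyEq
    ((eventually_gt_nhds one_pos).mono h))

/-- The circle through `z` in the plane of latitude `c`, with initial velocity `τ`. -/
def latitudeCircle (N : E) (c : ℝ) (z τ : E) (t : ℝ) : E :=
  c • N + (Real.cos t • (z - c • N) + Real.sin t • τ)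

lemma latitudeCircle_spec {z τ : E} (hN : ‖N‖ = 1) (hz : ‖z‖ = 1) (hNz : ⟪N, z⟫ = c)
    (hτN : ⟪N, τ⟫ = 0) (hτz : ⟪z, τ⟫ = 0) (hτ : ‖τ‖ ^ 2 = 1 - c ^ 2) (t : ℝ) :
    ⟪N, latitudeCircle N c z τ t⟫ = c ∧ ‖latitudeCircle N c z τ t‖ = 1 := by
  have hNN : ⟪N, N⟫ = 1 := by rw [real_inner_self_eq_norm_sq, hN, one_pow]
  have hzz : ⟪z, z⟫ = 1 := by rw [real_inner_self_eq_norm_sq, hz, one_pow]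
  refine ⟨?_, (pow_eq_one_iff_of_nonneg (norm_nonneg _) two_ne_zero).1 ?_⟩
  · simp only [latitudeCircle, inner_add_right, inner_sub_right, inner_smul_right, hNN, hNz, hτN]
    ring
  · rw [← real_inner_self_eq_norm_sq]
    simp only [latitudeCircle, inner_add_right, inner_add_left, inner_sub_right, inner_sub_left,
      inner_smul_right, inner_smul_left, hNN, hzz, hNz, hτN, hτz, real_inner_comm N z,
      real_inner_comm N τ, real_inner_comm z τ, real_inner_self_eq_norm_sq τ, hτ,
      RCLike.conj_to_real]
    linear_combination (1 - c ^ 2) * Real.sin_sq_add_cos_sq t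

/-- A smooth function on a circular cone which is positively homogeneous of degree one. -/
structure IsConical (N : E) (c : ℝ) (f : E → ℝ) : Prop where
  smooth : ∀ x ∈ closedCone N c, ContDiffAt ℝ ∞ f x
  hom : ∀ x ∈ closedCone N c, ∀ l : ℝ, 0 < l → f (l • x) = l * f x

namespace IsConical

variable {f : E → ℝ}

lemma smooth_fderiv (h : IsConical N c f) (hx : x ∈ closedCone N c) :
    ContDiffAt ℝ ∞ (fderiv ℝ f) x :=
  contDiffAt_infty_fderiv (h.smooth x hx)

lemma smooth_hessian (h : IsConical N c f) (hx : x ∈ closedCone N c) :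
    ContDiffAt ℝ ∞ (hessian f) x :=
  contDiffAt_infty_fderiv (h.smooth_fderiv hx)

lemma fderiv_smul (h : IsConical N c f) (hN : IsAperture N c) (hx : x ∈ closedCone N c) {l : ℝ}
    (hl : 0 < l) : fderiv ℝ f (l • x) = fderiv ℝ f x := by
  refine hN.eq_of_eqOn_openCone (f := fun y => fderiv ℝ f (l • y)) (fun y hy => ?_) hx ?_
    (h.smooth_fderiv hx).continuousAt
  · exact smul_right_injective _ hl.ne' (fderiv_smul_of_homogeneous isOpen_openCone
      (fun z hz => h.hom z (openCone_subset hz) l hl) hy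
      ((h.smooth y (openCone_subset hy)).differentiableAt (by simp)))
  · exact (h.smooth_fderiv (smul_mem_closedCone hx hl)).continuousAt.comp
      (continuous_const_smul l).continuousAt

lemma hessian_smul (h : IsConical N c f) (hN : IsAperture N c) (hx : x ∈ closedCone N c) {l : ℝ}
    (hl : 0 < l) : hessian f (l • x) = l⁻¹ • hessian f x := by
  refine hN.eq_of_eqOn_openCone (f := fun y => hessian f (l • y)) (g := l⁻¹ • hessian f)
    (fun y hy => ?_) hx ?_ ((h.smooth_hessian hx).continuousAt.const_smul _)
  · have hscale := fderiv_smul_of_homogeneous (a := 1) isOpen_openCone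
      (fun z hz => (h.fderiv_smul hN (openCone_subset hz) hl).trans (one_smul ℝ _).symm) hy
      ((h.smooth_fderiv (openCone_subset hy)).differentiableAt (by simp))
    exact (eq_inv_smul_iff₀ hl.ne').2 (hscale.trans (one_smul ℝ _))
  · exact (h.smooth_hessian (smul_mem_closedCone hx hl)).continuousAt.comp
      (continuous_const_smul l).continuousAt

lemma hessian_self (h : IsConical N c f) (hN : IsAperture N c) (hx : x ∈ closedCone N c) :
    hessian f x x = 0 := by
  simpa using fderiv_apply_self_of_homogeneous (r := 1)
    ((h.smooth_fderiv hx).differentiableAt (by simp)) (hasDerivAt_const 1 1)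
    fun l hl => by simpa using h.fderiv_smul hN hx hl

lemma fderiv_hessian_self (h : IsConical N c f) (hN : IsAperture N c) (hx : x ∈ closedCone N c) :
    fderiv ℝ (hessian f) x x = -hessian f x := by
  simpa using fderiv_apply_self_of_homogeneous ((h.smooth_hessian hx).differentiableAt (by simp))
    (hasDerivAt_inv one_ne_zero) fun l hl => h.hessian_smul hN hx hl

/-- Obtained by differentiating the Neumann condition twice along the circle of latitude through
`z`. -/
lemma neumann_tangential (h : IsConical N c f) (hN : ‖N‖ = 1)
    (hneu : ∀ y ∈ closedCone N c, ⟪N, y⟫ = c * ‖y‖ → fderiv ℝ f y N = 0) {z τ : E}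
    (hz : ‖z‖ = 1) (hNz : ⟪N, z⟫ = c) (hτN : ⟪N, τ⟫ = 0) (hτz : ⟪z, τ⟫ = 0)
    (hτ : ‖τ‖ ^ 2 = 1 - c ^ 2) :
    hessian f z τ N = 0 ∧ fderiv ℝ (hessian f) z τ τ N = hessian f z (z - c • N) N := by
  set γ : ℝ → E := latitudeCircle N c z τ with hγ
  have hγ' : ∀ t, HasDerivAt γ (-Real.sin t • (z - c • N) + Real.cos t • τ) t := fun t =>
    (((Real.hasDerivAt_cos t).smul_const (z - c • N)).add
      ((Real.hasDerivAt_sin t).smul_const τ)).const_add (c • N)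
  have hγ'' : HasDerivAt (fun t => -Real.sin t • (z - c • N) + Real.cos t • τ) (-(z - c • N)) 0 :=
    (((Real.hasDerivAt_sin 0).neg.smul_const (z - c • N)).add
      ((Real.hasDerivAt_cos 0).smul_const τ)).congr_deriv (by simp)
  have hγ₀ : γ 0 = z := by simp [hγ, latitudeCircle]
  have hγN : ∀ t, fderiv ℝ f (γ t) N = 0 := fun t => by
    obtain ⟨hN', hnorm⟩ := latitudeCircle_spec hN hz hNz hτN hτz hτ t
    exact hneu _ ⟨norm_ne_zero_iff.1 (hnorm ▸ one_ne_zero), by rw [hN', hnorm, mul_one]⟩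
      (by rw [hN', hnorm, mul_one])
  have hzcone : z ∈ closedCone N c :=
    ⟨norm_ne_zero_iff.1 (hz ▸ one_ne_zero), by rw [hNz, hz, mul_one]⟩
  obtain ⟨h₁, h₂⟩ := hasDerivAt_comp_second (f := fderiv ℝ f)
    (eventually_contDiffAt_of_infty (hγ₀.symm ▸ h.smooth_fderiv hzcone) 2).self_of_nhds
    (Eventually.of_forall hγ') hγ''
  have hfirst : ∀ᶠ t in 𝓝 0,
      hessian f (γ t) (-Real.sin t • (z - c • N) + Real.cos t • τ) N = 0 := by
    filter_upwards [h₁] with t ht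
    have hzero := ht.clm_apply (hasDerivAt_const t N)
    simp only [hγN, map_zero, add_zero] at hzero
    exact hzero.unique (hasDerivAt_const t 0)
  have hsecond := (h₂.clm_apply (hasDerivAt_const 0 N)).unique
    ((hasDerivAt_const 0 (0 : ℝ)).congr_of_eventuallyEq hfirst)
  refine ⟨by simpa [hγ₀] using hfirst.self_of_nhds, ?_⟩
  have hsum : fderiv ℝ (hessian f) z τ τ N + (c * hessian f z N N - hessian f z z N) = 0 := by
    simpa [hγ₀] using hsecond
  simp only [map_sub, map_smul, sub_apply, smul_apply, smul_eq_mul]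
  linarith

end IsConical

end Cones

section FullRank

open Filter Topology Metric Submodule
open scoped ContDiff

variable {E : Type*} [NormedAddCommGroup E] [InnerProductSpace ℝ E] {G : E → ℝ} {x : E}

/-- The Hessian of `G` at `x` is positive definite on `xᗮ`; for 1-homogeneous `G` this is the
largest possible rank. -/
def HasFullRank (G : E → ℝ) (x : E) : Prop :=
  ∀ v, v ≠ 0 → ⟪x, v⟫ = 0 → 0 < hessian G x v v

lemma HasFullRank.augmentedHessian_pos (hG : HasFullRank G x) (h : ∀ v, 0 ≤ hessian G x v v) {v : E}
    (hv : ‖v‖ = 1) : 0 < augmentedHessian G x v v := by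
  rw [augmentedHessian_apply_self]
  rcases eq_or_ne ⟪x, v⟫ 0 with hxv | hxv
  · simpa [hxv] using hG v (norm_ne_zero_iff.1 (hv ▸ one_ne_zero)) hxv
  · have := h v
    positivity

lemma hasFullRank_of_augmentedHessian_pos (h : ∀ v, ‖v‖ = 1 → 0 < augmentedHessian G x v v) :
    HasFullRank G x := fun v hv hxv => by
  have hunit := h (‖v‖⁻¹ • v) (by simp [norm_smul, hv])
  simp only [augmentedHessian_apply_self, map_smul, smul_apply, smul_eq_mul, hxv,
    ne_eq, OfNat.ofNat_ne_zero, not_false_eq_true, zero_pow, add_zero,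
    ← mul_assoc] at hunit
  exact pos_of_mul_pos_right hunit (by positivity)

lemma exists_null_of_not_hasFullRank (h : ∀ v, 0 ≤ hessian G x v v) (hG : ¬HasFullRank G x) :
    ∃ e, ‖e‖ = 1 ∧ ⟪x, e⟫ = 0 ∧ hessian G x e e = 0 := by
  have hnot := mt hasFullRank_of_augmentedHessian_pos hG
  simp only [augmentedHessian_apply_self, not_forall, not_lt] at hnot
  obtain ⟨e, he, hle⟩ := hnot
  have hnn := h e
  have hsq := sq_nonneg ⟪x, e⟫
  exact ⟨e, he, (pow_eq_zero_iff two_ne_zero).1 (by linarith), by linarith⟩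

lemma HasFullRank.eventually [ProperSpace E] (hG : HasFullRank G x) (hsm : ContDiffAt ℝ ∞ G x)
    (h : ∀ v, 0 ≤ hessian G x v v) : ∀ᶠ y in 𝓝 x, HasFullRank G y := by
  have hpos := (isCompact_sphere (0 : E) 1).eventually_forall_of_forall_eventually (x₀ := x)
    (P := fun y v => 0 < augmentedHessian G y v v) fun v hv =>
      (continuousAt_augmentedHessian_apply_self hsm v).eventually_const_lt
        (hG.augmentedHessian_pos h (by simpa using hv))
  filter_upwards [hpos] with y hy using
    hasFullRank_of_augmentedHessian_pos fun v hv => hy v (by simpa using hv)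

variable {ι : Type*} [Fintype ι] [DecidableEq ι] {b : OrthonormalBasis ι ℝ E} {k : ℕ}

/-- Averaging `T` over the reflection in the line of `u`, which fixes `A`, leaves a positive
multiple of `u ⊗ u`. -/
lemma fderiv_sigma_pos_of_null (hk : 1 ≤ k) (hk' : k ≤ Fintype.card ι) {A T : ContBilinForm E}
    (hA : IsPsd A) (hpos : 0 < sigma b k A) {u : E} (hu : u ≠ 0) (hAu : A u u = 0)
    (hT : ∀ v w, ⟪u, v⟫ = 0 → ⟪u, w⟫ = 0 → T v w = 0) (hTu : 0 < T u u) :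
    0 < fderiv ℝ (sigma b k) A T := by
  set R : E →L[ℝ] E := ((span ℝ {u}).reflection : E →L[ℝ] E)
  have hRA : A.bilinearComp R R = A := by
    refine bilinearComp_reflection_eq_self hA.symm fun v hv w _ => ?_
    obtain ⟨a, rfl⟩ := mem_span_singleton.1 hv
    rw [map_smul, smul_apply, hA.apply_eq_zero hAu, smul_zero]
  have hsum : T + T.bilinearComp R R = (2 * T u u / ‖u‖ ^ 4) • tensorSquare u := by
    ext v w
    have hperp : ∀ v, ⟪u, v - (⟪u, v⟫ / ‖u‖ ^ 2) • u⟫ = 0 := fun v => by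
      rw [inner_sub_right, inner_smul_right, real_inner_self_eq_norm_sq]
      field_simp
      simp
    have hRv : ∀ v, R v = (2 : ℝ) • (⟪u, v⟫ / ‖u‖ ^ 2) • u - v := fun v =>
      (reflection_singleton_apply u v).trans (by simp only [two_smul]; rfl)
    have hvw := hT _ _ (hperp v) (hperp w)
    simp only [map_sub, map_smul, sub_apply, smul_apply, smul_eq_mul] at hvw
    simp only [add_apply, ContinuousLinearMap.bilinearComp_apply, hRv, map_sub, map_smul, sub_apply,
      smul_apply, smul_eq_mul, tensorSquare_apply]
    field_simp at hvw ⊢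
    linarith
  have hderiv := congr_arg (fderiv ℝ (sigma b k) A) hsum
  rw [map_add, fderiv_sigma_bilinearComp_isometry b hk' (LinearIsometryEquiv.inner_map_map _) hRA,
    map_smul, smul_eq_mul] at hderiv
  have hsquare := fderiv_sigma_tensorSquare_pos b hk hk' hA hpos hu
  have : 0 < 2 * T u u / ‖u‖ ^ 4 * fderiv ℝ (sigma b k) A (tensorSquare u) := by positivity
  linarith

end FullRank

section ConeDichotomy

open Filter Topology Metric

lemma exists_touching_ball {X : Type*} [MetricSpace X] [ProperSpace X] {S U : Set X} {x : X}
    (hU : IsOpen U) (hS : IsOpen S) (hxS : x ∈ closure S) (hxU : x ∈ U) (hx : x ∉ S) :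
    ∃ p z, z ∉ S ∧ 0 < dist z p ∧ closedBall p (dist z p) ⊆ U ∧ ball p (dist z p) ⊆ S := by
  obtain ⟨r, hr, hball⟩ := Metric.isOpen_iff.1 hU x hxU
  obtain ⟨p, hp, hxp⟩ := Metric.mem_closure_iff.1 hxS (r / 2) (half_pos hr)
  obtain ⟨z, hz, hdist⟩ := hS.isClosed_compl.exists_infDist_eq_dist ⟨x, hx⟩ p
  rw [dist_comm] at hdist
  have hzp : dist z p ≤ dist x p := by
    rw [← hdist, dist_comm]
    exact infDist_le_dist_of_mem hx
  refine ⟨p, z, hz, dist_pos.2 fun h => hz (h ▸ hp), ?_, hdist ▸ ball_infDist_compl_subset⟩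
  refine (closedBall_subset_ball' ?_).trans hball
  rw [dist_comm p x]
  linarith

variable {E : Type*} [NormedAddCommGroup E] [InnerProductSpace ℝ E] {N x z : E} {c : ℝ}

lemma norm_sub_smul_sq (hN : ‖N‖ = 1) (hz : ‖z‖ = 1) (hNz : ⟪N, z⟫ = c) :
    ‖N - c • z‖ ^ 2 = 1 - c ^ 2 := by
  rw [norm_sub_sq_real, inner_smul_right, hNz, norm_smul, hN, hz, Real.norm_eq_abs, mul_one, sq_abs]
  ring

lemma inner_sub_smul_eq_zero (hz : ‖z‖ = 1) (hNz : ⟪N, z⟫ = c) : ⟪z, N - c • z⟫ = 0 := by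
  rw [inner_sub_right, inner_smul_right, real_inner_comm, hNz, real_inner_self_eq_norm_sq, hz]
  ring

/-- The ball of radius `‖N - c • z‖` about `z + (N - c • z)` touches the boundary of the cone at
`z` from inside. -/
lemma mul_norm_sub_inner_le (hN : ‖N‖ = 1) (hc : c < 1) (hc0 : 0 ≤ c) (hz : ‖z‖ = 1)
    (hNz : ⟪N, z⟫ = c) (x : E) :
    c * ‖x‖ - ⟪N, x⟫ ≤ (‖x - (z + (N - c • z))‖ ^ 2 - ‖N - c • z‖ ^ 2) / 2 := by
  set y := x - (1 - c) • z with hy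
  have hdist : ‖x - (z + (N - c • z))‖ ^ 2 = ‖y‖ ^ 2 - 2 * ⟪N, y⟫ + 1 := by
    rw [show x - (z + (N - c • z)) = y - N by module, norm_sub_sq_real, hN, one_pow,
      real_inner_comm]
  have hnorm : ‖x‖ ≤ ‖y‖ + (1 - c) := by
    calc ‖x‖ = ‖y + (1 - c) • z‖ := by rw [hy, sub_add_cancel]
      _ ≤ ‖y‖ + ‖(1 - c) • z‖ := norm_add_le _ _
      _ = ‖y‖ + (1 - c) := by rw [norm_smul, hz, Real.norm_of_nonneg (by linarith), mul_one]
  have hinner : ⟪N, x⟫ = ⟪N, y⟫ + (1 - c) * c := by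
    rw [hy, inner_sub_right, inner_smul_right, hNz, sub_add_cancel]
  rw [hdist, norm_sub_smul_sq hN hz hNz, hinner]
  nlinarith [sq_nonneg (‖y‖ - c), mul_le_mul_of_nonneg_left hnorm hc0]

omit [InnerProductSpace ℝ E] in
lemma IsAperture.one_sub_sq_pos (h : IsAperture N c) : 0 < 1 - c ^ 2 := by
  nlinarith [h.cos_nonneg, h.cos_lt_one]

lemma mem_closedCone_of_inner_eq (hz : ‖z‖ = 1) (hNz : ⟪N, z⟫ = c) : z ∈ closedCone N c :=
  ⟨norm_ne_zero_iff.1 (hz ▸ one_ne_zero), by rw [hNz, hz, mul_one]⟩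

lemma IsAperture.norm_sub_smul_pos (h : IsAperture N c) (hz : ‖z‖ = 1) (hNz : ⟪N, z⟫ = c) :
    0 < ‖N - c • z‖ := by
  have hsq := h.one_sub_sq_pos
  rw [← norm_sub_smul_sq h.norm_axis hz hNz, sq_pos_iff] at hsq
  exact (norm_nonneg _).lt_of_ne' hsq

lemma IsAperture.closedBall_subset_closedCone (h : IsAperture N c) (hz : ‖z‖ = 1)
    (hNz : ⟪N, z⟫ = c) :
    closedBall (z + (N - c • z)) ‖N - c • z‖ ⊆ closedCone N c := by
  refine fun x hx => ⟨?_, ?_⟩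
  · rintro rfl
    rw [mem_closedBall, dist_zero_left, ← sq_le_sq₀ (norm_nonneg _) (norm_nonneg _),
      norm_add_sq_real, inner_sub_smul_eq_zero hz hNz, hz] at hx
    linarith
  · have hle := mul_norm_sub_inner_le h.norm_axis h.cos_lt_one h.cos_nonneg hz hNz x
    rw [mem_closedBall, dist_eq_norm] at hx
    have := pow_le_pow_left₀ (norm_nonneg _) hx 2
    linarith

lemma IsAperture.ball_subset_openCone (h : IsAperture N c) (hz : ‖z‖ = 1) (hNz : ⟪N, z⟫ = c) :
    ball (z + (N - c • z)) ‖N - c • z‖ ⊆ openCone N c := by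
  intro x hx
  have hle := mul_norm_sub_inner_le h.norm_axis h.cos_lt_one h.cos_nonneg hz hNz x
  rw [mem_ball, dist_eq_norm] at hx
  have := pow_lt_pow_left₀ hx (norm_nonneg _) two_ne_zero
  exact show c * ‖x‖ < ⟪N, x⟫ by linarith

variable {ι : Type*} [Fintype ι] [DecidableEq ι] {b : OrthonormalBasis ι ℝ E} {k : ℕ}
  {G Ψ : E → ℝ}

/-- `G` is a conical convex solution of `σ_k(D²G) = Ψ⁻ᵏ` with homogeneous Neumann condition, and
the derivative of `Ψ` along the axis is nonnegative on the boundary. -/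
structure IsConeSolution (b : OrthonormalBasis ι ℝ E) (k : ℕ) (N : E) (c : ℝ) (G Ψ : E → ℝ) :
    Prop where
  aperture : IsAperture N c
  conical : IsConical N c G
  conical_rhs : IsConical N c Ψ
  nonneg : ∀ x ∈ closedCone N c, ∀ v, 0 ≤ hessian G x v v
  pos : ∀ x ∈ closedCone N c, 0 < Ψ x
  convex_rhs : ∀ x ∈ closedCone N c, ∀ v, 0 ≤ hessian Ψ x v v
  eqn : ∀ x ∈ closedCone N c, sigma b k (hessian G x) * Ψ x ^ k = 1
  neumann : ∀ x ∈ closedCone N c, ⟪N, x⟫ = c * ‖x‖ → fderiv ℝ G x N = 0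
  robin : ∀ x ∈ closedCone N c, ⟪N, x⟫ = c * ‖x‖ → 0 ≤ fderiv ℝ Ψ x N

namespace IsConeSolution

lemma toConvexSolution (h : IsConeSolution b k N c G Ψ) :
    IsConvexSolution b k G Ψ (openCone N c) where
  isOpen := isOpen_openCone
  smooth x hx := h.conical.smooth x (openCone_subset hx)
  smooth_rhs x hx := h.conical_rhs.smooth x (openCone_subset hx)
  euler _ hx := DFunLike.congr_fun (h.conical.hessian_self h.aperture (openCone_subset hx))
  nonneg x hx := h.nonneg x (openCone_subset hx)
  pos x hx := h.pos x (openCone_subset hx)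
  convex_rhs x hx := h.convex_rhs x (openCone_subset hx)
  eqn x hx := h.eqn x (openCone_subset hx)

lemma isPsd (h : IsConeSolution b k N c G Ψ) (hx : x ∈ closedCone N c) : IsPsd (hessian G x) :=
  ⟨hessian_symm_of_infty (h.conical.smooth x hx), h.nonneg x hx⟩

lemma sigma_pos (h : IsConeSolution b k N c G Ψ) (hx : x ∈ closedCone N c) :
    0 < sigma b k (hessian G x) :=
  pos_of_mul_pos_left (h.eqn x hx ▸ one_pos) (pow_pos (h.pos x hx) k).le

lemma hopf (h : IsConeSolution b k N c G Ψ) (hk : 1 ≤ k) (hk' : k ≤ Fintype.card ι) {p e : E}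
    (hpz : 0 < dist z p) (hclosed : closedBall p (dist z p) ⊆ closedCone N c)
    (hopen : ball p (dist z p) ⊆ {y ∈ openCone N c | HasFullRank G y}) (he : ‖e‖ = 1)
    (hze : ⟪z, e⟫ = 0) (hAe : hessian G z e e = 0) :
    0 < fderiv ℝ (hessian G) z (p - z) e e :=
  have : FiniteDimensional ℝ E := b.toBasis.finiteDimensional_of_finite
  have : ProperSpace E := FiniteDimensional.proper_real E
  h.toConvexSolution.hopf hk hk' hpz (fun _ hy => (hopen hy).1)
    (fun y hy => h.conical.smooth y (hclosed hy)) (fun h0 => (hclosed h0).1 rfl)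
    (fun _ hy => h.isPsd (hclosed hy)) (fun _ hy => h.sigma_pos (hclosed hy))
    (fun _ hy => (hopen hy).2) rfl he hze hAe

lemma isOpen_hasFullRank (h : IsConeSolution b k N c G Ψ) :
    IsOpen {y ∈ openCone N c | HasFullRank G y} := by
  have : FiniteDimensional ℝ E := b.toBasis.finiteDimensional_of_finite
  have : ProperSpace E := FiniteDimensional.proper_real E
  refine isOpen_iff_mem_nhds.2 fun y hy => (isOpen_openCone.eventually_mem hy.1).and ?_
  exact hy.2.eventually (h.conical.smooth y (openCone_subset hy.1))
    (h.nonneg y (openCone_subset hy.1))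

lemma fderiv_hessian_eq_zero_of_null (h : IsConeSolution b k N c G Ψ) (hz : z ∈ openCone N c)
    {e : E} (hAe : hessian G z e e = 0) (w : E) : fderiv ℝ (hessian G) z w e e = 0 := by
  have hmin : IsLocalMin (fun y => hessian G y e e) z := by
    filter_upwards [isOpen_openCone.mem_nhds hz] with y hy
    exact hAe.trans_le (h.nonneg y (openCone_subset hy) e)
  have hd := differentiableAt_hessian (h.conical.smooth z (openCone_subset hz))
  have hderiv := hmin.hasFDerivAt_eq_zero ((hd.hasFDerivAt.clm_apply
    (hasFDerivAt_const e z)).clm_apply (hasFDerivAt_const e z))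
  simpa using DFunLike.congr_fun hderiv w

lemma hasFullRank_of_mem_closure (h : IsConeSolution b k N c G Ψ) (hk : 1 ≤ k)
    (hk' : k ≤ Fintype.card ι) (hx : x ∈ closure {y ∈ openCone N c | HasFullRank G y})
    (hxc : x ∈ openCone N c) : HasFullRank G x := by
  have : FiniteDimensional ℝ E := b.toBasis.finiteDimensional_of_finite
  have : ProperSpace E := FiniteDimensional.proper_real E
  by_contra hxd
  obtain ⟨p, z, hzd, hpos, hclosed, hopen⟩ :=
    exists_touching_ball isOpen_openCone h.isOpen_hasFullRank hx hxc fun hx => hxd hx.2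
  have hz : z ∈ openCone N c := hclosed (mem_closedBall.2 le_rfl)
  obtain ⟨e, he, hze, hAe⟩ := exists_null_of_not_hasFullRank (h.nonneg z (openCone_subset hz))
    fun hfr => hzd ⟨hz, hfr⟩
  exact (h.hopf hk hk' hpos (hclosed.trans openCone_subset) hopen he hze hAe).ne'
    (h.fderiv_hessian_eq_zero_of_null hz hAe (p - z))

lemma hopf_of_mem_boundary (h : IsConeSolution b k N c G Ψ) (hk : 1 ≤ k)
    (hk' : k ≤ Fintype.card ι) (hfr : ∀ y ∈ openCone N c, HasFullRank G y) (hz : ‖z‖ = 1)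
    (hNz : ⟪N, z⟫ = c) {e : E} (he : ‖e‖ = 1) (hze : ⟪z, e⟫ = 0) (hAe : hessian G z e e = 0) :
    0 < fderiv ℝ (hessian G) z N e e := by
  have hzc := mem_closedCone_of_inner_eq hz hNz
  have hdist : dist z (z + (N - c • z)) = ‖N - c • z‖ := by rw [dist_self_add_right]
  have hnormal := h.hopf hk hk' (hdist ▸ h.aperture.norm_sub_smul_pos hz hNz)
    (hdist ▸ h.aperture.closedBall_subset_closedCone hz hNz)
    (fun y hy => have hyc := h.aperture.ball_subset_openCone hz hNz (hdist ▸ hy)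
      ⟨hyc, hfr y hyc⟩) he hze hAe
  have hradial : fderiv ℝ (hessian G) z z e e = 0 := by
    rw [h.conical.fderiv_hessian_self h.aperture hzc, neg_apply, neg_apply, hAe, neg_zero]
  simpa only [add_sub_cancel_left, map_sub, map_smul, sub_apply, smul_apply, hradial, smul_zero,
    sub_zero] using hnormal

lemma hessian_tangent_axis (h : IsConeSolution b k N c G Ψ) (hz : ‖z‖ = 1) (hNz : ⟪N, z⟫ = c)
    {τ : E} (hNτ : ⟪N, τ⟫ = 0) (hzτ : ⟪z, τ⟫ = 0) :
    hessian G z τ N = 0 ∧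
      (1 - c ^ 2) * fderiv ℝ (hessian G) z N τ τ = -(c * ‖τ‖ ^ 2 * hessian G z N N) := by
  rcases eq_or_ne τ 0 with rfl | hτ
  · simp
  have hzc := mem_closedCone_of_inner_eq hz hNz
  have hsm := h.conical.smooth z hzc
  have hc : 0 < 1 - c ^ 2 := h.aperture.one_sub_sq_pos
  have hτ0 : 0 < ‖τ‖ := norm_pos_iff.2 hτ
  set s := √(1 - c ^ 2) / ‖τ‖ with hs
  have hs0 : 0 < s := by positivity
  have hs2 : s ^ 2 * ‖τ‖ ^ 2 = 1 - c ^ 2 := by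
    rw [← mul_pow, hs, div_mul_cancel₀ _ hτ0.ne', Real.sq_sqrt hc.le]
  obtain ⟨hmixed, hthird⟩ := h.conical.neumann_tangential h.aperture.norm_axis h.neumann hz hNz
    (τ := s • τ) (by rw [inner_smul_right, hNτ, mul_zero]) (by rw [inner_smul_right, hzτ, mul_zero])
    (by rw [norm_smul, Real.norm_of_nonneg hs0.le, mul_pow, hs2])
  rw [fderiv_hessian_symm_of_infty hsm, fderiv_hessian_symm_left hsm] at hthird
  simp only [map_smul, map_sub, smul_apply, neg_apply, smul_eq_mul, zero_sub,
    h.conical.hessian_self h.aperture hzc] at hmixed hthird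
  refine ⟨(mul_eq_zero.1 hmixed).resolve_left hs0.ne', ?_⟩
  rw [← hs2]
  linear_combination ‖τ‖ ^ 2 * hthird

lemma hessian_axis_eq_zero_of_null (h : IsConeSolution b k N c G Ψ) (hz : ‖z‖ = 1)
    (hNz : ⟪N, z⟫ = c) {e : E} (hze : ⟪z, e⟫ = 0) (hAe : hessian G z e e = 0)
    (hnormal : 0 < fderiv ℝ (hessian G) z N e e) : hessian G z N N = 0 := by
  have hzc := mem_closedCone_of_inner_eq hz hNz
  have hc : 0 < 1 - c ^ 2 := h.aperture.one_sub_sq_pos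
  by_contra hne
  set β := ⟪N, e⟫ / (1 - c ^ 2) with hβ
  have hNτ : ⟪N, e - β • (N - c • z)⟫ = 0 := by
    simp only [inner_sub_right, inner_smul_right, real_inner_self_eq_norm_sq, hNz,
      h.aperture.norm_axis, hβ]
    field_simp
    ring
  have hzτ : ⟪z, e - β • (N - c • z)⟫ = 0 := by
    rw [inner_sub_right, inner_smul_right, inner_sub_smul_eq_zero hz hNz, hze, mul_zero, sub_zero]
  have hmixed := (h.hessian_tangent_axis hz hNz hNτ hzτ).1
  simp only [map_sub, map_smul, sub_apply, smul_apply, smul_eq_mul, zero_apply, mul_zero, sub_zero,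
    h.conical.hessian_self h.aperture hzc, (h.isPsd hzc).apply_eq_zero hAe, zero_sub, neg_eq_zero,
    mul_eq_zero, hne, or_false] at hmixed
  have hNe : ⟪N, e⟫ = 0 := by simpa [hmixed] using hNτ
  have htangent := (h.hessian_tangent_axis hz hNz hNe hze).2
  have hAN := h.nonneg z hzc N
  have hle : 0 ≤ c * ‖e‖ ^ 2 * hessian G z N N :=
    mul_nonneg (mul_nonneg h.aperture.cos_nonneg (sq_nonneg _)) hAN
  linarith [mul_pos hc hnormal]

lemma fderiv_hessian_axis_eq_zero (h : IsConeSolution b k N c G Ψ) (hz : ‖z‖ = 1)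
    (hNz : ⟪N, z⟫ = c) (hAN : hessian G z N N = 0) {v w : E} (hv : ⟪N - c • z, v⟫ = 0)
    (hw : ⟪N - c • z, w⟫ = 0) : fderiv ℝ (hessian G) z N v w = 0 := by
  have hzc := mem_closedCone_of_inner_eq hz hNz
  have hsm := h.conical.smooth z hzc
  have hsymm := fderiv_hessian_symm_of_infty hsm N
  have hradial : fderiv ℝ (hessian G) z N z = 0 := by
    ext v
    rw [fderiv_hessian_symm_left hsm, h.conical.fderiv_hessian_self h.aperture hzc, neg_apply,
      neg_apply, (h.isPsd hzc).apply_eq_zero hAN, neg_zero, zero_apply]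
  have hdiag : ∀ v, ⟪N - c • z, v⟫ = 0 → fderiv ℝ (hessian G) z N v v = 0 := fun v hv => by
    have hNv : ⟪N, v⟫ = c * ⟪z, v⟫ := by
      rwa [inner_sub_left, real_inner_smul_left, sub_eq_zero] at hv
    have htangent := (h.hessian_tangent_axis hz hNz (τ := v - ⟪z, v⟫ • z)
      (by rw [inner_sub_right, inner_smul_right, hNz, hNv]; ring)
      (by rw [inner_sub_right, inner_smul_right, real_inner_self_eq_norm_sq, hz]; ring)).2
    rw [hAN, mul_zero, neg_zero] at htangent
    simpa [hradial, hsymm _ z] using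
      (mul_eq_zero.1 htangent).resolve_left h.aperture.one_sub_sq_pos.ne'
  have hadd := hdiag (v + w) (by rw [inner_add_right, hv, hw, add_zero])
  simp only [map_add, add_apply, hdiag v hv, hdiag w hw, hsymm w v] at hadd
  linarith

lemma fderiv_sigma_axis_nonpos (h : IsConeSolution b k N c G Ψ) (hz : ‖z‖ = 1)
    (hNz : ⟪N, z⟫ = c) :
    fderiv ℝ (sigma b k) (hessian G z) (fderiv ℝ (hessian G) z N) ≤ 0 := by
  have hzc := mem_closedCone_of_inner_eq hz hNz
  have hline : HasDerivAt (fun t : ℝ => z + t • N) N 0 := hasDerivAt_line z N 0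
  have hz₀ : z = z + (0 : ℝ) • N := by rw [zero_smul, add_zero]
  have hA : HasDerivAt (fun t : ℝ => hessian G (z + t • N)) (fderiv ℝ (hessian G) z N) 0 :=
    (differentiableAt_hessian
      (h.conical.smooth z hzc)).hasFDerivAt.comp_hasDerivAt_of_eq 0 hline hz₀
  have hσ : HasDerivAt (fun t : ℝ => sigma b k (hessian G (z + t • N)))
      (fderiv ℝ (sigma b k) (hessian G z) (fderiv ℝ (hessian G) z N)) 0 :=
    ((contDiff_sigma b (n := 1)).differentiable
      (by simp)).differentiableAt.hasFDerivAt.comp_hasDerivAt_of_eq 0 hA (by rw [← hz₀])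
  have hΨ : HasDerivAt (fun t : ℝ => Ψ (z + t • N)) (fderiv ℝ Ψ z N) 0 :=
    ((h.conical_rhs.smooth z hzc).differentiableAt
      (by simp)).hasFDerivAt.comp_hasDerivAt_of_eq 0 hline hz₀
  have hle := nonneg_deriv_of_eventually_le (hσ.mul (hΨ.pow k)).neg (by
    filter_upwards [h.aperture.eventually_add_smul_mem_openCone hzc] with t ht
    simp only [Pi.neg_apply, Pi.mul_apply, Pi.pow_apply, zero_smul, add_zero, h.eqn z hzc,
      h.eqn _ (openCone_subset ht), le_refl])
  have hrobin := h.robin z hzc (by rw [hz, hNz, mul_one])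
  have hpos := h.pos z hzc
  have hσpos := h.sigma_pos hzc
  have hlast : 0 ≤ sigma b k (hessian G z) * (k * Ψ z ^ (k - 1) * fderiv ℝ Ψ z N) := by positivity
  simp only [Pi.pow_apply, zero_smul, add_zero] at hle
  exact nonpos_of_mul_nonpos_left (by linarith) (pow_pos hpos k)

/-- A null direction at the boundary forces `D²G(z)(N, N) = 0` by the Hopf lemma and the Neumann
condition; the Hopf lemma in the conormal direction then contradicts the sign of `∂_N Ψ`. -/
lemma hasFullRank_of_mem_boundary (h : IsConeSolution b k N c G Ψ) (hk : 1 ≤ k)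
    (hk' : k ≤ Fintype.card ι) (hfr : ∀ y ∈ openCone N c, HasFullRank G y) (hz : ‖z‖ = 1)
    (hNz : ⟪N, z⟫ = c) : HasFullRank G z := by
  have hzc := mem_closedCone_of_inner_eq hz hNz
  have hpsd := h.isPsd hzc
  by_contra hzd
  obtain ⟨e, he, hze, hAe⟩ := exists_null_of_not_hasFullRank (h.nonneg z hzc) hzd
  have hAN := h.hessian_axis_eq_zero_of_null hz hNz hze hAe
    (h.hopf_of_mem_boundary hk hk' hfr hz hNz he hze hAe)
  set u := N - c • z with hu
  have hu0 : 0 < ‖u‖ := h.aperture.norm_sub_smul_pos hz hNz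
  have hAu : hessian G z u = 0 := by
    rw [hu, map_sub, map_smul, h.conical.hessian_self h.aperture hzc]
    ext v
    simp [hpsd.apply_eq_zero hAN]
  have hnormal := h.hopf_of_mem_boundary hk hk' hfr hz hNz (e := ‖u‖⁻¹ • u)
    (by rw [norm_smul, norm_inv, norm_norm, inv_mul_cancel₀ hu0.ne'])
    (by rw [inner_smul_right, inner_sub_smul_eq_zero hz hNz, mul_zero])
    (by simp only [map_smul, hAu, smul_zero, zero_apply])
  simp only [map_smul, smul_apply, smul_eq_mul, ← mul_assoc] at hnormal
  exact (fderiv_sigma_pos_of_null hk hk' hpsd (h.sigma_pos hzc) (norm_pos_iff.1 hu0)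
    (by rw [hAu, zero_apply]) (fun v w => h.fderiv_hessian_axis_eq_zero hz hNz hAN)
    (pos_of_mul_pos_right hnormal (by positivity))).not_ge (h.fderiv_sigma_axis_nonpos hz hNz)

lemma hasFullRank_smul_iff (h : IsConeSolution b k N c G Ψ) (hx : x ∈ closedCone N c) {l : ℝ}
    (hl : 0 < l) : HasFullRank G (l • x) ↔ HasFullRank G x := by
  simp only [HasFullRank, h.conical.hessian_smul h.aperture hx hl, smul_apply, smul_eq_mul,
    real_inner_smul_left, mul_eq_zero, hl.ne', false_or, mul_pos_iff_of_pos_left (inv_pos.2 hl)]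

theorem hasFullRank_dichotomy (h : IsConeSolution b k N c G Ψ) (hk : 1 ≤ k)
    (hk' : k ≤ Fintype.card ι) :
    (∀ x ∈ closedCone N c, HasFullRank G x) ∨ ∀ x ∈ closedCone N c, ¬HasFullRank G x := by
  have : FiniteDimensional ℝ E := b.toBasis.finiteDimensional_of_finite
  have : ProperSpace E := FiniteDimensional.proper_real E
  by_cases hne : ∃ x ∈ openCone N c, HasFullRank G x
  · obtain ⟨x₀, hx₀, hx₀'⟩ := hne
    have hfr : openCone N c ⊆ {y ∈ openCone N c | HasFullRank G y} :=
      (convex_openCone h.aperture.cos_nonneg).isPreconnected.subset_of_closure_inter_subset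
        h.isOpen_hasFullRank ⟨x₀, hx₀, hx₀, hx₀'⟩ fun y hy =>
          ⟨hy.2, h.hasFullRank_of_mem_closure hk hk' hy.1 hy.2⟩
    refine Or.inl fun x hx => ?_
    rcases hx.2.lt_or_eq with hlt | heq
    · exact (hfr hlt).2
    have hx0 : 0 < ‖x‖ := norm_pos_iff.2 hx.1
    rw [← h.hasFullRank_smul_iff hx (inv_pos.2 hx0)]
    exact h.hasFullRank_of_mem_boundary hk hk' (fun y hy => (hfr hy).2)
      (by rw [norm_smul, norm_inv, norm_norm, inv_mul_cancel₀ hx0.ne'])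
      (by rw [inner_smul_right, ← heq]; field_simp)
  · refine Or.inr fun x hx hxr => hne ?_
    have hnear := (tendsto_add_smul x N).eventually
      (hxr.eventually (h.conical.smooth x hx) (h.nonneg x hx))
    obtain ⟨t, ht, ht'⟩ := (hnear.and (h.aperture.eventually_add_smul_mem_openCone hx)).exists
    exact ⟨_, ht', ht⟩

end IsConeSolution

end ConeDichotomy

section ConeMinimum

open Filter Topology

variable {E : Type*} [NormedAddCommGroup E] [InnerProductSpace ℝ E]
  {H : E → ℝ} {N x w : E} {c : ℝ}

lemma hasFDerivAt_norm_of_ne_zero (hx : x ≠ 0) :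
    HasFDerivAt (fun y : E => ‖y‖) (‖x‖⁻¹ • innerSL ℝ x) x := by
  have hsqrt := (hasStrictFDerivAt_norm_sq x).hasFDerivAt.sqrt
    (pow_ne_zero 2 (norm_ne_zero_iff.2 hx))
  simp only [Real.sqrt_sq (norm_nonneg _)] at hsqrt
  refine hsqrt.congr_fderiv ?_
  ext v
  simp only [smul_apply, smul_eq_mul, nsmul_eq_mul, Nat.cast_ofNat]
  ring

lemma fderiv_sub_const_mul {f g : E → ℝ} (hf : DifferentiableAt ℝ f x)
    (hg : DifferentiableAt ℝ g x) (m : ℝ) :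
    fderiv ℝ (fun y => f y - m * g y) x = fderiv ℝ f x - m • fderiv ℝ g x :=
  (hf.hasFDerivAt.sub (hg.hasFDerivAt.const_mul m)).fderiv

lemma hessian_sub_const_mul {f g : E → ℝ} (hf : ContDiffAt ℝ 2 f x) (hg : ContDiffAt ℝ 2 g x)
    (m : ℝ) : hessian (fun y => f y - m * g y) x = hessian f x - m • hessian g x := by
  have hfderiv : fderiv ℝ (fun y => f y - m * g y) =ᶠ[𝓝 x]
      fun y => fderiv ℝ f y - m • fderiv ℝ g y := by
    filter_upwards [hf.eventually (by simp), hg.eventually (by simp)] with y hfy hgy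
    exact fderiv_sub_const_mul (hfy.differentiableAt two_ne_zero)
      (hgy.differentiableAt two_ne_zero) m
  have hdiff : ∀ {φ : E → ℝ}, ContDiffAt ℝ 2 φ x → HasFDerivAt (fderiv ℝ φ) (hessian φ x) x :=
    fun h => ((h.fderiv_right (m := 1) (by norm_num)).differentiableAt one_ne_zero).hasFDerivAt
  exact (((hdiff hf).sub ((hdiff hg).const_smul m)).congr_of_eventuallyEq hfderiv).fderiv

lemma eventually_add_smul_mem_closedCone (hx : x ∈ closedCone N c)
    (hw : c * ⟪x, w⟫ < ⟪N, w⟫ * ‖x‖) : ∀ᶠ t : ℝ in 𝓝[>] 0, x + t • w ∈ closedCone N c := by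
  have hnorm : 0 < ‖x‖ := norm_pos_iff.2 hx.1
  have hderiv : HasDerivAt (fun t : ℝ => ⟪N, x + t • w⟫ - c * ‖x + t • w‖)
      (⟪N, w⟫ - c * (‖x‖⁻¹ * ⟪x, w⟫)) 0 :=
    ((innerSL ℝ N).hasFDerivAt.comp_hasDerivAt 0 (hasDerivAt_line x w 0)).sub
      (((hasFDerivAt_norm_of_ne_zero hx.1).comp_hasDerivAt_of_eq 0 (hasDerivAt_line x w 0)
        (by simp)).const_mul c)
  have hpos : 0 < ⟪N, w⟫ - c * (‖x‖⁻¹ * ⟪x, w⟫) := by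
    rw [mul_left_comm, inv_mul_eq_div, sub_pos, div_lt_iff₀ hnorm]
    exact hw
  filter_upwards [hderiv.tendsto_slope_zero_right.eventually_const_lt hpos,
    (tendsto_add_smul x w).eventually_ne hx.1, self_mem_nhdsWithin] with t hslope hne (ht : 0 < t)
  refine ⟨hne, ?_⟩
  have hincr := (mul_pos_iff_of_pos_left (inv_pos.2 ht)).1 hslope
  simp only [zero_add, zero_smul, add_zero] at hincr
  linarith [hx.2]

lemma fderiv_nonneg_of_isMinOn_closedCone (hH : DifferentiableAt ℝ H x) (hx : x ∈ closedCone N c)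
    (hmin : IsMinOn H (closedCone N c) x) (hw : c * ⟪x, w⟫ < ⟪N, w⟫ * ‖x‖) :
    0 ≤ fderiv ℝ H x w := by
  refine nonneg_deriv_of_eventually_le (hH.hasFDerivAt.comp_hasDerivAt_of_eq 0
    (hasDerivAt_line x w 0) (by simp)) ?_
  filter_upwards [eventually_add_smul_mem_closedCone hx hw] with t ht
  simpa using hmin ht

lemma fderiv_eq_zero_of_isMinOn_closedCone (hN : IsAperture N c) (hH : DifferentiableAt ℝ H x)
    (hx : x ∈ closedCone N c) (hmin : IsMinOn H (closedCone N c) x)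
    (hneu : ⟪N, x⟫ = c * ‖x‖ → fderiv ℝ H x N = 0) : fderiv ℝ H x = 0 := by
  rcases hx.2.eq_or_lt with hbdry | hint
  · have hnonneg : ∀ v, 0 ≤ fderiv ℝ H x v := fun v => by
      have hδ : 0 < ‖x‖ * (1 - c ^ 2) := mul_pos (norm_pos_iff.2 hx.1) hN.one_sub_sq_pos
      obtain ⟨β, hβ⟩ : ∃ β, c * ⟪x, v⟫ - ⟪N, v⟫ * ‖x‖ < β * (‖x‖ * (1 - c ^ 2)) :=
        ⟨(c * ⟪x, v⟫ - ⟪N, v⟫ * ‖x‖ + 1) / (‖x‖ * (1 - c ^ 2)), by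
          rw [div_mul_cancel₀ _ hδ.ne']; exact lt_add_one _⟩
      have hinward := fderiv_nonneg_of_isMinOn_closedCone (w := v + β • N) hH hx hmin <| by
        rw [inner_add_right, inner_add_right, inner_smul_right, inner_smul_right,
          real_inner_comm N x, ← hbdry, real_inner_self_eq_norm_sq, hN.norm_axis]
        linarith
      rwa [map_add, map_smul, hneu hbdry.symm, smul_zero, add_zero] at hinward
    ext v
    refine le_antisymm ?_ (hnonneg v)
    simpa using hnonneg (-v)
  · exact (hmin.isLocalMin (mem_of_superset (isOpen_openCone.mem_nhds hint)
      openCone_subset)).fderiv_eq_zero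

lemma hessian_nonneg_of_isMinOn_closedCone (hN : IsAperture N c) (hH : ContDiffAt ℝ 2 H x)
    (hx : x ∈ closedCone N c) (hmin : IsMinOn H (closedCone N c) x)
    (hneu : ⟪N, x⟫ = c * ‖x‖ → fderiv ℝ H x N = 0) (hw : c * ⟪x, w⟫ ≤ ⟪N, w⟫ * ‖x‖) :
    0 ≤ hessian H x w w := by
  have hcrit := fderiv_eq_zero_of_isMinOn_closedCone hN (hH.differentiableAt two_ne_zero) hx hmin
    hneu
  have hinward : ∀ v, c * ⟪x, v⟫ < ⟪N, v⟫ * ‖x‖ → 0 ≤ hessian H x v v := fun v hv => by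
    obtain ⟨hfirst, hsecond⟩ := hasDerivAt_comp_line_second hH v
    refine second_deriv_nonneg_of_eventually_le hfirst hsecond (by simp [hcrit]) ?_
    filter_upwards [eventually_add_smul_mem_closedCone hx hv] with t ht
    simpa using hmin ht
  have hlim : Tendsto (fun ε : ℝ => hessian H x (w + ε • N) (w + ε • N)) (𝓝[>] 0)
      (𝓝 (hessian H x w w)) :=
    (by fun_prop : Continuous fun v => hessian H x v v).continuousAt.tendsto.comp
      (tendsto_add_smul w N)
  refine ge_of_tendsto hlim (eventually_nhdsWithin_of_forall fun ε (hε : 0 < ε) => hinward _ ?_)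
  have haxis : c * ⟪x, N⟫ < ‖x‖ := by
    have hle := real_inner_le_norm x N
    rw [hN.norm_axis, mul_one] at hle
    exact (mul_le_mul_of_nonneg_left hle hN.cos_nonneg).trans_lt
      (mul_lt_of_lt_one_left (norm_pos_iff.2 hx.1) hN.cos_lt_one)
  rw [inner_add_right, inner_add_right, inner_smul_right, inner_smul_right,
    real_inner_self_eq_norm_sq, hN.norm_axis]
  linarith [mul_lt_mul_of_pos_left haxis hε]

end ConeMinimum

section PositiveSolutions

open Filter Topology

variable {E : Type*} [NormedAddCommGroup E] [InnerProductSpace ℝ E]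
  {G : E → ℝ} {N x e : E} {c : ℝ}

/-- The capillary support function of the unit cap `{ζ | ‖ζ + c • N‖ = 1, 0 ≤ ⟪N, ζ⟫}`, extended
homogeneously. -/
def capSupport (N : E) (c : ℝ) (x : E) : ℝ := ‖x‖ - c * ⟪N, x⟫

lemma capSupport_smul (x : E) {l : ℝ} (hl : 0 ≤ l) :
    capSupport N c (l • x) = l * capSupport N c x := by
  rw [capSupport, capSupport, norm_smul, Real.norm_of_nonneg hl, inner_smul_right]
  ring

lemma IsAperture.capSupport_pos (hN : IsAperture N c) (hx : x ≠ 0) : 0 < capSupport N c x := by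
  have hle := real_inner_le_norm N x
  rw [hN.norm_axis, one_mul] at hle
  exact sub_pos.2 ((mul_le_mul_of_nonneg_left hle hN.cos_nonneg).trans_lt
    (mul_lt_of_lt_one_left (norm_pos_iff.2 hx) hN.cos_lt_one))

lemma contDiffAt_capSupport (hx : x ≠ 0) {r : WithTop ℕ∞} : ContDiffAt ℝ r (capSupport N c) x :=
  (contDiffAt_norm ℝ hx).sub (contDiffAt_const.mul (contDiffAt_const.inner ℝ contDiffAt_id))

lemma fderiv_capSupport (hx : x ≠ 0) :
    fderiv ℝ (capSupport N c) x = ‖x‖⁻¹ • innerSL ℝ x - c • innerSL ℝ N :=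
  ((hasFDerivAt_norm_of_ne_zero hx).sub ((innerSL ℝ N).hasFDerivAt.const_mul c)).fderiv

lemma IsAperture.fderiv_capSupport_axis (hN : IsAperture N c) (hx : x ≠ 0)
    (hb : ⟪N, x⟫ = c * ‖x‖) : fderiv ℝ (capSupport N c) x N = 0 := by
  have hnorm : ‖x‖ ≠ 0 := norm_ne_zero_iff.2 hx
  simp only [fderiv_capSupport hx, sub_apply, smul_apply, smul_eq_mul, innerSL_apply_apply,
    real_inner_comm, hb, real_inner_self_eq_norm_sq, hN.norm_axis]
  field_simp
  ring

lemma hessian_capSupport_of_orthogonal (hx : x ≠ 0) (he : ⟪x, e⟫ = 0) :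
    hessian (capSupport N c) x e e = ‖x‖⁻¹ * ‖e‖ ^ 2 := by
  have hfderiv : fderiv ℝ (capSupport N c) =ᶠ[𝓝 x]
      fun y => ‖y‖⁻¹ • innerSL ℝ y - c • innerSL ℝ N :=
    (eventually_ne_nhds hx).mono fun y hy => fderiv_capSupport hy
  have hinv : HasFDerivAt (fun y : E => ‖y‖⁻¹) (-(‖x‖ ^ 2)⁻¹ • ‖x‖⁻¹ • innerSL ℝ x) x :=
    (hasDerivAt_inv (norm_ne_zero_iff.2 hx)).comp_hasFDerivAt x (hasFDerivAt_norm_of_ne_zero hx)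
  have hsnd := (((hinv.smul (innerSL ℝ).hasFDerivAt).sub_const (c • innerSL ℝ N)
    ).congr_of_eventuallyEq hfderiv).fderiv
  have hee : innerSL ℝ e e = ‖e‖ ^ 2 := real_inner_self_eq_norm_sq e
  simp [hessian, hsnd, he, hee]

/-- The constant `m` is the minimum over the unit cap of the quotient of `G` by `capSupport`. -/
lemma IsConical.exists_touching_capSupport [FiniteDimensional ℝ E] (h : IsConical N c G)
    (hN : IsAperture N c) (hpos : ∀ x ∈ closedCone N c, 0 < G x) :
    ∃ m > 0, ∃ u ∈ closedCone N c,
      IsMinOn (fun x => G x - m * capSupport N c x) (closedCone N c) u := by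
  have : ProperSpace E := FiniteDimensional.proper_real E
  set K := Metric.sphere (0 : E) 1 ∩ {x | c * ‖x‖ ≤ ⟪N, x⟫}
  have hKcone : ∀ x ∈ K, x ∈ closedCone N c := fun x hx =>
    ⟨Metric.ne_of_mem_sphere hx.1 one_ne_zero, hx.2⟩
  have hcompact : IsCompact K :=
    (isCompact_sphere 0 1).inter_right (isClosed_le (by fun_prop) (by fun_prop))
  have hnonempty : K.Nonempty := ⟨N, by simpa using hN.norm_axis, by
    simpa [real_inner_self_eq_norm_sq, hN.norm_axis] using hN.cos_lt_one.le⟩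
  have hcont : ContinuousOn (fun x => G x / capSupport N c x) K := fun x hx =>
    ((h.smooth x (hKcone x hx)).continuousAt.div
      (contDiffAt_capSupport (r := 0) (hKcone x hx).1).continuousAt
      (hN.capSupport_pos (hKcone x hx).1).ne').continuousWithinAt
  obtain ⟨u, huK, hmin⟩ := hcompact.exists_isMinOn hnonempty hcont
  have hu := hKcone u huK
  have hLu := hN.capSupport_pos hu.1
  refine ⟨G u / capSupport N c u, div_pos (hpos u hu) hLu, u, hu, fun x hx => ?_⟩
  have hx0 : 0 < ‖x‖ := norm_pos_iff.2 hx.1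
  have hquot : G u / capSupport N c u ≤ G x / capSupport N c x := by
    have hproj := smul_mem_closedCone hx (inv_pos.2 hx0)
    have hle : G u / capSupport N c u ≤ G (‖x‖⁻¹ • x) / capSupport N c (‖x‖⁻¹ • x) :=
      hmin ⟨by simp [norm_smul, hx0.ne'], hproj.2⟩
    rwa [h.hom x hx _ (inv_pos.2 hx0), capSupport_smul x (inv_pos.2 hx0).le,
      mul_div_mul_left _ _ (inv_pos.2 hx0).ne'] at hle
  have htouch := (le_div_iff₀ (hN.capSupport_pos hx.1)).1 hquot
  simpa [div_mul_cancel₀ _ hLu.ne'] using htouch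

lemma IsConical.exists_hasFullRank [FiniteDimensional ℝ E] (h : IsConical N c G)
    (hN : IsAperture N c) (hnn : ∀ x ∈ closedCone N c, ∀ v, 0 ≤ hessian G x v v)
    (hneu : ∀ x ∈ closedCone N c, ⟪N, x⟫ = c * ‖x‖ → fderiv ℝ G x N = 0)
    (hpos : ∀ x ∈ closedCone N c, 0 < G x) : ∃ x ∈ closedCone N c, HasFullRank G x := by
  obtain ⟨m, hm, u, hu, hmin⟩ := h.exists_touching_capSupport hN hpos
  refine ⟨u, hu, by_contra fun hdegenerate => ?_⟩
  obtain ⟨e, he, hue, hnull, hNe⟩ : ∃ e, ‖e‖ = 1 ∧ ⟪u, e⟫ = 0 ∧ hessian G u e e = 0 ∧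
      0 ≤ ⟪N, e⟫ := by
    obtain ⟨e, he, hue, hnull⟩ := exists_null_of_not_hasFullRank (hnn u hu) hdegenerate
    rcases le_total 0 ⟪N, e⟫ with hle | hle
    · exact ⟨e, he, hue, hnull, hle⟩
    · exact ⟨-e, by rwa [norm_neg], by simpa using hue, by simpa using hnull, by simpa using hle⟩
  have hG : ContDiffAt ℝ 2 G u := (eventually_contDiffAt_of_infty (h.smooth u hu) 2).self_of_nhds
  have hL : ContDiffAt ℝ 2 (capSupport N c) u := contDiffAt_capSupport hu.1
  have hneumann : ⟪N, u⟫ = c * ‖u‖ → fderiv ℝ (fun x => G x - m * capSupport N c x) u N = 0 :=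
    fun hb => by
      rw [fderiv_sub_const_mul (hG.differentiableAt two_ne_zero)
        (hL.differentiableAt two_ne_zero), sub_apply, smul_apply, hneu u hu hb,
        hN.fderiv_capSupport_axis hu.1 hb, smul_zero, sub_zero]
  have hsecond := hessian_nonneg_of_isMinOn_closedCone hN (hG.sub (contDiffAt_const.mul hL)) hu
    hmin hneumann (w := e) (by rw [hue, mul_zero]; positivity)
  rw [hessian_sub_const_mul hG hL, sub_apply, sub_apply, smul_apply, smul_apply, hnull,
    hessian_capSupport_of_orthogonal hu.1 hue, he, smul_eq_mul, zero_sub] at hsecond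
  have hu0 : 0 < ‖u‖ := norm_pos_iff.2 hu.1
  have : 0 < m * (‖u‖⁻¹ * 1 ^ 2) := by positivity
  linarith

end PositiveSolutions

section CapillaryInstance

variable {n k : ℕ} {θ : ℝ} {u x : V n} {g G φ Ψ s : V n → ℝ}

lemma inner_Etop (x : V n) : ⟪Etop n, x⟫ = x (Fin.last n) := by
  simp [Etop, EuclideanSpace.inner_single_left]

lemma isAperture_Etop (hθ : θ ∈ Ioc 0 (π / 2)) : IsAperture (Etop n) (Real.cos θ) where
  norm_axis := by simp [Etop]
  cos_nonneg := Real.cos_nonneg_of_mem_Icc ⟨by linarith [hθ.1, Real.pi_pos], hθ.2⟩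
  cos_lt_one := by simpa using Real.cos_lt_cos_of_nonneg_of_le_pi_div_two le_rfl hθ.2 hθ.1

lemma mem_sphCap_iff : u ∈ sphCap n θ ↔ ‖u‖ = 1 ∧ u ∈ closedCone (Etop n) (Real.cos θ) := by
  refine ⟨fun h => ⟨h.1, ?_, ?_⟩, fun h => ⟨h.1, ?_⟩⟩
  · exact norm_ne_zero_iff.1 (by rw [h.1]; exact one_ne_zero)
  · rw [h.1, mul_one, inner_Etop]; exact h.2
  · simpa [h.1, inner_Etop] using h.2.2

lemma closedCone_Etop : closedCone (Etop n) (Real.cos θ) = coneCap n θ := by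
  ext x
  constructor
  · intro hx
    have hx0 : 0 < ‖x‖ := norm_pos_iff.2 hx.1
    refine ⟨‖x‖, hx0, ‖x‖⁻¹ • x,
      mem_sphCap_iff.2 ⟨?_, smul_mem_closedCone hx (inv_pos.2 hx0)⟩, ?_⟩
    · rw [norm_smul, norm_inv, norm_norm, inv_mul_cancel₀ hx0.ne']
    · rw [smul_inv_smul₀ hx0.ne']
  · rintro ⟨l, hl, u, hu, rfl⟩
    exact smul_mem_closedCone (mem_sphCap_iff.1 hu).2 hl

lemma sphCapBdry_subset : sphCapBdry n θ ⊆ sphCap n θ := fun _ hu => ⟨hu.1, hu.2.ge⟩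

lemma exists_smul_of_mem_boundary (hx : x ∈ closedCone (Etop n) (Real.cos θ))
    (hb : ⟪Etop n, x⟫ = Real.cos θ * ‖x‖) :
    ∃ l : ℝ, 0 < l ∧ ∃ u ∈ sphCapBdry n θ, x = l • u := by
  obtain ⟨l, hl, u, hu, rfl⟩ := closedCone_Etop.subset hx
  refine ⟨l, hl, u, ⟨hu.1, ?_⟩, rfl⟩
  rw [inner_smul_right, norm_smul, hu.1, Real.norm_of_nonneg hl.le, inner_Etop] at hb
  exact mul_left_cancel₀ hl.ne' (by linarith)

lemma sub_mem_capCap (hu : u ∈ sphCap n θ) : u - Real.cos θ • Etop n ∈ capCap n θ := by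
  refine ⟨?_, by rw [sub_add_cancel]; exact hu.1⟩
  simpa [Etop] using hu.2

namespace IsHomExt

lemma apply (h : IsHomExt n θ ⊤ g G) (hu : u ∈ sphCap n θ) :
    G u = g (u - Real.cos θ • Etop n) := by
  rw [← h.2.2 _ (sub_mem_capCap hu), sub_add_cancel]

lemma isConical (h : IsHomExt n θ ⊤ g G) : IsConical (Etop n) (Real.cos θ) G where
  smooth x hx := by
    obtain ⟨U, hU, hsub, hG⟩ := h.1
    exact hG.contDiffAt (hU.mem_nhds (hsub (closedCone_Etop.subset hx)))
  hom x hx l hl := by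
    obtain ⟨r, hr, u, hu, rfl⟩ := closedCone_Etop.subset hx
    rw [smul_smul, h.2.1 _ (mul_pos hl hr) u hu, h.2.1 r hr u hu, mul_assoc]

lemma pos (h : IsHomExt n θ ⊤ g G) (hg : ∀ ζ ∈ capCap n θ, 0 < g ζ) :
    ∀ x ∈ closedCone (Etop n) (Real.cos θ), 0 < G x := by
  intro x hx
  obtain ⟨l, hl, u, hu, rfl⟩ := closedCone_Etop.subset hx
  rw [h.2.1 l hl u hu, h.apply hu]
  exact mul_pos hl (hg _ (sub_mem_capCap hu))

lemma hessian_nonneg (h : IsHomExt n θ ⊤ g G) (hθ : θ ∈ Ioc 0 (π / 2)) (hG : TauNonneg n θ G) :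
    ∀ x ∈ closedCone (Etop n) (Real.cos θ), ∀ v, 0 ≤ hessian G x v v := by
  intro x hx v
  obtain ⟨l, hl, u, hu, rfl⟩ := closedCone_Etop.subset hx
  rw [h.isConical.hessian_smul (isAperture_Etop hθ) (mem_sphCap_iff.1 hu).2 hl]
  exact mul_nonneg (inv_nonneg.2 hl.le) (hG u hu v)

lemma exists_fderiv_Etop_eq (h : IsHomExt n θ ⊤ g G) (hθ : θ ∈ Ioc 0 (π / 2))
    (hx : x ∈ closedCone (Etop n) (Real.cos θ)) (hb : ⟪Etop n, x⟫ = Real.cos θ * ‖x‖) :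
    ∃ u ∈ sphCapBdry n θ, fderiv ℝ G x (Etop n) = fderiv ℝ G u (Etop n) := by
  obtain ⟨l, hl, u, hu, rfl⟩ := exists_smul_of_mem_boundary hx hb
  exact ⟨u, hu, by rw [h.isConical.fderiv_smul (isAperture_Etop hθ)
    (mem_sphCap_iff.1 (sphCapBdry_subset hu)).2 hl]⟩

end IsHomExt

lemma sigmaElem_eq_sigma (hk : k ≤ n + 1) (G : V n → ℝ) (u : V n) :
    sigmaElem n k G u = sigma (EuclideanSpace.basisFun (Fin (n + 1)) ℝ) k (hessian G u) := by
  have hmatrix : gramMatrix (EuclideanSpace.basisFun (Fin (n + 1)) ℝ) (hessian G u) =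
      hessM n G u := by
    ext i j
    simp [hessM]
  rw [sigma, minorSum_eq_charpoly_coeff (by simpa using hk), hmatrix, sigmaElem, Fintype.card_fin]

lemma sigma_hessian_mul_pow_eq_one (hθ : θ ∈ Ioc 0 (π / 2)) (hk : 1 ≤ k) (hkn : k < n)
    (hφpos : ∀ ζ ∈ capCap n θ, 0 < φ ζ)
    (hΨ : IsHomExt n θ ⊤ (fun ζ => φ ζ ^ (-(1 : ℝ) / k)) Ψ) (hs : IsHomExt n θ ⊤ s G)
    (heq : ∀ ζ ∈ capCap n θ, sigmaElem n k G (ζ + Real.cos θ • Etop n) = φ ζ)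
    (hx : x ∈ closedCone (Etop n) (Real.cos θ)) :
    sigma (EuclideanSpace.basisFun (Fin (n + 1)) ℝ) k (hessian G x) * Ψ x ^ k = 1 := by
  obtain ⟨l, hl, u, hu, rfl⟩ := closedCone_Etop.subset hx
  set ζ := u - Real.cos θ • Etop n with hζ
  have hφ : 0 < φ ζ := hφpos ζ (sub_mem_capCap hu)
  have hsigma : sigma (EuclideanSpace.basisFun (Fin (n + 1)) ℝ) k (hessian G u) = φ ζ := by
    rw [← sigmaElem_eq_sigma (by omega), ← heq ζ (sub_mem_capCap hu), hζ, sub_add_cancel]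
  have hpow : Ψ u ^ k = (φ ζ)⁻¹ := by
    rw [hΨ.apply hu, ← Real.rpow_mul_natCast hφ.le,
      div_mul_cancel₀ _ (Nat.cast_ne_zero.2 (by omega)), Real.rpow_neg_one]
  rw [hs.isConical.hessian_smul (isAperture_Etop hθ) (mem_sphCap_iff.1 hu).2 hl, sigma_smul,
    hsigma, hΨ.2.1 l hl u hu, mul_pow, hpow, inv_pow]
  field_simp

lemma isConeSolution_of_capillary (hθ : θ ∈ Ioc 0 (π / 2)) (hk : 1 ≤ k) (hkn : k < n)
    (hφpos : ∀ ζ ∈ capCap n θ, 0 < φ ζ)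
    (hΨ : IsHomExt n θ ⊤ (fun ζ => φ ζ ^ (-(1 : ℝ) / k)) Ψ) (hτΨ : TauNonneg n θ Ψ)
    (hRobin : ∀ u ∈ sphCapBdry n θ, 0 ≤ fderiv ℝ Ψ u (Etop n))
    (hs : IsHomExt n θ ⊤ s G) (hcap : IsCapillaryF n θ G) (hτ : TauNonneg n θ G)
    (heq : ∀ ζ ∈ capCap n θ, sigmaElem n k G (ζ + Real.cos θ • Etop n) = φ ζ) :
    IsConeSolution (EuclideanSpace.basisFun (Fin (n + 1)) ℝ) k (Etop n) (Real.cos θ) G Ψ where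
  aperture := isAperture_Etop hθ
  conical := hs.isConical
  conical_rhs := hΨ.isConical
  nonneg := hs.hessian_nonneg hθ hτ
  pos := hΨ.pos fun ζ hζ => Real.rpow_pos_of_pos (hφpos ζ hζ) _
  convex_rhs := hΨ.hessian_nonneg hθ hτΨ
  eqn _ hx := sigma_hessian_mul_pow_eq_one hθ hk hkn hφpos hΨ hs heq hx
  neumann x hx hb := by
    obtain ⟨u, hu, hxu⟩ := hs.exists_fderiv_Etop_eq hθ hx hb
    exact hxu.trans (hcap u hu)
  robin x hx hb := by
    obtain ⟨u, hu, hxu⟩ := hΨ.exists_fderiv_Etop_eq hθ hx hb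
    exact (hRobin u hu).trans_eq hxu.symm

lemma exists_unit_orthogonal {E : Type*} [NormedAddCommGroup E] [InnerProductSpace ℝ E]
    [FiniteDimensional ℝ E] (hE : 1 < Module.finrank ℝ E) (u : E) :
    ∃ v : E, ⟪v, u⟫ = 0 ∧ ‖v‖ = 1 := by
  have hbot : (ℝ ∙ u)ᗮ ≠ ⊥ := fun h => by
    rw [Submodule.orthogonal_eq_bot_iff] at h
    have hle := finrank_le_one u fun w =>
      Submodule.mem_span_singleton.1 (h ▸ Submodule.mem_top : w ∈ ℝ ∙ u)
    omega
  obtain ⟨w, hw, hw0⟩ := Submodule.exists_mem_ne_zero_of_ne_bot hbot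
  refine ⟨‖w‖⁻¹ • w, ?_, norm_smul_inv_norm hw0⟩
  rw [inner_smul_left, Submodule.mem_orthogonal_singleton_iff_inner_left.1 hw, mul_zero]

lemma HasFullRank.sInf_hessQ_pos (h : HasFullRank G u) (hn : n ≠ 0) :
    0 < sInf {r : ℝ | ∃ v : V n, ⟪v, u⟫ = 0 ∧ ‖v‖ = 1 ∧ hessQ n G u v v = r} := by
  have himage : {r : ℝ | ∃ v : V n, ⟪v, u⟫ = 0 ∧ ‖v‖ = 1 ∧ hessQ n G u v v = r} =
      (fun v => hessQ n G u v v) '' ({v | ⟪v, u⟫ = 0} ∩ Metric.sphere 0 1) := by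
    ext r
    simp [and_assoc]
  have hcont : Continuous fun v => hessQ n G u v v :=
    (hessian G u).continuous.clm_apply continuous_id
  have hcompact : IsCompact ({v : V n | ⟪v, u⟫ = 0} ∩ Metric.sphere 0 1) :=
    (isCompact_sphere 0 1).inter_left (isClosed_eq (by fun_prop) continuous_const)
  obtain ⟨v, hvu, hv⟩ := exists_unit_orthogonal (E := V n) (by simpa using Nat.pos_of_ne_zero hn) u
  obtain ⟨w, ⟨hwu, hw⟩, hmin⟩ :=
    (hcompact.image hcont).sInf_mem (Set.Nonempty.image _ ⟨v, hvu, by simpa using hv⟩)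
  rw [himage, ← hmin]
  exact h w (Metric.ne_of_mem_sphere hw one_ne_zero) (by rwa [real_inner_comm])

lemma sInf_hessQ_eq_zero (hnn : ∀ v, 0 ≤ hessQ n G u v v) (h : ¬HasFullRank G u) :
    sInf {r : ℝ | ∃ v : V n, ⟪v, u⟫ = 0 ∧ ‖v‖ = 1 ∧ hessQ n G u v v = r} = 0 := by
  obtain ⟨v, hv, huv, hnull⟩ := exists_null_of_not_hasFullRank hnn h
  refine IsLeast.csInf_eq ⟨⟨v, by rwa [real_inner_comm], hv, hnull⟩, ?_⟩
  rintro r ⟨w, -, -, rfl⟩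
  exact hnn w

end CapillaryInstance

/-- the full rank theorem. -/
theorem capillary_full_rank (n k : ℕ) (hn : 2 ≤ n) (θ : ℝ) (hθ : θ ∈ Ioc 0 (π / 2))
    (hk : 1 ≤ k) (hkn : k < n)
    (φ Φ Ψ s G : V n → ℝ)
    (hφpos : ∀ ζ ∈ capCap n θ, 0 < φ ζ)
    (hΦ : IsHomExt n θ ⊤ φ Φ)
    (hΨ : IsHomExt n θ ⊤ (fun ζ => φ ζ ^ (-(1 : ℝ) / k)) Ψ)
    (hτΨ : TauNonneg n θ Ψ)
    (hRobin : ∀ u ∈ sphCapBdry n θ, 0 ≤ fderiv ℝ Ψ u (Etop n))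
    (hs : IsHomExt n θ ⊤ s G) (hcap : IsCapillaryF n θ G) (hτ : TauNonneg n θ G)
    (heq : ∀ ζ ∈ capCap n θ, sigmaElem n k G (ζ + Real.cos θ • Etop n) = φ ζ) :
    ((∀ u ∈ sphCap n θ,
        0 < sInf {r : ℝ | ∃ v : V n, ⟪v, u⟫ = 0 ∧ ‖v‖ = 1 ∧ hessQ n G u v v = r}) ∨
     (∀ u ∈ sphCap n θ,
        sInf {r : ℝ | ∃ v : V n, ⟪v, u⟫ = 0 ∧ ‖v‖ = 1 ∧ hessQ n G u v v = r} = 0)) ∧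
    ((∀ ζ ∈ capCap n θ, 0 < s ζ) → TauPos n θ G) := by
  have hsol := isConeSolution_of_capillary hθ hk hkn hφpos hΨ hτΨ hRobin hs hcap hτ heq
  have hcone : ∀ u ∈ sphCap n θ, u ∈ closedCone (Etop n) (Real.cos θ) := fun u hu =>
    (mem_sphCap_iff.1 hu).2
  have hdichotomy := hsol.hasFullRank_dichotomy hk (by rw [Fintype.card_fin]; omega)
  refine ⟨hdichotomy.imp (fun hfull u hu => (hfull u (hcone u hu)).sInf_hessQ_pos (by omega))
    fun hdeg u hu => sInf_hessQ_eq_zero (hτ u hu) (hdeg u (hcone u hu)), fun hspos => ?_⟩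
  obtain ⟨x, hx, hxfull⟩ := hs.isConical.exists_hasFullRank hsol.aperture hsol.nonneg hsol.neumann
    (hs.pos hspos)
  have hfull := hdichotomy.resolve_right fun hdeg => hdeg x hx hxfull
  exact ⟨hτ, fun u hu v hv hvu => hfull u (hcone u hu) v hv (by rwa [real_inner_comm])⟩
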